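/- There exist a constant c > 0 and a threshold d₀ ∈ ℕ such that for every dimension d ≥ d₀, every M ≥ 1, and every M-bit memory-constrained deterministic first-order algorithm that, using T queries, is guaranteed to minimize 1-Lipschitz convex functions over the unit ball of ℝ^d with accuracy ε = 1/d⁴, one has T ≥ c · d^{5/3} / ((M + log d)^{1/3} · (log d)^{5/3}). -/

import Mathlib

open scoped RealInnerProductSpace

/-- An `M`-bit memory-constrained deterministic algorithm interacting with an oracle
with query space `S` and response space `R`: a query function and an update function. -/
structure MemAlg (M : ℕ) (S R : Type) where
  query : (Fin M → Bool) → S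
  update : (Fin M → Bool) → S → R → (Fin M → Bool)

namespace MemAlg

variable {M : ℕ} {S R : Type}

/-- The memory state after `t` iterations, interacting with the oracle `O`;
the initial memory state is `0^M`. -/
def mem (alg : MemAlg M S R) (O : S → R) : ℕ → (Fin M → Bool)
  | 0 => fun _ => false
  | t + 1 =>
      alg.update (alg.mem O t) (alg.query (alg.mem O t)) (O (alg.query (alg.mem O t)))

/-- The output of the algorithm after `T` queries: its last query
`q_T = ψ_query (Memory_{T-1})`. -/
def output (alg : MemAlg M S R) (O : S → R) (T : ℕ) : S :=
  alg.query (alg.mem O (T - 1))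

end MemAlg

/-- `O` is a first-order oracle for `f`: it returns the value of `f` together with a
subgradient of `f` at the query point. -/
def IsFirstOrderOracle {d : ℕ} (f : EuclideanSpace ℝ (Fin d) → ℝ)
    (O : EuclideanSpace ℝ (Fin d) → ℝ × EuclideanSpace ℝ (Fin d)) : Prop :=
  ∀ x, (O x).1 = f x ∧ ∀ y, f x + ⟪(O x).2, y - x⟫ ≤ f y

/-- The algorithm `alg`, using `T` queries, is guaranteed to minimize `1`-Lipschitz convex
functions over the unit ball of `ℝ^d` with accuracy `ε`: for every convex `1`-Lipschitz
`f` and every first-order oracle for `f`, the output lies in the unit ball and is an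
`ε`-approximate minimizer of `f` over the unit ball. -/
def MinimizesConvex {M : ℕ} (d : ℕ)
    (alg : MemAlg M (EuclideanSpace ℝ (Fin d)) (ℝ × EuclideanSpace ℝ (Fin d)))
    (T : ℕ) (ε : ℝ) : Prop :=
  ∀ f : EuclideanSpace ℝ (Fin d) → ℝ,
    ConvexOn ℝ Set.univ f → LipschitzWith 1 f →
      ∀ O : EuclideanSpace ℝ (Fin d) → ℝ × EuclideanSpace ℝ (Fin d),
        IsFirstOrderOracle f O →
          alg.output O T ∈ Metric.closedBall (0 : EuclideanSpace ℝ (Fin d)) 1 ∧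
          ∀ x ∈ Metric.closedBall (0 : EuclideanSpace ℝ (Fin d)) 1,
            f (alg.output O T) ≤ f x + ε


open scoped RealInnerProductSpace

section partA
variable {d : ℕ}
local notation "𝔼" => EuclideanSpace ℝ (Fin d)

/-- A nice oracle: returns subgradients, of norm at most one, of its own value function. -/
def NiceO (O : EuclideanSpace ℝ (Fin d) → ℝ × EuclideanSpace ℝ (Fin d)) : Prop :=
  ∀ x, ‖(O x).2‖ ≤ 1 ∧ ∀ y, (O x).1 + ⟪(O x).2, y - x⟫ ≤ (O y).1

open Classical in
/-- Pointwise maximum of two oracles, with priority to the first one. -/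
noncomputable def omax (O₁ O₂ : EuclideanSpace ℝ (Fin d) → ℝ × EuclideanSpace ℝ (Fin d)) :
    EuclideanSpace ℝ (Fin d) → ℝ × EuclideanSpace ℝ (Fin d) :=
  fun x => if (O₂ x).1 ≤ (O₁ x).1 then O₁ x else O₂ x

/-- Affine oracle. -/
noncomputable def aff (w : EuclideanSpace ℝ (Fin d)) (o : ℝ) :
    EuclideanSpace ℝ (Fin d) → ℝ × EuclideanSpace ℝ (Fin d) :=
  fun x => (⟪w, x⟫ - o, w)

/-- Oracle for `‖x‖ - 1`. -/
noncomputable def hball : EuclideanSpace ℝ (Fin d) → ℝ × EuclideanSpace ℝ (Fin d) :=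
  fun x => (‖x‖ - 1, ‖x‖⁻¹ • x)

/-- Oracle for `|⟪a, x⟫| - η`. -/
noncomputable def rowO (η : ℝ) (a : EuclideanSpace ℝ (Fin d)) :
    EuclideanSpace ℝ (Fin d) → ℝ × EuclideanSpace ℝ (Fin d) :=
  omax (aff a η) (aff (-a) η)

lemma omax_fst (O₁ O₂ : 𝔼 → ℝ × 𝔼) (x : 𝔼) :
    (omax O₁ O₂ x).1 = max (O₁ x).1 (O₂ x).1 := by
  unfold omax
  split_ifs with h
  · simp [h]
  · simp [le_of_lt (not_le.1 h)]

lemma omax_eq_left {O₁ O₂ : 𝔼 → ℝ × 𝔼} {x : 𝔼} (h : (O₂ x).1 ≤ (O₁ x).1) :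
    omax O₁ O₂ x = O₁ x := by
  simp [omax, h]

lemma omax_eq_or (O₁ O₂ : 𝔼 → ℝ × 𝔼) (x : 𝔼) :
    omax O₁ O₂ x = O₁ x ∨ omax O₁ O₂ x = O₂ x := by
  unfold omax
  split_ifs with h
  · exact Or.inl rfl
  · exact Or.inr rfl

lemma omax_assoc (O₁ O₂ O₃ : 𝔼 → ℝ × 𝔼) :
    omax (omax O₁ O₂) O₃ = omax O₁ (omax O₂ O₃) := by
  funext x
  by_cases h1 : (O₂ x).1 ≤ (O₁ x).1 <;> by_cases h2 : (O₃ x).1 ≤ (O₂ x).1 <;>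
    by_cases h3 : (O₃ x).1 ≤ (O₁ x).1 <;> simp [omax, h1, h2, h3] <;> exfalso <;> linarith

lemma NiceO.omax {O₁ O₂ : 𝔼 → ℝ × 𝔼} (h₁ : NiceO O₁) (h₂ : NiceO O₂) :
    NiceO (omax O₁ O₂) := by
  intro x
  rcases omax_eq_or O₁ O₂ x with h | h
  · rw [h]
    refine ⟨(h₁ x).1, fun y => ?_⟩
    rw [omax_fst]
    exact le_max_of_le_left ((h₁ x).2 y)
  · rw [h]
    refine ⟨(h₂ x).1, fun y => ?_⟩
    rw [omax_fst]
    exact le_max_of_le_right ((h₂ x).2 y)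

lemma nice_aff {w : 𝔼} (hw : ‖w‖ ≤ 1) (o : ℝ) : NiceO (aff w o) := by
  intro x
  refine ⟨hw, fun y => ?_⟩
  simp only [aff, inner_sub_right]
  linarith

lemma nice_hball : NiceO (hball : 𝔼 → ℝ × 𝔼) := by
  intro x
  simp only [hball]
  constructor
  · rw [norm_smul, norm_inv, norm_norm]
    exact inv_mul_le_one
  · intro y
    by_cases hx : x = 0
    · simp [hx]
    have h0 : 0 < ‖x‖ := norm_pos_iff.2 hx
    rw [inner_smul_left, inner_sub_right, real_inner_self_eq_norm_sq]
    have := real_inner_le_norm x y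
    simp only [conj_trivial]
    rw [mul_sub]
    have h2 : ‖x‖⁻¹ * ⟪x, y⟫ ≤ ‖y‖ := by
      rw [inv_mul_le_iff₀ h0]; exact this
    have h3 : ‖x‖⁻¹ * ‖x‖ ^ 2 = ‖x‖ := by field_simp
    linarith

lemma rowO_fst (η : ℝ) (a x : 𝔼) : (rowO η a x).1 = |⟪a, x⟫| - η := by
  rw [rowO, omax_fst]
  simp only [aff, inner_neg_left]
  rw [max_sub_sub_right]
  rfl

lemma nice_rowO (η : ℝ) {a : 𝔼} (ha : ‖a‖ ≤ 1) : NiceO (rowO η a) :=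
  (nice_aff ha _).omax (nice_aff (by simpa using ha) _)

lemma NiceO.isOracle {O : 𝔼 → ℝ × 𝔼} (h : NiceO O) :
    IsFirstOrderOracle (fun x => (O x).1) O := fun x => ⟨rfl, (h x).2⟩

lemma NiceO.convex {O : 𝔼 → ℝ × 𝔼} (h : NiceO O) :
    ConvexOn ℝ Set.univ (fun x => (O x).1) := by
  refine ⟨convex_univ, fun x _ y _ a b ha hb hab => ?_⟩
  set z := a • x + b • y with hz
  have h1 := (h z).2 x
  have h2 := (h z).2 y
  have h3 : a * ⟪(O z).2, x - z⟫ + b * ⟪(O z).2, y - z⟫ = 0 := by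
    rw [← real_inner_smul_right, ← real_inner_smul_right, ← inner_add_right]
    have : a • (x - z) + b • (y - z) = 0 := by
      rw [smul_sub, smul_sub]
      have : a • x - a • z + (b • y - b • z) = (a • x + b • y) - (a + b) • z := by
        rw [add_smul]; abel
      rw [this, hab, one_smul, hz, sub_self]
    rw [this, inner_zero_right]
  simp only [smul_eq_mul]
  have h4 := mul_le_mul_of_nonneg_left h1 ha
  have h5 := mul_le_mul_of_nonneg_left h2 hb
  have h6 : (O z).1 = a * (O z).1 + b * (O z).1 := by rw [← add_mul, hab, one_mul]
  linarith

lemma NiceO.lipschitz {O : 𝔼 → ℝ × 𝔼} (h : NiceO O) :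
    LipschitzWith 1 (fun x => (O x).1) := by
  apply LipschitzWith.of_le_add
  intro x y
  have h1 := (h x).2 y
  have h2 : |⟪(O x).2, y - x⟫| ≤ ‖(O x).2‖ * ‖y - x‖ := abs_real_inner_le_norm _ _
  have h3 : ‖(O x).2‖ * ‖y - x‖ ≤ 1 * ‖y - x‖ :=
    mul_le_mul_of_nonneg_right (h x).1 (norm_nonneg _)
  have h4 := neg_abs_le (⟪(O x).2, y - x⟫)
  rw [dist_comm, dist_eq_norm]
  linarith

/-- A guaranteed algorithm is correct on nice oracles. -/
lemma MinimizesConvex.nice {M T : ℕ} {ε : ℝ} {alg : MemAlg M 𝔼 (ℝ × 𝔼)}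
    (h : MinimizesConvex d alg T ε) {O : 𝔼 → ℝ × 𝔼} (hO : NiceO O) {x : 𝔼} (hx : ‖x‖ ≤ 1) :
    (O (alg.output O T)).1 ≤ (O x).1 + ε :=
  (h _ hO.convex hO.lipschitz O hO.isOracle).2 x (by simpa using hx)

end partA

open scoped RealInnerProductSpace

section partA2
variable {d : ℕ}
local notation "𝔼" => EuclideanSpace ℝ (Fin d)

/-- Iterated maximum of oracles. -/
noncomputable def pcs (B : EuclideanSpace ℝ (Fin d) → ℝ × EuclideanSpace ℝ (Fin d))
    (W : ℕ → EuclideanSpace ℝ (Fin d) → ℝ × EuclideanSpace ℝ (Fin d)) :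
    ℕ → EuclideanSpace ℝ (Fin d) → ℝ × EuclideanSpace ℝ (Fin d)
  | 0 => B
  | t + 1 => omax (pcs B W t) (W t)

lemma nice_pcs {B : 𝔼 → ℝ × 𝔼} {W : ℕ → 𝔼 → ℝ × 𝔼} (hB : NiceO B) {t : ℕ}
    (hW : ∀ i < t, NiceO (W i)) : NiceO (pcs B W t) := by
  induction t with
  | zero => exact hB
  | succ t ih => exact (ih (fun i hi => hW i (by omega))).omax (hW t (by omega))

lemma pcs_congr {B : 𝔼 → ℝ × 𝔼} {W W' : ℕ → 𝔼 → ℝ × 𝔼} {t : ℕ}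
    (h : ∀ i < t, W i = W' i) : pcs B W t = pcs B W' t := by
  induction t with
  | zero => rfl
  | succ t ih => rw [pcs, pcs, ih (fun i hi => h i (by omega)), h t (by omega)]

lemma pcs_mono (B : 𝔼 → ℝ × 𝔼) (W : ℕ → 𝔼 → ℝ × 𝔼) {s t : ℕ} (hst : s ≤ t) (x : 𝔼) :
    (pcs B W s x).1 ≤ (pcs B W t x).1 := by
  induction t, hst using Nat.le_induction with
  | base => exact le_rfl
  | succ t _ ih => rw [pcs, omax_fst]; exact le_max_of_le_left ih

lemma base_le_pcs (B : 𝔼 → ℝ × 𝔼) (W : ℕ → 𝔼 → ℝ × 𝔼) (t : ℕ) (x : 𝔼) :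
    (B x).1 ≤ (pcs B W t x).1 := pcs_mono B W (Nat.zero_le t) x

lemma le_pcs (B : 𝔼 → ℝ × 𝔼) (W : ℕ → 𝔼 → ℝ × 𝔼) {i t : ℕ} (hi : i < t) (x : 𝔼) :
    (W i x).1 ≤ (pcs B W t x).1 := by
  refine le_trans ?_ (pcs_mono B W (Nat.succ_le_of_lt hi) x)
  rw [pcs, omax_fst]; exact le_max_right _ _

lemma pcs_le {B : 𝔼 → ℝ × 𝔼} {W : ℕ → 𝔼 → ℝ × 𝔼} {t : ℕ} {x : 𝔼} {b : ℝ}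
    (hB : (B x).1 ≤ b) (hW : ∀ i < t, (W i x).1 ≤ b) : (pcs B W t x).1 ≤ b := by
  induction t with
  | zero => exact hB
  | succ t ih =>
    rw [pcs, omax_fst]
    exact max_le (ih fun i hi => hW i (by omega)) (hW t (by omega))

/-- Later pieces that do not exceed the current value do not change the response. -/
lemma pcs_stable {B : 𝔼 → ℝ × 𝔼} {W : ℕ → 𝔼 → ℝ × 𝔼} {s t : ℕ} (hst : s ≤ t) {x : 𝔼}
    (h : ∀ i, s ≤ i → i < t → (W i x).1 ≤ (pcs B W s x).1) :
    pcs B W t x = pcs B W s x := by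
  induction t, hst using Nat.le_induction with
  | base => rfl
  | succ t hst ih =>
    have h1 := ih (fun i h1 h2 => h i h1 (by omega))
    rw [pcs, omax_eq_left, h1]
    rw [h1]
    exact h t hst (by omega)

lemma mem_congr {M : ℕ} {alg : MemAlg M 𝔼 (ℝ × 𝔼)} {O O' : 𝔼 → ℝ × 𝔼} {t : ℕ}
    (h : ∀ s < t, O' (alg.query (alg.mem O s)) = O (alg.query (alg.mem O s))) :
    ∀ s ≤ t, alg.mem O' s = alg.mem O s := by
  intro s
  induction s with
  | zero => intro _; rfl
  | succ s ih =>
    intro hs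
    have h1 := ih (by omega)
    rw [MemAlg.mem, MemAlg.mem, h1, h s (by omega)]

lemma exists_unit_orth (S : Finset 𝔼) (hS : S.card < d) :
    ∃ w : 𝔼, ‖w‖ = 1 ∧ ∀ x ∈ S, ⟪w, x⟫ = 0 := by
  set K := Submodule.span ℝ (S : Set 𝔼) with hK
  have h1 : Module.finrank ℝ K ≤ S.card := finrank_span_finset_le_card S
  have h2 : Module.finrank ℝ K + Module.finrank ℝ Kᗮ = d := by
    rw [Submodule.finrank_add_finrank_orthogonal]; simp
  have h3 : Kᗮ ≠ ⊥ := by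
    intro h
    rw [h, finrank_bot] at h2
    omega
  obtain ⟨w, hw, hw0⟩ := Submodule.exists_mem_ne_zero_of_ne_bot h3
  refine ⟨‖w‖⁻¹ • w, ?_, fun x hx => ?_⟩
  · rw [norm_smul, norm_inv, norm_norm, inv_mul_cancel₀ (norm_ne_zero_iff.2 hw0)]
  · rw [real_inner_smul_left, real_inner_comm,
      (Submodule.mem_orthogonal K w).1 hw x (Submodule.subset_span hx), mul_zero]

lemma resisting_aux {M : ℕ} (alg : MemAlg M 𝔼 (ℝ × 𝔼)) :
    ∀ t : ℕ, 2 * t ≤ d → ∃ w : ℕ → 𝔼, (∀ i < t, ‖w i‖ = 1) ∧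
      (∀ i < t, ∀ j < t, i ≠ j → ⟪w i, w j⟫ = 0) ∧
      (∀ s i, s ≤ i → i < t →
        ⟪w i, alg.query (alg.mem (pcs hball (fun i => aff (w i) 0) t) s)⟫ = 0) := by
  classical
  intro t
  induction t with
  | zero => intro _; exact ⟨fun _ => 0, by simp, by simp, by intro s i _ h; omega⟩
  | succ t ih =>
    intro ht
    obtain ⟨w, hw1, hw2, hw3⟩ := ih (by omega)
    set O := pcs hball (fun i => aff (w i) 0) t with hO
    obtain ⟨u, hu1, hu2⟩ := exists_unit_orth
      ((Finset.range (t + 1)).image (fun s => alg.query (alg.mem O s)) ∪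
        (Finset.range t).image w) (by
        refine lt_of_le_of_lt (Finset.card_union_le _ _) ?_
        have h1 := Finset.card_image_le (s := Finset.range (t + 1))
          (f := fun s => alg.query (alg.mem O s))
        have h2 := Finset.card_image_le (s := Finset.range t) (f := w)
        simp only [Finset.card_range] at h1 h2
        omega)
    have hux : ∀ s ≤ t, ⟪u, alg.query (alg.mem O s)⟫ = 0 := fun s hs => hu2 _ (by
      apply Finset.mem_union_left
      exact Finset.mem_image_of_mem _ (Finset.mem_range.2 (by omega)))
    have huw : ∀ i < t, ⟪u, w i⟫ = 0 := fun s hs => hu2 _ (by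
      apply Finset.mem_union_right
      exact Finset.mem_image_of_mem _ (Finset.mem_range.2 (by omega)))
    set w' : ℕ → 𝔼 := Function.update w t u with hw'
    have hlt : ∀ i < t, w' i = w i := fun i hi => by
      rw [hw', Function.update_of_ne (by omega)]
    have heq : w' t = u := by simp [hw']
    set O' := pcs hball (fun i => aff (w' i) 0) (t + 1) with hO'
    have hOO : O' = omax O (aff u 0) := by
      rw [hO', pcs, heq, hO]
      congr 1
      exact pcs_congr (fun i hi => by rw [hlt i hi])
    have hag : ∀ s < t, O' (alg.query (alg.mem O s)) = O (alg.query (alg.mem O s)) := by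
      intro s hs
      rw [hOO, omax_eq_left]
      have h1 := le_pcs hball (fun i => aff (w i) 0) hs (alg.query (alg.mem O s))
      have h2 := hw3 s s le_rfl hs
      simp only [aff] at h1 ⊢
      rw [h2] at h1
      rw [hux s hs.le]
      exact h1
    have hmem := mem_congr hag
    refine ⟨w', ?_, ?_, ?_⟩
    · intro i hi
      rcases Nat.lt_succ_iff_lt_or_eq.1 hi with h | h
      · rw [hlt i h, hw1 i h]
      · rw [h, heq, hu1]
    · intro i hi j hj hij
      rcases Nat.lt_succ_iff_lt_or_eq.1 hi with h | h <;>
        rcases Nat.lt_succ_iff_lt_or_eq.1 hj with h' | h'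
      · rw [hlt i h, hlt j h', hw2 i h j h' hij]
      · rw [hlt i h, h', heq, real_inner_comm, huw i h]
      · rw [hlt j h', h, heq, huw j h']
      · omega
    · intro s i hsi hi
      rcases Nat.lt_succ_iff_lt_or_eq.1 hi with h | h
      · rw [hlt i h, hmem s (by omega), hw3 s i hsi h]
      · rw [h, heq, hmem s (by omega), hux s (by omega)]

lemma resisting {M T : ℕ} {alg : MemAlg M 𝔼 (ℝ × 𝔼)} (hd : 4 ≤ d)
    (h : MinimizesConvex d alg T (1 / (d : ℝ) ^ 4)) : d < 2 * T := by
  by_contra hcon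
  obtain ⟨S, hS1, hS2, hS3⟩ : ∃ S, T - 1 = S ∧ 2 * (S + 1) ≤ d ∧ S < d :=
    ⟨T - 1, rfl, by omega, by omega⟩
  obtain ⟨w, hw1, hw2, hw3⟩ := resisting_aux alg (S + 1) hS2
  set O := pcs hball (fun i => aff (w i) 0) (S + 1) with hO
  have hnice : NiceO O := nice_pcs nice_hball (fun i hi => nice_aff (hw1 i hi).le _)
  have h0 : 0 ≤ (O (alg.output O T)).1 := by
    have h1 := le_pcs hball (fun i => aff (w i) 0) (Nat.lt_succ_self S) (alg.output O T)
    rw [MemAlg.output, hS1] at h1 ⊢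
    simp only [aff] at h1
    rw [hw3 S S le_rfl (by omega), sub_zero] at h1
    exact h1
  set r : ℝ := Real.sqrt (S + 1) with hr
  have hr2 : r ^ 2 = S + 1 := Real.sq_sqrt (by positivity)
  have hr0 : 0 < r := Real.sqrt_pos.2 (by positivity)
  set z : 𝔼 := ∑ i ∈ Finset.range (S + 1), w i with hz
  have hwz : ∀ i < S + 1, ⟪w i, z⟫ = 1 := by
    intro i hi
    rw [hz, inner_sum, Finset.sum_eq_single i]
    · rw [real_inner_self_eq_norm_sq, hw1 i hi]; norm_num
    · intro j hj hji
      exact hw2 i hi j (Finset.mem_range.1 hj) hji.symm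
    · intro h; exact absurd (Finset.mem_range.2 hi) h
  have hzn : ‖z‖ = r := by
    have h1 : ‖z‖ ^ 2 = r ^ 2 := by
      rw [← real_inner_self_eq_norm_sq, hr2]
      nth_rewrite 1 [hz]
      rw [sum_inner, Finset.sum_congr rfl (fun i hi => hwz i (Finset.mem_range.1 hi))]
      simp
    exact (pow_left_inj₀ (norm_nonneg _) hr0.le two_ne_zero).1 h1
  set x : 𝔼 := (-(1 / (2 * r))) • z with hx
  have hxn : ‖x‖ = 1 / 2 := by
    rw [hx, norm_smul, hzn, norm_neg, Real.norm_of_nonneg (by positivity)]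
    field_simp
  have h1 := h.nice hnice (x := x) (by rw [hxn]; norm_num)
  have hrd : r ≤ d := by
    have : r ^ 2 ≤ (d : ℝ) ^ 2 := by
      rw [hr2]
      have : (S : ℝ) + 1 ≤ d := by exact_mod_cast hS3
      have : (4 : ℝ) ≤ d := by exact_mod_cast hd
      nlinarith
    exact (pow_le_pow_iff_left₀ hr0.le (by positivity) two_ne_zero).1 this
  have h2 : (O x).1 ≤ -(1 / (2 * r)) := by
    apply pcs_le
    · simp only [hball, hxn]
      have : 1 ≤ r := by
        rw [hr]; apply Real.one_le_sqrt.2; simp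
      have : 1 / (2 * r) ≤ 1 / 2 := by
        apply one_div_le_one_div_of_le <;> linarith
      linarith
    · intro i hi
      simp only [aff, hx, real_inner_smul_right, hwz i hi]
      linarith
  have hd4 : (4 : ℝ) ≤ d := by exact_mod_cast hd
  have h3 : 1 / (d : ℝ) ^ 4 < 1 / (2 * r) := by
    apply one_div_lt_one_div_of_lt (by positivity)
    have : (d : ℝ) ^ 4 = d * d ^ 3 := by ring
    have h5 : (2 : ℝ) < d ^ 3 := by nlinarith [sq_nonneg (d : ℝ)]
    nlinarith
  linarith

end partA2

open scoped RealInnerProductSpace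

section partB
variable {d : ℕ}
local notation "𝔼" => EuclideanSpace ℝ (Fin d)

/-- Sign vector. -/
noncomputable def sg (g : Fin d → Bool) : EuclideanSpace ℝ (Fin d) :=
  WithLp.toLp 2 (fun i => if g i then (1 : ℝ) else -1)

lemma sg_apply (g : Fin d → Bool) (i : Fin d) : sg g i = if g i then (1 : ℝ) else -1 := rfl

lemma sg_sq (g : Fin d → Bool) (i : Fin d) : sg g i ^ 2 = 1 := by
  rw [sg_apply]; split_ifs <;> norm_num

lemma norm_sg_sq (g : Fin d → Bool) : ‖sg g‖ ^ 2 = d := by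
  rw [EuclideanSpace.norm_sq_eq]
  simp only [Real.norm_eq_abs, sq_abs, sg_sq]
  simp

lemma norm_sg (g : Fin d → Bool) : ‖sg g‖ = Real.sqrt d := by
  rw [← norm_sg_sq g, Real.sqrt_sq (norm_nonneg _)]

/-- Oracle for `‖x - c‖`. -/
noncomputable def dball (c : EuclideanSpace ℝ (Fin d)) :
    EuclideanSpace ℝ (Fin d) → ℝ × EuclideanSpace ℝ (Fin d) :=
  fun x => (‖x - c‖, ‖x - c‖⁻¹ • (x - c))

lemma nice_dball (c : 𝔼) : NiceO (dball c) := by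
  intro x
  refine ⟨(nice_hball (x - c)).1, fun y => ?_⟩
  have := (nice_hball (x - c)).2 (y - c)
  simp only [hball, dball] at this ⊢
  rw [show y - c - (x - c) = y - x by abel] at this
  linarith

lemma mem_ge_dim {M T : ℕ} {alg : MemAlg M 𝔼 (ℝ × 𝔼)} (hd : 2 ≤ d)
    (h : MinimizesConvex d alg T (1 / (d : ℝ) ^ 4)) : d ≤ M := by
  classical
  by_contra hM
  push Not at hM
  have hd2 : (2 : ℝ) ≤ d := by exact_mod_cast hd
  set r := Real.sqrt d with hr
  have hr0 : 0 < r := Real.sqrt_pos.2 (by linarith)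
  have hr2 : r ^ 2 = d := Real.sq_sqrt (by linarith)
  let c : (Fin d → Bool) → 𝔼 := fun g => (r⁻¹) • sg g
  have hc : ∀ g, ‖c g‖ = 1 := by
    intro g
    simp only [c, norm_smul, norm_sg, norm_inv, Real.norm_of_nonneg hr0.le]
    exact inv_mul_cancel₀ hr0.ne'
  obtain ⟨g, g', hgg, heq⟩ := Fintype.exists_ne_map_eq_of_card_lt
    (fun g : Fin d → Bool => alg.mem (dball (c g)) (T - 1)) (by
      simp only [Fintype.card_fun, Fintype.card_bool, Fintype.card_fin]
      exact Nat.pow_lt_pow_right (by norm_num) hM)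
  have h1 := h.nice (nice_dball (c g)) (hc g).le
  have h2 := h.nice (nice_dball (c g')) (hc g').le
  simp only [MemAlg.output] at h1 h2 heq
  rw [← heq] at h2
  set y := alg.query (alg.mem (dball (c g)) (T - 1))
  simp only [dball, sub_self, norm_zero, zero_add] at h1 h2
  obtain ⟨i, hi⟩ := Function.ne_iff.1 hgg
  have h3 : ‖c g - c g'‖ ≤ 2 * (1 / (d : ℝ) ^ 4) := by
    have : c g - c g' = (y - c g') - (y - c g) := by abel
    rw [this]
    exact (norm_sub_le _ _).trans (by linarith)
  have h4 : |(c g - c g') i| ≤ ‖c g - c g'‖ := by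
    have := PiLp.norm_apply_le (c g - c g') i
    simpa using this
  have h5 : |(c g - c g') i| = 2 * r⁻¹ := by
    simp only [c, PiLp.sub_apply, PiLp.smul_apply, sg_apply, smul_eq_mul]
    rw [← mul_sub, abs_mul, abs_of_pos (inv_pos.2 hr0)]
    cases hg : g i <;> cases hg' : g' i <;> simp_all <;> norm_num <;> ring
  have h6 : (d : ℝ)⁻¹ ≤ r⁻¹ := by
    apply inv_anti₀ hr0
    nlinarith
  have h7 : 1 / (d : ℝ) ^ 4 < (d : ℝ)⁻¹ := by
    rw [← one_div]
    apply one_div_lt_one_div_of_lt (by linarith)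
    have : (d : ℝ) ^ 4 = d * d ^ 3 := by ring
    have h5 : (2 : ℝ) < d ^ 3 := by nlinarith [sq_nonneg (d : ℝ)]
    nlinarith
  linarith

/-- Hoeffding's inequality for sign vectors. -/
lemma hoeffding (x : 𝔼) (hx : x ≠ 0) {t : ℝ} (ht : 0 ≤ t) :
    ((Finset.univ.filter (fun g : Fin d → Bool => t ≤ ⟪sg g, x⟫)).card : ℝ) ≤
      2 ^ d * Real.exp (-(t ^ 2 / (2 * ‖x‖ ^ 2))) := by
  classical
  have hx0 : 0 < ‖x‖ := norm_pos_iff.2 hx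
  have key : ∀ l : ℝ, ∑ g : Fin d → Bool, Real.exp (l * ⟪sg g, x⟫) ≤
      2 ^ d * Real.exp (l ^ 2 * ‖x‖ ^ 2 / 2) := by
    intro l
    have h1 : ∀ g : Fin d → Bool, Real.exp (l * ⟪sg g, x⟫) =
        ∏ i, Real.exp (l * x i * (if g i then 1 else -1)) := by
      intro g
      rw [← Real.exp_sum]
      congr 1
      rw [PiLp.inner_apply, Finset.mul_sum]
      refine Finset.sum_congr rfl fun i _ => ?_
      simp only [sg_apply, RCLike.inner_apply, conj_trivial]
      ring
    rw [Finset.sum_congr rfl (fun g _ => h1 g)]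
    have h2 := (Finset.prod_univ_sum (fun _ : Fin d => (Finset.univ : Finset Bool))
      (fun i b => Real.exp (l * x i * (if b then 1 else -1)))).symm
    rw [Fintype.piFinset_univ] at h2
    rw [h2]
    have h3 : ∀ i : Fin d, ∑ b : Bool, Real.exp (l * x i * (if b then 1 else -1)) ≤
        2 * Real.exp (l ^ 2 * x i ^ 2 / 2) := by
      intro i
      have := Real.cosh_le_exp_half_sq (l * x i)
      rw [Real.cosh_eq] at this
      simp only [Fintype.sum_bool, if_true, mul_one]
      simp only [Bool.false_eq_true, if_false, mul_neg, mul_one]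
      rw [mul_pow] at this
      linarith
    refine (Finset.prod_le_prod (fun i _ => by positivity) (fun i _ => h3 i)).trans ?_
    rw [Finset.prod_mul_distrib, ← Real.exp_sum]
    simp only [Finset.prod_const, Finset.card_univ, Fintype.card_fin]
    rw [EuclideanSpace.norm_sq_eq, Finset.mul_sum, Finset.sum_div]
    simp
  set l := t / ‖x‖ ^ 2 with hl
  have hl0 : 0 ≤ l := by positivity
  have h1 := key l
  have h2 : ((Finset.univ.filter (fun g : Fin d → Bool => t ≤ ⟪sg g, x⟫)).card : ℝ) *
      Real.exp (l * t) ≤ ∑ g : Fin d → Bool, Real.exp (l * ⟪sg g, x⟫) := by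
    rw [← nsmul_eq_mul]
    refine (Finset.card_nsmul_le_sum _ (fun g => Real.exp (l * ⟪sg g, x⟫)) _ ?_).trans
      (Finset.sum_le_sum_of_subset_of_nonneg (Finset.filter_subset _ _)
        (fun _ _ _ => (Real.exp_pos _).le))
    intro g hg
    exact Real.exp_le_exp.2 (mul_le_mul_of_nonneg_left (Finset.mem_filter.1 hg).2 hl0)
  have h3 := h2.trans h1
  rw [← le_div_iff₀ (Real.exp_pos _), mul_div_assoc, ← Real.exp_sub] at h3
  refine h3.trans (le_of_eq ?_)
  congr 2
  rw [hl]
  field_simp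
  ring

/-- Few sign vectors lie in a ball of radius `√(d/2)`. -/
lemma sign_ball (hd : 1 ≤ d) (u : 𝔼) :
    ((Finset.univ.filter (fun g : Fin d → Bool => ‖sg g - u‖ ^ 2 ≤ d / 2)).card : ℝ) ≤
      2 ^ d * Real.exp (-(d / 4)) := by
  classical
  have hd' : (1 : ℝ) ≤ d := by exact_mod_cast hd
  have hexp : ∀ g : Fin d → Bool, ‖sg g - u‖ ^ 2 = d - 2 * ⟪sg g, u⟫ + ‖u‖ ^ 2 := by
    intro g; rw [norm_sub_sq_real, norm_sg_sq]
  by_cases hu : u = 0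
  · have : Finset.univ.filter (fun g : Fin d → Bool => ‖sg g - u‖ ^ 2 ≤ d / 2) = ∅ := by
      rw [Finset.filter_eq_empty_iff]
      intro g _
      rw [hexp, hu]
      simp only [inner_zero_right, norm_zero]
      intro h; linarith
    rw [this]; simp; positivity
  · have hu0 : 0 < ‖u‖ := norm_pos_iff.2 hu
    set t := ((d : ℝ) / 2 + ‖u‖ ^ 2) / 2 with ht
    refine le_trans ?_ ((hoeffding u hu (t := t) (by positivity)).trans ?_)
    · refine Nat.cast_le.2 (Finset.card_le_card ?_)
      intro g
      simp only [Finset.mem_filter, Finset.mem_univ, true_and, hexp]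
      intro h; linarith
    · refine mul_le_mul_of_nonneg_left (Real.exp_le_exp.2 ?_) (by positivity)
      rw [neg_le_neg_iff, le_div_iff₀ (by positivity), ht]
      nlinarith [sq_nonneg ((d : ℝ) / 2 - ‖u‖ ^ 2)]

end partB

open scoped RealInnerProductSpace

section partB2
variable {d : ℕ}
local notation "𝔼" => EuclideanSpace ℝ (Fin d)

/-- Greedy choice of a separated net. -/
lemma exists_net {α : Type*} [DecidableEq α] (r : α → α → Prop) (hr : ∀ a b, r a b → r b a)
    (hrr : ∀ a, r a a) (G : Finset α) :
    ∃ S ⊆ G, (∀ a ∈ S, ∀ b ∈ S, a ≠ b → ¬ r a b) ∧ ∀ a ∈ G, ∃ b ∈ S, r a b := by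
  classical
  induction G using Finset.induction_on with
  | empty => exact ⟨∅, by simp, by simp, by simp⟩
  | insert a G ha ih =>
    obtain ⟨S, h1, h2, h3⟩ := ih
    by_cases h : ∃ b ∈ S, r a b
    · refine ⟨S, h1.trans (Finset.subset_insert _ _), h2, ?_⟩
      intro b hb
      rcases Finset.mem_insert.1 hb with rfl | hb
      · exact h
      · exact h3 b hb
    · push Not at h
      refine ⟨insert a S, Finset.insert_subset_insert _ h1, ?_, ?_⟩
      · intro b hb c hc hbc
        rcases Finset.mem_insert.1 hb with hb' | hb' <;>
          rcases Finset.mem_insert.1 hc with hc' | hc'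
        · exact absurd (hb'.trans hc'.symm) hbc
        · rw [hb']
          exact h c hc'
        · rw [hc']
          exact fun hh => h b hb' (hr _ _ hh)
        · exact h2 b hb' c hc' hbc
      · intro b hb
        rcases Finset.mem_insert.1 hb with rfl | hb
        · exact ⟨b, Finset.mem_insert_self _ _, hrr b⟩
        · obtain ⟨c, hc, hh⟩ := h3 b hb
          exact ⟨c, Finset.mem_insert_of_mem hc, hh⟩

lemma close_subspace (hd : 1 ≤ d) (A : Submodule ℝ 𝔼) {n : ℕ} (hA : Module.finrank ℝ A ≤ n)
    (u : 𝔼) :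
    ((Finset.univ.filter (fun g : Fin d → Bool =>
        ‖Aᗮ.starProjection (sg g - u)‖ < Real.sqrt d / 4)).card : ℝ) ≤
      5 ^ n * (2 ^ d * Real.exp (-(d / 4))) := by
  classical
  have hd' : (1 : ℝ) ≤ d := by exact_mod_cast hd
  set r := Real.sqrt d with hr
  have hr0 : 0 < r := Real.sqrt_pos.2 (by linarith)
  have hr2 : r ^ 2 = d := Real.sq_sqrt (by linarith)
  set G := Finset.univ.filter (fun g : Fin d → Bool =>
        ‖Aᗮ.starProjection (sg g - u)‖ < r / 4) with hG
  obtain ⟨S, hS1, hS2, hS3⟩ := exists_net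
    (fun g h : Fin d → Bool => ‖sg g - sg h‖ ^ 2 ≤ d / 2)
    (fun a b h => by rwa [norm_sub_rev]) (fun a => by simp; positivity) G
  have hcov : G ⊆ S.biUnion (fun h => Finset.univ.filter
      (fun g : Fin d → Bool => ‖sg g - sg h‖ ^ 2 ≤ d / 2)) := by
    intro g hg
    obtain ⟨h, hh, hgh⟩ := hS3 g hg
    exact Finset.mem_biUnion.2 ⟨h, hh, by simpa using hgh⟩
  let φ : (Fin d → Bool) → A := fun g => (2 / r) • A.orthogonalProjectionOnto (sg g)
  have hsep : ∀ g ∈ S, ∀ h ∈ S, g ≠ h → 1 ≤ ‖φ g - φ h‖ := by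
    intro g hg h hh hgh
    have h1 := hS2 g hg h hh hgh
    push Not at h1
    have h2 := A.norm_sq_eq_add_norm_sq_starProjection (sg g - sg h)
    have h3 : ‖Aᗮ.starProjection (sg g - sg h)‖ ≤ r / 2 := by
      have e : sg g - sg h = (sg g - u) - (sg h - u) := by abel
      rw [e, map_sub]
      have a1 := (Finset.mem_filter.1 (hS1 hg)).2
      have a2 := (Finset.mem_filter.1 (hS1 hh)).2
      exact (norm_sub_le _ _).trans (by linarith)
    have h4 : ‖Aᗮ.starProjection (sg g - sg h)‖ ^ 2 ≤ (r / 2) ^ 2 :=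
      pow_le_pow_left₀ (norm_nonneg _) h3 2
    have h5 : (r / 2) ^ 2 ≤ ‖A.starProjection (sg g - sg h)‖ ^ 2 := by
      nlinarith
    have h6 : r / 2 ≤ ‖A.starProjection (sg g - sg h)‖ :=
      (pow_le_pow_iff_left₀ (by positivity) (norm_nonneg _) two_ne_zero).1 h5
    simp only [φ]
    rw [← smul_sub, ← map_sub, norm_smul, Real.norm_of_nonneg (by positivity)]
    have h7 : ‖A.starProjection (sg g - sg h)‖ = ‖A.orthogonalProjectionOnto (sg g - sg h)‖ := rfl
    rw [← h7]
    calc (1 : ℝ) = 2 / r * (r / 2) := by field_simp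
      _ ≤ _ := mul_le_mul_of_nonneg_left h6 (by positivity)
  have hcard : S.card ≤ 5 ^ n := by
    have hinj : Set.InjOn φ S := by
      intro g hg h hh he
      by_contra hne
      have := hsep g hg h hh hne
      rw [he, sub_self, norm_zero] at this
      linarith
    rw [← Finset.card_image_of_injOn hinj]
    refine (Besicovitch.card_le_of_separated (S.image φ) ?_ ?_).trans
      (Nat.pow_le_pow_right (by norm_num) hA)
    · intro c hc
      obtain ⟨g, hg, rfl⟩ := Finset.mem_image.1 hc
      simp only [φ]
      rw [norm_smul, Real.norm_of_nonneg (by positivity)]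
      have h7 : ‖A.starProjection (sg g)‖ = ‖A.orthogonalProjectionOnto (sg g)‖ := rfl
      have h8 := A.norm_starProjection_apply_le (sg g)
      rw [norm_sg, ← hr] at h8
      rw [← h7]
      calc 2 / r * ‖A.starProjection (sg g)‖ ≤ 2 / r * r :=
            mul_le_mul_of_nonneg_left h8 (by positivity)
        _ = 2 := by field_simp
    · intro c hc e he hce
      obtain ⟨g, hg, rfl⟩ := Finset.mem_image.1 hc
      obtain ⟨h, hh, rfl⟩ := Finset.mem_image.1 he
      exact hsep g hg h hh (fun hh => hce (by rw [hh]))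
  have h1 : (G.card : ℝ) ≤ ∑ h ∈ S, ((Finset.univ.filter
      (fun g : Fin d → Bool => ‖sg g - sg h‖ ^ 2 ≤ d / 2)).card : ℝ) := by
    rw [← Nat.cast_sum]
    exact Nat.cast_le.2 ((Finset.card_le_card hcov).trans Finset.card_biUnion_le)
  refine h1.trans ((Finset.sum_le_card_nsmul _ _ _ (fun h _ => sign_ball hd (sg h))).trans ?_)
  rw [nsmul_eq_mul]
  refine mul_le_mul_of_nonneg_right ?_ (by positivity)
  exact_mod_cast hcard

/-- Most sign vectors have small inner product with every element of a small set. -/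
lemma typical_set (X : Finset 𝔼) {κ : ℝ} (hκ : 0 ≤ κ) (hd : 1 ≤ d)
    (hX : 4 * (X.card : ℝ) ≤ Real.exp (κ ^ 2 * d / 2)) :
    (2 : ℝ) ^ d / 2 ≤ ((Finset.univ.filter (fun g : Fin d → Bool =>
      ∀ x ∈ X, |⟪sg g, x⟫| ≤ κ * Real.sqrt d * ‖x‖)).card : ℝ) := by
  classical
  have hd' : (1 : ℝ) ≤ d := by exact_mod_cast hd
  set r := Real.sqrt d with hr
  have hr0 : 0 < r := Real.sqrt_pos.2 (by linarith)
  have hr2 : r ^ 2 = d := Real.sq_sqrt (by linarith)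
  set e := Real.exp (-(κ ^ 2 * d / 2)) with he
  have hbad : ∀ x ∈ X, ((Finset.univ.filter (fun g : Fin d → Bool =>
      ¬ |⟪sg g, x⟫| ≤ κ * r * ‖x‖)).card : ℝ) ≤ 2 * (2 ^ d * e) := by
    intro x _
    by_cases hx : x = 0
    · simp [hx]; positivity
    have hx0 : 0 < ‖x‖ := norm_pos_iff.2 hx
    have hee : ∀ y : 𝔼, ‖y‖ = ‖x‖ →
        Real.exp (-((κ * r * ‖x‖) ^ 2 / (2 * ‖y‖ ^ 2))) = e := by
      intro y hy
      rw [hy, he]; congr 2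
      rw [mul_pow, mul_pow, hr2]; field_simp
    have h1 := hoeffding x hx (t := κ * r * ‖x‖) (by positivity)
    have h2 := hoeffding (-x) (neg_ne_zero.2 hx) (t := κ * r * ‖x‖) (by positivity)
    rw [hee x rfl] at h1
    rw [hee (-x) (norm_neg x)] at h2
    have h3 : Finset.univ.filter (fun g : Fin d → Bool => ¬ |⟪sg g, x⟫| ≤ κ * r * ‖x‖) ⊆
        Finset.univ.filter (fun g : Fin d → Bool => κ * r * ‖x‖ ≤ ⟪sg g, x⟫) ∪
        Finset.univ.filter (fun g : Fin d → Bool => κ * r * ‖x‖ ≤ ⟪sg g, -x⟫) := by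
      intro g
      simp only [Finset.mem_filter, Finset.mem_union, Finset.mem_univ, true_and, inner_neg_right]
      intro hg
      push Not at hg
      rcases lt_abs.1 hg with h | h
      · exact Or.inl h.le
      · exact Or.inr h.le
    have h4 := (Finset.card_le_card h3).trans (Finset.card_union_le _ _)
    have h5 := (Nat.cast_le (α := ℝ)).2 h4
    push_cast at h5
    linarith
  have hsplit := Finset.card_filter_add_card_filter_not (s := (Finset.univ : Finset (Fin d → Bool)))
    (fun g => ∀ x ∈ X, |⟪sg g, x⟫| ≤ κ * r * ‖x‖)
  have hsub : Finset.univ.filter (fun g : Fin d → Bool =>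
      ¬ ∀ x ∈ X, |⟪sg g, x⟫| ≤ κ * r * ‖x‖) ⊆ X.biUnion (fun x => Finset.univ.filter
      (fun g : Fin d → Bool => ¬ |⟪sg g, x⟫| ≤ κ * r * ‖x‖)) := by
    intro g
    simp only [Finset.mem_filter, Finset.mem_biUnion, Finset.mem_univ, true_and]
    intro hg
    push Not at hg ⊢
    exact hg
  have h1 : ((Finset.univ.filter (fun g : Fin d → Bool =>
      ¬ ∀ x ∈ X, |⟪sg g, x⟫| ≤ κ * r * ‖x‖)).card : ℝ) ≤ X.card * (2 * (2 ^ d * e)) := by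
    refine le_trans (Nat.cast_le.2 ((Finset.card_le_card hsub).trans Finset.card_biUnion_le)) ?_
    rw [Nat.cast_sum, ← nsmul_eq_mul]
    exact Finset.sum_le_card_nsmul _ _ _ hbad
  have h2 : (X.card : ℝ) * e ≤ 1 / 4 := by
    rw [he, Real.exp_neg, ← div_eq_mul_inv, div_le_iff₀ (Real.exp_pos _)]
    linarith
  have h3 : (X.card : ℝ) * (2 * (2 ^ d * e)) ≤ 2 ^ d / 2 := by
    have : (0 : ℝ) < 2 ^ d := by positivity
    nlinarith
  have h4 : (Finset.univ : Finset (Fin d → Bool)).card = 2 ^ d := by simp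
  rw [h4] at hsplit
  have h5 := congrArg (Nat.cast : ℕ → ℝ) hsplit
  push_cast at h5
  linarith

end partB2

open scoped RealInnerProductSpace

section partB3
variable {d : ℕ}
local notation "𝔼" => EuclideanSpace ℝ (Fin d)

/-- Normalized difference of two sign vectors. -/
noncomputable def vv (p : (Fin d → Bool) × (Fin d → Bool)) : EuclideanSpace ℝ (Fin d) :=
  (2 * Real.sqrt d)⁻¹ • (sg p.1 - sg p.2)

/-- Good direction with respect to `A`, `W`, `X`. -/
def GoodV (A W : Submodule ℝ (EuclideanSpace ℝ (Fin d))) (X : Finset (EuclideanSpace ℝ (Fin d)))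
    (δ κ : ℝ) (v : EuclideanSpace ℝ (Fin d)) : Prop :=
  (∀ u ∈ W, |⟪v, u⟫| ≤ δ * ‖u‖) ∧ (∀ x ∈ X, |⟪v, x⟫| ≤ κ * ‖x‖) ∧
    1 / 8 ≤ ‖Aᗮ.starProjection v‖

lemma norm_vv (hd : 1 ≤ d) (p : (Fin d → Bool) × (Fin d → Bool)) : ‖vv p‖ ≤ 1 := by
  have hd' : (1 : ℝ) ≤ d := by exact_mod_cast hd
  have hr0 : 0 < Real.sqrt d := Real.sqrt_pos.2 (by linarith)
  rw [vv, norm_smul, norm_inv, Real.norm_of_nonneg (by positivity), inv_mul_le_iff₀ (by positivity)]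
  refine (norm_sub_le _ _).trans ?_
  rw [norm_sg, norm_sg]; linarith

open Classical in
lemma good_set (hd : 1 ≤ d) (A W : Submodule ℝ 𝔼) (X : Finset 𝔼) {n D B : ℕ} {κ δ : ℝ}
    (hA : Module.finrank ℝ A ≤ n) (hW : Module.finrank ℝ W ≤ D)
    (hκ : 0 ≤ κ) (hX : 4 * (X.card : ℝ) ≤ Real.exp (κ ^ 2 * d / 2)) (hδ : 0 < δ)
    (hB : Real.sqrt d ≤ 2 * δ * B)
    (hbig : 8 * ((2 * (B : ℝ) + 1) ^ D) ^ 2 * 5 ^ n ≤ Real.exp (d / 4)) :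
    (2 ^ d * 2 ^ d : ℝ) / (8 * ((2 * (B : ℝ) + 1) ^ D) ^ 2) ≤
      ((Finset.univ.filter (fun p : (Fin d → Bool) × (Fin d → Bool) =>
        GoodV A W X δ κ (vv p))).card : ℝ) := by
  have hd' : (1 : ℝ) ≤ d := by exact_mod_cast hd
  set r := Real.sqrt d with hr
  have hr0 : 0 < r := Real.sqrt_pos.2 (by linarith)
  have hr2 : r ^ 2 = d := Real.sq_sqrt (by linarith)
  set E := Finset.univ.filter (fun g : Fin d → Bool =>
      ∀ x ∈ X, |⟪sg g, x⟫| ≤ κ * r * ‖x‖) with hE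
  have hEc : (2 : ℝ) ^ d / 2 ≤ E.card := typical_set X hκ hd hX
  set f := Module.finrank ℝ W with hf
  let b := stdOrthonormalBasis ℝ W
  let cell : (Fin d → Bool) → (Fin f → ℤ) := fun g i => ⌊⟪(b i : 𝔼), sg g⟫ / (2 * δ)⌋
  let t : Finset (Fin f → ℤ) := Fintype.piFinset (fun _ => Finset.Icc (-(B : ℤ)) B)
  have htc : t.card = (2 * B + 1) ^ f := by
    simp only [t, Fintype.card_piFinset, Int.card_Icc, Finset.prod_const, Finset.card_univ,
      Fintype.card_fin]
    congr 1; omega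
  have hmaps : ∀ g ∈ E, cell g ∈ t := by
    intro g _
    simp only [t, cell, Fintype.mem_piFinset, Finset.mem_Icc]
    intro i
    have h1 : |⟪(b i : 𝔼), sg g⟫| ≤ r := by
      have := abs_real_inner_le_norm (b i : 𝔼) (sg g)
      rw [norm_sg, ← hr] at this
      have hb : ‖(b i : 𝔼)‖ = 1 := b.norm_eq_one i
      rwa [hb, one_mul] at this
    have h2 : |⟪(b i : 𝔼), sg g⟫ / (2 * δ)| ≤ B := by
      rw [abs_div, abs_of_pos (by positivity : 0 < 2 * δ), div_le_iff₀ (by positivity)]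
      linarith
    have h3 := abs_le.1 h2
    constructor
    · rw [Int.le_floor]; push_cast; exact h3.1
    · have : (⌊⟪(b i : 𝔼), sg g⟫ / (2 * δ)⌋ : ℝ) ≤ (B : ℤ) := by
        push_cast; exact (Int.floor_le _).trans h3.2
      exact_mod_cast this
  set Q : ℝ := (2 * (B : ℝ) + 1) ^ D with hQ
  have hQ1 : 1 ≤ Q := one_le_pow₀ (by have := Nat.cast_nonneg (α := ℝ) B; linarith)
  have htQ : (t.card : ℝ) ≤ Q := by
    rw [htc, hQ]; push_cast
    exact pow_le_pow_right₀ (by have := Nat.cast_nonneg (α := ℝ) B; linarith) hW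
  have htne : t.Nonempty := by
    rw [← Finset.card_pos, htc]; positivity
  obtain ⟨c, _, hc⟩ := Finset.exists_le_card_fiber_of_nsmul_le_card_of_maps_to
    (b := (2 : ℝ) ^ d / 2 / Q) hmaps htne (by
      rw [nsmul_eq_mul]
      refine le_trans ?_ hEc
      calc (t.card : ℝ) * (2 ^ d / 2 / Q) ≤ Q * (2 ^ d / 2 / Q) :=
            mul_le_mul_of_nonneg_right htQ (by positivity)
        _ = 2 ^ d / 2 := by field_simp)
  set F := E.filter (fun g => cell g = c) with hF
  -- close pairs
  set CP := Finset.univ.filter (fun p : (Fin d → Bool) × (Fin d → Bool) =>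
    ‖Aᗮ.starProjection (sg p.1 - sg p.2)‖ < r / 4) with hCP
  have hCPc : (CP.card : ℝ) ≤ 2 ^ d * (5 ^ n * (2 ^ d * Real.exp (-(d / 4)))) := by
    have h1 : CP ⊆ Finset.univ.biUnion (fun g' : Fin d → Bool =>
        (Finset.univ.filter (fun g : Fin d → Bool =>
          ‖Aᗮ.starProjection (sg g - sg g')‖ < r / 4)).image (fun g => (g, g'))) := by
      rintro ⟨g, g'⟩ hp
      rw [Finset.mem_biUnion]
      refine ⟨g', Finset.mem_univ _, Finset.mem_image.2 ⟨g, ?_, rfl⟩⟩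
      simpa [CP] using hp
    have h2 := (Finset.card_le_card h1).trans Finset.card_biUnion_le
    have h3 := (Nat.cast_le (α := ℝ)).2 h2
    rw [Nat.cast_sum] at h3
    refine h3.trans ?_
    have h4 := Finset.sum_le_card_nsmul (Finset.univ : Finset (Fin d → Bool)) (fun g' => (((Finset.univ.filter
      (fun g : Fin d → Bool =>
          ‖Aᗮ.starProjection (sg g - sg g')‖ < r / 4)).image (fun g => (g, g'))).card : ℝ))
      (5 ^ n * (2 ^ d * Real.exp (-(d / 4)))) (fun g' _ =>
        le_trans (Nat.cast_le.2 Finset.card_image_le) (close_subspace hd A hA (sg g')))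
    rw [nsmul_eq_mul] at h4
    simpa using h4
  have hsub : (F ×ˢ F) \ CP ⊆ Finset.univ.filter (fun p : (Fin d → Bool) × (Fin d → Bool) =>
        GoodV A W X δ κ (vv p)) := by
    rintro ⟨g, g'⟩ hp
    rw [Finset.mem_sdiff, Finset.mem_product] at hp
    obtain ⟨⟨hg, hg'⟩, hcl⟩ := hp
    simp only [CP, Finset.mem_filter, Finset.mem_univ, true_and, not_lt] at hcl
    rw [hF, Finset.mem_filter] at hg hg'
    simp only at hg hg'
    simp only [Finset.mem_filter, Finset.mem_univ, true_and]
    have hr2' : 0 < 2 * r := by positivity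
    refine ⟨?_, ?_, ?_⟩
    · intro u hu
      set w := sg g - sg g' with hw
      have hcoef : ∀ i, ‖⟪b i, W.orthogonalProjectionOnto w⟫‖ ^ 2 ≤ (2 * δ) ^ 2 := by
        intro i
        have e1 : ⟪b i, W.orthogonalProjectionOnto w⟫ = ⟪(b i : 𝔼), w⟫ := by
          rw [real_inner_comm, Submodule.inner_orthogonalProjectionOnto_eq_of_mem_right,
            real_inner_comm]
        have e2 : cell g i = cell g' i := by rw [hg.2, hg'.2]
        have e3 := Int.abs_sub_lt_one_of_floor_eq_floor e2
        rw [← sub_div, ← inner_sub_right, abs_div, abs_of_pos (by positivity : 0 < 2 * δ),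
          div_lt_one (by positivity)] at e3
        rw [e1, Real.norm_eq_abs]
        exact pow_le_pow_left₀ (abs_nonneg _) e3.le 2
      have h1 : ‖W.orthogonalProjectionOnto w‖ ^ 2 ≤ (2 * δ * r) ^ 2 := by
        rw [← b.sum_sq_norm_inner_right]
        refine (Finset.sum_le_card_nsmul _ _ _ (fun i _ => hcoef i)).trans ?_
        simp only [Finset.card_univ, Fintype.card_fin, nsmul_eq_mul]
        have h2 : (Module.finrank ℝ W : ℝ) ≤ d := by
          have := Submodule.finrank_le W
          simp only [finrank_euclideanSpace_fin] at this
          exact_mod_cast this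
        rw [mul_pow _ r, hr2, mul_comm]
        exact mul_le_mul_of_nonneg_left h2 (by positivity)
      have h2 : ‖W.orthogonalProjectionOnto w‖ ≤ 2 * δ * r :=
        (pow_le_pow_iff_left₀ (norm_nonneg _) (by positivity) two_ne_zero).1 h1
      have h3 : ⟪w, u⟫ = ⟪W.orthogonalProjectionOnto w, (⟨u, hu⟩ : W)⟫ := by
        rw [Submodule.inner_orthogonalProjectionOnto_eq_of_mem_right]
      have h4 := abs_real_inner_le_norm (W.orthogonalProjectionOnto w) (⟨u, hu⟩ : W)
      rw [← h3] at h4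
      have h5 : ‖(⟨u, hu⟩ : W)‖ = ‖u‖ := rfl
      rw [h5] at h4
      rw [vv, real_inner_smul_left, abs_mul, abs_of_pos (by positivity), inv_mul_le_iff₀ hr2']
      refine h4.trans ((mul_le_mul_of_nonneg_right h2 (norm_nonneg _)).trans (le_of_eq ?_))
      ring
    · intro x hx
      rw [vv, real_inner_smul_left, abs_mul, abs_of_pos (by positivity), inv_mul_le_iff₀ hr2',
        inner_sub_left]
      have h1 := (Finset.mem_filter.1 hg.1).2 x hx
      have h2 := (Finset.mem_filter.1 hg'.1).2 x hx
      refine (abs_sub _ _).trans ?_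
      show |⟪sg g, x⟫| + |⟪sg g', x⟫| ≤ 2 * r * (κ * ‖x‖)
      linarith
    · rw [vv, map_smul, norm_smul, norm_inv, Real.norm_of_nonneg (by positivity), ← hr,
        le_inv_mul_iff₀ hr2']
      linarith
  have h1 : (F.card : ℝ) * F.card - CP.card ≤ (((F ×ˢ F) \ CP).card : ℝ) := by
    have := Finset.le_card_sdiff CP (F ×ˢ F)
    rw [Finset.card_product] at this
    have h2 : F.card * F.card ≤ ((F ×ˢ F) \ CP).card + CP.card := by omega
    have h3 := (Nat.cast_le (α := ℝ)).2 h2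
    push_cast at h3
    linarith
  have h2 := (Nat.cast_le (α := ℝ)).2 (Finset.card_le_card hsub)
  refine le_trans ?_ (h1.trans h2)
  have h3 : (2 : ℝ) ^ d / 2 / Q * (2 ^ d / 2 / Q) ≤ (F.card : ℝ) * F.card :=
    mul_le_mul hc hc (by positivity) (by positivity)
  have h4 : 5 ^ n * Real.exp (-(d / 4)) ≤ 1 / (8 * Q ^ 2) := by
    rw [Real.exp_neg, ← div_eq_mul_inv, div_le_div_iff₀ (Real.exp_pos _) (by positivity)]
    linarith
  have h5 : (2 : ℝ) ^ d * (5 ^ n * (2 ^ d * Real.exp (-(d / 4)))) ≤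
      2 ^ d * 2 ^ d * (1 / (8 * Q ^ 2)) := by
    have : (2 : ℝ) ^ d * (5 ^ n * (2 ^ d * Real.exp (-(d / 4)))) =
      2 ^ d * 2 ^ d * (5 ^ n * Real.exp (-(d / 4))) := by ring
    rw [this]
    exact mul_le_mul_of_nonneg_left h4 (by positivity)
  have h6 : (2 : ℝ) ^ d / 2 / Q * (2 ^ d / 2 / Q) = 2 * (2 ^ d * 2 ^ d / (8 * Q ^ 2)) := by
    field_simp; norm_num
  have h7 : (2 : ℝ) ^ d * 2 ^ d * (1 / (8 * Q ^ 2)) = 2 ^ d * 2 ^ d / (8 * Q ^ 2) := by ring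
  linarith

end partB3

open scoped RealInnerProductSpace

section partC
variable {d : ℕ}
local notation "𝔼" => EuclideanSpace ℝ (Fin d)

/-- Span of the elements of a list. -/
noncomputable def spl (l : List (EuclideanSpace ℝ (Fin d))) :
    Submodule ℝ (EuclideanSpace ℝ (Fin d)) :=
  Submodule.span ℝ {x | x ∈ l}

/-- Robustly independent list. -/
def Rob (β : ℝ) : List (EuclideanSpace ℝ (Fin d)) → Prop
  | [] => True
  | x :: l => Rob β l ∧ β ≤ ‖x - (spl l).starProjection x‖

open Classical in
lemma exists_shift {β s : ℝ} (hβ : 0 < β) (hs : 0 < s) (l : List 𝔼) (hl : Rob β l) :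
    ∃ Z : Finset 𝔼, Z.card = 8 ^ l.length ∧ (∀ z ∈ Z, z ∈ spl l) ∧
      (∀ z ∈ Z, ‖z‖ ≤ 7 * s * l.length) ∧
      ∀ z ∈ Z, ∀ z' ∈ Z, z ≠ z' → ∃ y ∈ l, s * β ≤ |⟪z - z', y⟫| := by
  induction l with
  | nil =>
    refine ⟨{0}, by simp, by simp, by simp, ?_⟩
    intro z hz z' hz' h
    rw [Finset.mem_singleton] at hz hz'
    exact absurd (hz.trans hz'.symm) h
  | cons x l ih =>
    obtain ⟨hl1, hl2⟩ := hl
    obtain ⟨Z, hZ1, hZ2, hZ3, hZ4⟩ := ih hl1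
    set p := x - (spl l).starProjection x with hp
    have hp0 : 0 < ‖p‖ := lt_of_lt_of_le hβ hl2
    set w := ‖p‖⁻¹ • p with hw
    have hw1 : ‖w‖ = 1 := by
      rw [hw, norm_smul, norm_inv, norm_norm, inv_mul_cancel₀ hp0.ne']
    have hpo : ∀ u ∈ spl l, ⟪p, u⟫ = 0 := fun u hu =>
      Submodule.starProjection_inner_eq_zero x u hu
    have hwo : ∀ u ∈ spl l, ⟪w, u⟫ = 0 := fun u hu => by
      rw [hw, real_inner_smul_left, hpo u hu, mul_zero]
    have hwx : ⟪w, x⟫ = ‖p‖ := by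
      have h1 : ⟪w, x⟫ = ⟪w, p⟫ + ⟪w, (spl l).starProjection x⟫ := by
        rw [← inner_add_right, hp, sub_add_cancel]
      rw [h1, hwo _ (Submodule.starProjection_apply_mem _ _), add_zero, hw,
        real_inner_smul_left, real_inner_self_eq_norm_sq]
      field_simp
    have hmono : spl l ≤ spl (x :: l) := Submodule.span_mono (fun y hy => List.mem_cons_of_mem _ hy)
    have hx : x ∈ spl (x :: l) := Submodule.subset_span List.mem_cons_self
    have hwm : w ∈ spl (x :: l) := Submodule.smul_mem _ _ (Submodule.sub_mem _ hx
      (hmono (Submodule.starProjection_apply_mem _ _)))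
    let F : 𝔼 × ℕ → 𝔼 := fun q => q.1 + ((q.2 : ℝ) * s) • w
    have hsep : ∀ q ∈ Z ×ˢ Finset.range 8, ∀ q' ∈ Z ×ˢ Finset.range 8, q ≠ q' →
        ∃ y ∈ x :: l, s * β ≤ |⟪F q - F q', y⟫| := by
      rintro ⟨z, c⟩ hq ⟨z', c'⟩ hq' hne
      rw [Finset.mem_product] at hq hq'
      have e : F (z, c) - F (z', c') = (z - z') + (((c : ℝ) - c') * s) • w := by
        simp only [F]; rw [sub_mul, sub_smul]; abel
      by_cases hz : z = z'
      · refine ⟨x, List.mem_cons_self, ?_⟩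
        have hc : c ≠ c' := fun h => hne (by rw [hz, h])
        rw [e, hz, sub_self, zero_add, real_inner_smul_left, hwx, abs_mul, abs_mul,
          abs_of_pos hs, abs_of_pos hp0]
        have h1 : (1 : ℝ) ≤ |(c : ℝ) - c'| := by
          have : (c : ℤ) - c' ≠ 0 := by omega
          have := Int.one_le_abs this
          exact_mod_cast this
        calc s * β ≤ 1 * s * ‖p‖ := by rw [one_mul]; exact mul_le_mul_of_nonneg_left hl2 hs.le
          _ ≤ _ := mul_le_mul_of_nonneg_right (mul_le_mul_of_nonneg_right h1 hs.le) hp0.le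
      · obtain ⟨y, hy, h⟩ := hZ4 z hq.1 z' hq'.1 hz
        refine ⟨y, List.mem_cons_of_mem _ hy, ?_⟩
        rw [e, inner_add_left, real_inner_smul_left, hwo y (Submodule.subset_span hy), mul_zero,
          add_zero]
        exact h
    refine ⟨(Z ×ˢ Finset.range 8).image F, ?_, ?_, ?_, ?_⟩
    · rw [Finset.card_image_of_injOn, Finset.card_product, hZ1, Finset.card_range,
        List.length_cons, pow_succ]
      intro q hq q' hq' h
      by_contra hne
      obtain ⟨y, _, hy⟩ := hsep q hq q' hq' hne
      rw [h, sub_self, inner_zero_left, abs_zero] at hy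
      have := mul_pos hs hβ
      linarith
    · intro z hz
      obtain ⟨q, hq, rfl⟩ := Finset.mem_image.1 hz
      exact Submodule.add_mem _ (hmono (hZ2 _ (Finset.mem_product.1 hq).1))
        (Submodule.smul_mem _ _ hwm)
    · intro z hz
      obtain ⟨q, hq, rfl⟩ := Finset.mem_image.1 hz
      have h1 := hZ3 _ (Finset.mem_product.1 hq).1
      have h2 : (q.2 : ℝ) ≤ 7 := by
        have := Finset.mem_range.1 (Finset.mem_product.1 hq).2
        exact_mod_cast (by omega : q.2 ≤ 7)
      have h3 : ‖((q.2 : ℝ) * s) • w‖ ≤ 7 * s := by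
        rw [norm_smul, hw1, mul_one, Real.norm_of_nonneg (by positivity)]
        exact mul_le_mul_of_nonneg_right h2 hs.le
      refine (norm_add_le _ _).trans ?_
      rw [List.length_cons]; push_cast
      linarith
    · intro z hz z' hz' hne
      obtain ⟨q, hq, rfl⟩ := Finset.mem_image.1 hz
      obtain ⟨q', hq', rfl⟩ := Finset.mem_image.1 hz'
      exact hsep q hq q' hq' (fun h => hne (by rw [h]))

/-- Grid vector. -/
noncomputable def gv (L0 : ℕ) (a : Fin d → Fin (2 * L0 + 1)) : EuclideanSpace ℝ (Fin d) :=
  WithLp.toLp 2 (fun i => (((a i : ℕ) : ℝ) - L0) * (L0 * Real.sqrt d)⁻¹)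

lemma norm_gv {L0 : ℕ} (hL : 1 ≤ L0) (hd : 1 ≤ d) (a : Fin d → Fin (2 * L0 + 1)) :
    ‖gv L0 a‖ ≤ 1 := by
  have hd' : (1 : ℝ) ≤ d := by exact_mod_cast hd
  have hL' : (1 : ℝ) ≤ L0 := by exact_mod_cast hL
  set r := Real.sqrt d with hr
  have hr0 : 0 < r := Real.sqrt_pos.2 (by linarith)
  have hr2 : r ^ 2 = d := Real.sq_sqrt (by linarith)
  have h1 : ‖gv L0 a‖ ^ 2 ≤ 1 ^ 2 := by
    rw [EuclideanSpace.norm_sq_eq]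
    have : ∀ i : Fin d, ‖gv L0 a i‖ ^ 2 ≤ (r⁻¹) ^ 2 := by
      intro i
      apply pow_le_pow_left₀ (norm_nonneg _)
      have h2 : |((a i : ℕ) : ℝ) - L0| ≤ L0 := by
        have := (a i).2
        have h3 : ((a i : ℕ) : ℝ) ≤ 2 * L0 := by exact_mod_cast (by omega : (a i : ℕ) ≤ 2 * L0)
        have h4 : (0 : ℝ) ≤ ((a i : ℕ) : ℝ) := Nat.cast_nonneg _
        rw [abs_le]; constructor <;> linarith
      show ‖(((a i : ℕ) : ℝ) - L0) * (L0 * r)⁻¹‖ ≤ r⁻¹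
      rw [norm_mul, Real.norm_eq_abs, Real.norm_of_nonneg (by positivity)]
      calc _ ≤ (L0 : ℝ) * (L0 * r)⁻¹ := mul_le_mul_of_nonneg_right h2 (by positivity)
        _ = r⁻¹ := by field_simp
    refine (Finset.sum_le_card_nsmul _ _ _ (fun i _ => this i)).trans ?_
    simp only [Finset.card_univ, Fintype.card_fin, nsmul_eq_mul]
    rw [inv_pow, hr2]; field_simp; norm_num
  exact (pow_le_pow_iff_left₀ (norm_nonneg _) (by norm_num) two_ne_zero).1 h1

open Classical in
lemma anticonc {L0 : ℕ} {η β : ℝ} (hd : 1 ≤ d) (hη : 0 < η) (hβ : 0 < β) (hL : 4 * d ≤ L0)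
    (hLη : 1 < η * L0) (hs : 7 * (3 * η / β) * (d * Real.sqrt d) ≤ 1 / 2)
    (l : List 𝔼) (hl : Rob β l) (hl1 : ∀ y ∈ l, ‖y‖ ≤ 1) (hk : 1 ≤ l.length) :
    ((Finset.univ.filter (fun a : Fin d → Fin (2 * L0 + 1) =>
      ∀ y ∈ l, |⟪gv L0 a, y⟫| ≤ η)).card : ℝ) ≤
      Real.exp (-(l.length : ℝ)) * ((2 * L0 + 1 : ℕ) : ℝ) ^ d := by
  have hd' : (1 : ℝ) ≤ d := by exact_mod_cast hd
  have hL' : (4 * d : ℝ) ≤ L0 := by exact_mod_cast hL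
  have hL0 : (0 : ℝ) < L0 := by linarith
  set r := Real.sqrt d with hr
  have hr0 : 0 < r := Real.sqrt_pos.2 (by linarith)
  have hr2 : r ^ 2 = d := Real.sq_sqrt (by linarith)
  set s := 3 * η / β with hsdef
  have hs0 : 0 < s := by positivity
  have hsβ : s * β = 3 * η := by rw [hsdef]; field_simp
  obtain ⟨Z, hZ1, hZ2, hZ3, hZ4⟩ := exists_shift hβ hs0 l hl
  set S := Finset.univ.filter (fun a : Fin d → Fin (2 * L0 + 1) =>
      ∀ y ∈ l, |⟪gv L0 a, y⟫| ≤ η) with hS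
  set k := l.length with hkdef
  have hk' : (1 : ℝ) ≤ k := by exact_mod_cast hk
  set L1 : ℕ := ⌈7 * s * k * (L0 * r)⌉₊ + 1 with hL1
  let Φ : (Fin d → Fin (2 * L0 + 1)) × 𝔼 → (Fin d → ℤ) :=
    fun q i => ((q.1 i : ℕ) : ℤ) + round (q.2 i * (L0 * r))
  let T : Finset (Fin d → ℤ) := Fintype.piFinset (fun _ => Finset.Icc (-(L1 : ℤ)) (2 * L0 + L1))
  have hTc : (T.card : ℝ) = (2 * L0 + 1 + 2 * L1 : ℝ) ^ d := by
    simp only [T, Fintype.card_piFinset, Int.card_Icc, Finset.prod_const, Finset.card_univ,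
      Fintype.card_fin]
    have : (2 * (L0 : ℤ) + L1 + 1 - -(L1 : ℤ)).toNat = 2 * L0 + 1 + 2 * L1 := by omega
    rw [this]; push_cast; ring
  have hmap : ∀ q ∈ S ×ˢ Z, Φ q ∈ T := by
    rintro ⟨a, z⟩ hq
    rw [Finset.mem_product] at hq
    simp only [T, Φ, Fintype.mem_piFinset, Finset.mem_Icc]
    intro i
    have h1 : |z i| ≤ 7 * s * k := by
      have := PiLp.norm_apply_le z i
      rw [Real.norm_eq_abs] at this
      exact this.trans (hZ3 z hq.2)
    have h2 : |z i * (L0 * r)| ≤ 7 * s * k * (L0 * r) := by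
      rw [abs_mul, abs_of_pos (by positivity : (0 : ℝ) < L0 * r)]
      exact mul_le_mul_of_nonneg_right h1 (by positivity)
    have h3 := abs_sub_round (z i * (L0 * r))
    have h4 : |(round (z i * (L0 * r)) : ℝ)| ≤ (L1 : ℤ) := by
      have h5 := Nat.le_ceil (7 * s * k * (L0 * r))
      have h6 : |(round (z i * (L0 * r)) : ℝ)| ≤ |z i * (L0 * r)| +
          |z i * (L0 * r) - round (z i * (L0 * r))| := by
        have := abs_sub (z i * (L0 * r)) (z i * (L0 * r) - round (z i * (L0 * r)))
        rwa [sub_sub_cancel] at this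
      rw [hL1]; push_cast
      linarith
    have h5 : |round (z i * (L0 * r))| ≤ (L1 : ℤ) := by exact_mod_cast h4
    have h6 := abs_le.1 h5
    have := (a i).2
    constructor <;> omega
  have hinj : Set.InjOn Φ (S ×ˢ Z : Finset _) := by
    rintro ⟨a, z⟩ hq ⟨a', z'⟩ hq' he
    rw [Finset.mem_coe, Finset.mem_product] at hq hq'
    have hzz : z = z' := by
      by_contra hne
      obtain ⟨y, hy, h⟩ := hZ4 z hq.2 z' hq'.2 hne
      have e1 := (Finset.mem_filter.1 hq.1).2 y hy
      have e2 := (Finset.mem_filter.1 hq'.1).2 y hy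
      simp only at e1 e2
      set e : 𝔼 := (z - z') - (gv L0 a' - gv L0 a) with he'
      have hen : ‖e‖ ≤ (L0 : ℝ)⁻¹ := by
        have : ‖e‖ ^ 2 ≤ ((L0 : ℝ)⁻¹) ^ 2 := by
          rw [EuclideanSpace.norm_sq_eq]
          have hco : ∀ i : Fin d, ‖e i‖ ^ 2 ≤ ((L0 * r)⁻¹) ^ 2 := by
            intro i
            apply pow_le_pow_left₀ (norm_nonneg _)
            have hi := congrFun he i
            simp only [Φ] at hi
            have hi' : (((a i : ℕ) : ℝ)) + round (z i * (L0 * r)) =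
              ((a' i : ℕ) : ℝ) + round (z' i * (L0 * r)) := by exact_mod_cast hi
            have e3 : e i = (L0 * r)⁻¹ * ((z i * (L0 * r) - round (z i * (L0 * r))) -
                (z' i * (L0 * r) - round (z' i * (L0 * r)))) := by
              have : e i = (z i - z' i) - ((((a' i : ℕ) : ℝ) - L0) * (L0 * r)⁻¹ -
                (((a i : ℕ) : ℝ) - L0) * (L0 * r)⁻¹) := rfl
              rw [this]
              have : ((a' i : ℕ) : ℝ) = ((a i : ℕ) : ℝ) + round (z i * (L0 * r)) -
                round (z' i * (L0 * r)) := by linarith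
              rw [this]
              field_simp
              ring
            rw [e3, norm_mul, Real.norm_of_nonneg (by positivity), Real.norm_eq_abs]
            have b1 := abs_sub_round (z i * (L0 * r))
            have b2 := abs_sub_round (z' i * (L0 * r))
            have b3 := abs_sub (z i * (L0 * r) - round (z i * (L0 * r)))
                (z' i * (L0 * r) - round (z' i * (L0 * r)))
            have b4 : |(z i * (L0 * r) - round (z i * (L0 * r))) -
                (z' i * (L0 * r) - round (z' i * (L0 * r)))| ≤ 1 := by linarith
            calc _ ≤ (L0 * r)⁻¹ * 1 := mul_le_mul_of_nonneg_left b4 (by positivity)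
              _ = _ := mul_one _
          refine (Finset.sum_le_card_nsmul _ _ _ (fun i _ => hco i)).trans (le_of_eq ?_)
          simp only [Finset.card_univ, Fintype.card_fin, nsmul_eq_mul]
          rw [inv_pow, mul_pow, hr2]; field_simp
        exact (pow_le_pow_iff_left₀ (norm_nonneg _) (by positivity) two_ne_zero).1 this
      have e4 : ⟪z - z', y⟫ = ⟪gv L0 a', y⟫ - ⟪gv L0 a, y⟫ + ⟪e, y⟫ := by
        rw [← inner_sub_left, ← inner_add_left, he']; congr 1; abel
      have e5 : |⟪e, y⟫| ≤ (L0 : ℝ)⁻¹ := by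
        refine (abs_real_inner_le_norm _ _).trans ?_
        calc ‖e‖ * ‖y‖ ≤ (L0 : ℝ)⁻¹ * 1 := mul_le_mul hen (hl1 y hy) (norm_nonneg _) (by positivity)
          _ = _ := mul_one _
      have e6 : (L0 : ℝ)⁻¹ < η := by
        rw [inv_lt_iff_one_lt_mul₀ hL0]; linarith
      rw [e4, hsβ] at h
      have e7 := abs_add_le (⟪gv L0 a', y⟫ - ⟪gv L0 a, y⟫) ⟪e, y⟫
      have e8 := abs_sub ⟪gv L0 a', y⟫ ⟪gv L0 a, y⟫
      linarith
    subst hzz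
    have : a = a' := by
      funext i
      have hi := congrFun he i
      simp only [Φ, add_left_inj] at hi
      exact Fin.ext (by exact_mod_cast hi)
    rw [this]
  have hcard : (S.card : ℝ) * 8 ^ k ≤ (2 * L0 + 1 + 2 * L1 : ℝ) ^ d := by
    rw [← hTc]
    have := Finset.card_le_card_of_injOn Φ hmap hinj
    rw [Finset.card_product, hZ1] at this
    exact_mod_cast this
  have hratio : (2 * L0 + 1 + 2 * L1 : ℝ) ^ d ≤ (2 * L0 + 1 : ℝ) ^ d * Real.exp k := by
    have h1 : (2 * L0 + 1 + 2 * L1 : ℝ) ≤ (2 * L0 + 1) * Real.exp ((L1 : ℝ) / L0) := by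
      have h2 := Real.add_one_le_exp ((L1 : ℝ) / L0)
      have h3 : (2 * L0 + 1 : ℝ) * ((L1 : ℝ) / L0 + 1) ≤ (2 * L0 + 1) * Real.exp ((L1 : ℝ) / L0) :=
        mul_le_mul_of_nonneg_left h2 (by positivity)
      have h4 : (2 * L0 + 1 : ℝ) * ((L1 : ℝ) / L0 + 1) = 2 * L1 + L1 / L0 + (2 * L0 + 1) := by
        field_simp
      have h5 : (0 : ℝ) ≤ (L1 : ℝ) / L0 := by positivity
      linarith
    refine (pow_le_pow_left₀ (by positivity) h1 d).trans ?_
    rw [mul_pow, ← Real.exp_nat_mul]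
    refine mul_le_mul_of_nonneg_left (Real.exp_le_exp.2 ?_) (by positivity)
    have h6 : (L1 : ℝ) ≤ 7 * s * k * (L0 * r) + 2 := by
      have := Nat.ceil_lt_add_one (by positivity : 0 ≤ 7 * s * k * (L0 * r))
      rw [hL1]; push_cast
      linarith
    rw [mul_div_assoc', div_le_iff₀ hL0]
    calc (d : ℝ) * L1 ≤ d * (7 * s * k * (L0 * r) + 2) :=
          mul_le_mul_of_nonneg_left h6 (by positivity)
      _ = (7 * s * (d * r)) * (k * L0) + 2 * d := by ring
      _ ≤ 1 / 2 * (k * L0) + 2 * d := by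
          have := mul_le_mul_of_nonneg_right hs (by positivity : (0 : ℝ) ≤ k * L0)
          linarith
      _ ≤ k * L0 := by nlinarith
  have h8 : Real.exp (2 * (k : ℝ)) ≤ 8 ^ k := by
    have : Real.exp 2 ≤ 8 := by
      have h1 : Real.exp 2 = Real.exp 1 * Real.exp 1 := by rw [← Real.exp_add]; norm_num
      have := Real.exp_one_lt_d9
      have := Real.exp_pos 1
      rw [h1]; nlinarith
    rw [mul_comm, Real.exp_nat_mul]
    exact pow_le_pow_left₀ (Real.exp_pos _).le this k
  have h9 := hcard.trans hratio
  push_cast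
  rw [Real.exp_neg, inv_mul_eq_div, le_div_iff₀ (Real.exp_pos _)]
  have h10 : (S.card : ℝ) * Real.exp k * Real.exp k ≤ (2 * L0 + 1 : ℝ) ^ d * Real.exp k := by
    refine le_trans ?_ h9
    rw [mul_assoc, ← Real.exp_add, ← two_mul]
    exact mul_le_mul_of_nonneg_left h8 (by positivity)
  exact le_of_mul_le_mul_right h10 (Real.exp_pos _)

end partC

open scoped RealInnerProductSpace

section partD
variable {d : ℕ}
local notation "𝔼" => EuclideanSpace ℝ (Fin d)

/-- Maximum of `hball` and all the row oracles. -/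
noncomputable def rowsO (η : ℝ) {n : ℕ} (A : Fin n → EuclideanSpace ℝ (Fin d)) :
    EuclideanSpace ℝ (Fin d) → ℝ × EuclideanSpace ℝ (Fin d) :=
  pcs hball (fun i => if h : i < n then rowO η (A ⟨i, h⟩) else hball) n

/-- The response of an iterated maximum is the response of one of the pieces. -/
lemma pcs_cases (B : 𝔼 → ℝ × 𝔼) (W : ℕ → 𝔼 → ℝ × 𝔼) (t : ℕ) (x : 𝔼) :
    pcs B W t x = B x ∨ ∃ i < t, pcs B W t x = W i x := by
  induction t with
  | zero => exact Or.inl rfl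
  | succ t ih =>
    rcases omax_eq_or (pcs B W t) (W t) x with h | h
    · rw [pcs, h]
      rcases ih with h1 | ⟨i, hi, h1⟩
      · exact Or.inl h1
      · exact Or.inr ⟨i, by omega, h1⟩
    · exact Or.inr ⟨t, by omega, by rw [pcs, h]⟩

lemma rowsO_cases (η : ℝ) {n : ℕ} (A : Fin n → 𝔼) (x : 𝔼) :
    rowsO η A x = hball x ∨ ∃ i, rowsO η A x = rowO η (A i) x := by
  rcases pcs_cases hball (fun i => if h : i < n then rowO η (A ⟨i, h⟩) else hball) n x with
    h | ⟨i, hi, h⟩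
  · exact Or.inl h
  · refine Or.inr ⟨⟨i, hi⟩, ?_⟩
    rw [rowsO, h]; simp [hi]

lemma hball_le_rowsO (η : ℝ) {n : ℕ} (A : Fin n → 𝔼) (x : 𝔼) :
    ‖x‖ - 1 ≤ (rowsO η A x).1 := base_le_pcs hball _ n x

lemma row_le_rowsO (η : ℝ) {n : ℕ} (A : Fin n → 𝔼) (x : 𝔼) (i : Fin n) :
    |⟪A i, x⟫| - η ≤ (rowsO η A x).1 := by
  have := le_pcs hball (fun i => if h : i < n then rowO η (A ⟨i, h⟩) else hball) i.2 x
  simp only [i.2, dif_pos, rowO_fst] at this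
  exact this

lemma rowsO_le {η b : ℝ} {n : ℕ} {A : Fin n → 𝔼} {x : 𝔼} (h0 : ‖x‖ - 1 ≤ b)
    (h : ∀ i, |⟪A i, x⟫| - η ≤ b) : (rowsO η A x).1 ≤ b := by
  apply pcs_le
  · exact h0
  · intro i hi
    simp only [hi, dif_pos, rowO_fst]
    exact h _

lemma nice_rowsO (η : ℝ) {n : ℕ} {A : Fin n → 𝔼} (hA : ∀ i, ‖A i‖ ≤ 1) :
    NiceO (rowsO η A) := by
  apply nice_pcs nice_hball
  intro i hi
  simp only [hi, dif_pos]
  exact nice_rowO η (hA _)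

/-- Parameters of the simulation. -/
structure SimP (M d : ℕ) where
  alg : MemAlg M (EuclideanSpace ℝ (Fin d)) (ℝ × EuclideanSpace ℝ (Fin d))
  η : ℝ
  γ1 : ℝ
  γ2 : ℝ
  β : ℝ
  k : ℕ

/-- State of the simulation: memory, number of pieces, current exploratory queries. -/
structure SimSt (M d : ℕ) where
  mem : Fin M → Bool
  j : ℕ
  ys : List (EuclideanSpace ℝ (Fin d))

namespace SimP
variable {M n : ℕ} (p : SimP M d)

/-- Offsets. -/
noncomputable def off : ℕ → ℝ
  | 0 => 0
  | j + 1 => ((j / p.k : ℕ) + 1) * p.γ1 + (j + 1) * p.γ2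

/-- Depth thresholds (times `η`). -/
noncomputable def thr (j : ℕ) : ℝ := -(p.η * (((j / p.k : ℕ) + 1 / 2) * p.γ1))

/-- Pieces. -/
noncomputable def W (v : ℕ → EuclideanSpace ℝ (Fin d)) (i : ℕ) :
    EuclideanSpace ℝ (Fin d) → ℝ × EuclideanSpace ℝ (Fin d) :=
  aff (p.η • v i) (p.η * p.off i)

/-- The oracle with pieces `0..j`. -/
noncomputable def R (A : Fin n → EuclideanSpace ℝ (Fin d)) (v : ℕ → EuclideanSpace ℝ (Fin d))
    (j : ℕ) : EuclideanSpace ℝ (Fin d) → ℝ × EuclideanSpace ℝ (Fin d) :=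
  pcs (rowsO p.η A) (p.W v) (j + 1)

/-- Current query. -/
def qry (s : SimSt M d) : EuclideanSpace ℝ (Fin d) := p.alg.query s.mem

/-- The current query is deep. -/
def deep (A : Fin n → EuclideanSpace ℝ (Fin d)) (v : ℕ → EuclideanSpace ℝ (Fin d))
    (s : SimSt M d) : Prop := (p.R A v s.j (p.qry s)).1 < p.thr s.j

/-- The current query is exploratory. -/
def expl (A : Fin n → EuclideanSpace ℝ (Fin d)) (v : ℕ → EuclideanSpace ℝ (Fin d))
    (s : SimSt M d) : Prop :=
  p.deep A v s ∧ p.β ≤ ‖p.qry s - (spl s.ys).starProjection (p.qry s)‖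

/-- New state given the exploration flag and the response. -/
def upd (s : SimSt M d) (b : Bool) (r : ℝ × EuclideanSpace ℝ (Fin d)) : SimSt M d where
  mem := p.alg.update s.mem (p.qry s) r
  j := if b then s.j + 1 else s.j
  ys := if b then (if (s.j + 1) % p.k = 0 then [] else p.qry s :: s.ys) else s.ys

open Classical in
/-- One simulation step. -/
noncomputable def step (A : Fin n → EuclideanSpace ℝ (Fin d))
    (v : ℕ → EuclideanSpace ℝ (Fin d)) (s : SimSt M d) : SimSt M d :=
  if p.expl A v s then p.upd s true (p.R A v (s.j + 1) (p.qry s))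
  else p.upd s false (p.R A v s.j (p.qry s))

/-- Simulation started from a given state. -/
noncomputable def run (A : Fin n → EuclideanSpace ℝ (Fin d))
    (v : ℕ → EuclideanSpace ℝ (Fin d)) (s : SimSt M d) : ℕ → SimSt M d
  | 0 => s
  | t + 1 => p.step A v (run A v s t)

/-- Initial state. -/
def ini (M d : ℕ) : SimSt M d := ⟨fun _ => false, 0, []⟩

/-- Simulation from the initial state. -/
noncomputable def sim (A : Fin n → EuclideanSpace ℝ (Fin d))
    (v : ℕ → EuclideanSpace ℝ (Fin d)) (t : ℕ) : SimSt M d := p.run A v (ini M d) t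

variable {p} {A : Fin n → EuclideanSpace ℝ (Fin d)} {v : ℕ → EuclideanSpace ℝ (Fin d)}

lemma W_fst (i : ℕ) (x : 𝔼) : (p.W v i x).1 = p.η * (⟪v i, x⟫ - p.off i) := by
  simp only [W, aff, real_inner_smul_left]; ring

lemma R_congr {v' : ℕ → 𝔼} {j : ℕ} (h : ∀ i ≤ j, v i = v' i) : p.R A v j = p.R A v' j := by
  apply pcs_congr
  intro i hi
  rw [W, W, h i (by omega)]

lemma R_mono {i j : ℕ} (h : i ≤ j) (x : 𝔼) : (p.R A v i x).1 ≤ (p.R A v j x).1 :=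
  pcs_mono _ _ (by omega) x

lemma norm_le_R (j : ℕ) (x : 𝔼) : ‖x‖ - 1 ≤ (p.R A v j x).1 :=
  (hball_le_rowsO _ _ _).trans (base_le_pcs _ _ _ _)

lemma row_le_R (j : ℕ) (x : 𝔼) (i : Fin n) : |⟪A i, x⟫| - p.η ≤ (p.R A v j x).1 :=
  (row_le_rowsO _ _ _ i).trans (base_le_pcs _ _ _ _)

lemma W_le_R {i j : ℕ} (h : i ≤ j) (x : 𝔼) :
    p.η * (⟪v i, x⟫ - p.off i) ≤ (p.R A v j x).1 := by
  rw [← W_fst]; exact le_pcs _ _ (by omega) x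

lemma step_pos {s : SimSt M d} (h : p.expl A v s) :
    p.step A v s = p.upd s true (p.R A v (s.j + 1) (p.qry s)) := by simp [step, h]

lemma step_neg {s : SimSt M d} (h : ¬ p.expl A v s) :
    p.step A v s = p.upd s false (p.R A v s.j (p.qry s)) := by simp [step, h]

lemma step_j_pos {s : SimSt M d} (h : p.expl A v s) : (p.step A v s).j = s.j + 1 := by
  simp [step_pos h, upd]

lemma step_j_neg {s : SimSt M d} (h : ¬ p.expl A v s) : (p.step A v s).j = s.j := by
  simp [step_neg h, upd]

lemma step_mem (s : SimSt M d) : (p.step A v s).mem =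
    p.alg.update s.mem (p.qry s) (p.R A v (p.step A v s).j (p.qry s)) := by
  by_cases h : p.expl A v s
  · rw [step_j_pos h, step_pos h]; rfl
  · rw [step_j_neg h, step_neg h]; rfl

lemma step_ys_neg {s : SimSt M d} (h : ¬ p.expl A v s) : (p.step A v s).ys = s.ys := by
  simp [step_neg h, upd]

lemma step_ys_pos {s : SimSt M d} (h : p.expl A v s) : (p.step A v s).ys =
    if (s.j + 1) % p.k = 0 then [] else p.qry s :: s.ys := by
  simp [step_pos h, upd]

lemma j_le_step (s : SimSt M d) : s.j ≤ (p.step A v s).j := by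
  by_cases h : p.expl A v s
  · rw [step_j_pos h]; omega
  · rw [step_j_neg h]

lemma step_j_le (s : SimSt M d) : (p.step A v s).j ≤ s.j + 1 := by
  by_cases h : p.expl A v s
  · rw [step_j_pos h]
  · rw [step_j_neg h]; omega

lemma run_mono (s : SimSt M d) {t t' : ℕ} (h : t ≤ t') :
    (p.run A v s t).j ≤ (p.run A v s t').j := by
  induction t', h using Nat.le_induction with
  | base => exact le_rfl
  | succ t' _ ih => exact ih.trans (j_le_step _)

lemma run_add (s : SimSt M d) (t t' : ℕ) :
    p.run A v s (t + t') = p.run A v (p.run A v s t) t' := by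
  induction t' with
  | zero => rfl
  | succ t' ih => rw [← add_assoc, run, ih, run]

/-- Dependence of the run only on the pieces already revealed. -/
lemma run_congr {v' : ℕ → 𝔼} {i : ℕ} (h : ∀ l ≤ i, v l = v' l) (s : SimSt M d) (t : ℕ)
    (ht : (p.run A v s t).j ≤ i) : p.run A v' s t = p.run A v s t := by
  induction t with
  | zero => rfl
  | succ t ih =>
    have h1 : (p.run A v s t).j ≤ i := (run_mono s (Nat.le_succ t)).trans ht
    have h2 := ih h1
    rw [run, h2]
    rw [run] at ht ⊢
    set s' := p.run A v s t
    have e1 : p.R A v s'.j = p.R A v' s'.j := R_congr (fun l hl => h l (by omega))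
    have hex : p.expl A v s' ↔ p.expl A v' s' := by
      simp only [expl, deep, e1]
    by_cases hx : p.expl A v s'
    · rw [step_pos hx, step_pos (hex.1 hx)]
      rw [step_j_pos hx] at ht
      rw [R_congr (fun l hl => h l (by omega) : ∀ l ≤ s'.j + 1, v l = v' l)]
    · rw [step_neg hx, step_neg (fun hh => hx (hex.2 hh)), e1]

/-- Basic invariant of a state: the exploratory list. -/
def Inv (A : Fin n → EuclideanSpace ℝ (Fin d)) (v : ℕ → EuclideanSpace ℝ (Fin d))
    (p : SimP M d) (s : SimSt M d) : Prop :=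
  s.ys.length = s.j % p.k ∧ Rob p.β s.ys ∧ ∀ y ∈ s.ys, ‖y‖ ≤ 1 ∧ ∀ i, |⟪A i, y⟫| ≤ p.η

lemma deep_prop (hη : 0 ≤ p.η) (hγ : 0 ≤ p.γ1) {s : SimSt M d} (h : p.deep A v s) :
    ‖p.qry s‖ ≤ 1 ∧ ∀ i, |⟪A i, p.qry s⟫| ≤ p.η := by
  have h0 : p.thr s.j ≤ 0 := by
    rw [thr, neg_nonpos]; positivity
  have h1 : (p.R A v s.j (p.qry s)).1 < p.thr s.j := h
  constructor
  · have := norm_le_R (p := p) (A := A) (v := v) s.j (p.qry s); linarith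
  · intro i
    have := row_le_R (p := p) (A := A) (v := v) s.j (p.qry s) i; linarith

lemma inv_step (hη : 0 ≤ p.η) (hγ : 0 ≤ p.γ1) (hk : 1 ≤ p.k) {s : SimSt M d}
    (h : Inv A v p s) : Inv A v p (p.step A v s) := by
  by_cases hx : p.expl A v s
  · rw [Inv, step_ys_pos hx, step_j_pos hx]
    obtain ⟨h1, h2, h3⟩ := h
    split_ifs with h0
    · exact ⟨by simp [h0], trivial, by simp⟩
    · refine ⟨?_, ⟨h2, hx.2⟩, ?_⟩
      · rw [List.length_cons, h1]
        rw [Nat.add_mod] at h0 ⊢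
        have := Nat.mod_lt s.j (show 0 < p.k by omega)
        by_cases hk1 : p.k = 1
        · rw [hk1] at h0; omega
        · rw [Nat.mod_eq_of_lt (show 1 < p.k by omega)] at h0 ⊢
          rcases Nat.lt_or_ge (s.j % p.k + 1) p.k with h | h
          · rw [Nat.mod_eq_of_lt h]
          · have : s.j % p.k + 1 = p.k := by omega
            rw [this, Nat.mod_self] at h0; omega
      · intro y hy
        rcases List.mem_cons.1 hy with rfl | hy
        · exact deep_prop hη hγ hx.1
        · exact h3 y hy
  · rw [Inv, step_ys_neg hx, step_j_neg hx]; exact h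

lemma inv_run (hη : 0 ≤ p.η) (hγ : 0 ≤ p.γ1) (hk : 1 ≤ p.k) {s : SimSt M d}
    (h : Inv A v p s) (t : ℕ) : Inv A v p (p.run A v s t) := by
  induction t with
  | zero => exact h
  | succ t ih => exact inv_step hη hγ hk ih

/-- Within a period the exploratory list only grows. -/
lemma ys_mono (s : SimSt M d) {t t' : ℕ} (h : t ≤ t')
    (hp : (p.run A v s t).j / p.k = (p.run A v s t').j / p.k) (hk : 1 ≤ p.k) :
    ∀ y ∈ (p.run A v s t).ys, y ∈ (p.run A v s t').ys := by
  induction t', h using Nat.le_induction with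
  | base => exact fun y hy => hy
  | succ t' htt ih =>
    intro y hy
    have h1 : (p.run A v s t).j ≤ (p.run A v s t').j := run_mono s htt
    have h2 : (p.run A v s t').j ≤ (p.run A v s (t' + 1)).j := run_mono s (Nat.le_succ _)
    have h3 := Nat.div_le_div_right (c := p.k) h1
    have h4 := Nat.div_le_div_right (c := p.k) h2
    have h5 := ih (by omega) y hy
    rw [run]
    by_cases hx : p.expl A v (p.run A v s t')
    · rw [step_ys_pos hx]
      split_ifs with h0
      · exfalso
        rw [run, step_j_pos hx] at hp h4
        have := Nat.succ_div_of_dvd (Nat.dvd_of_mod_eq_zero h0)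
        omega
      · exact List.mem_cons_of_mem _ h5
    · rw [step_ys_neg hx]; exact h5

end SimP
end partD

open scoped RealInnerProductSpace

section partD2
variable {d : ℕ}
local notation "𝔼" => EuclideanSpace ℝ (Fin d)

namespace SimP
variable {M n : ℕ} 

/-- Span of the rows. -/
def spA (A : Fin n → EuclideanSpace ℝ (Fin d)) : Submodule ℝ (EuclideanSpace ℝ (Fin d)) :=
  Submodule.span ℝ (Set.range A)

/-- Subspace to which the next vector should be almost orthogonal. -/
noncomputable def Wsp (p : SimP M d) (A : Fin n → EuclideanSpace ℝ (Fin d))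
    (v : ℕ → EuclideanSpace ℝ (Fin d)) (s : SimSt M d) :
    Submodule ℝ (EuclideanSpace ℝ (Fin d)) :=
  spl (p.qry s :: s.ys) ⊔
    Submodule.span ℝ (Set.image (fun i => (spA A)ᗮ.starProjection (v i)) (Set.Iic s.j))

open Classical in
/-- The queries made so far. -/
noncomputable def Xs (p : SimP M d) (A : Fin n → EuclideanSpace ℝ (Fin d))
    (v : ℕ → EuclideanSpace ℝ (Fin d)) (t : ℕ) : Finset (EuclideanSpace ℝ (Fin d)) :=
  (Finset.range (t + 1)).image (fun s => p.qry (p.sim A v s))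

/-- The vectors `v` are a legitimate choice. -/
def Legit (p : SimP M d) (A : Fin n → EuclideanSpace ℝ (Fin d))
    (v : ℕ → EuclideanSpace ℝ (Fin d)) (δ κ : ℝ) (T N : ℕ) : Prop :=
  1 / 8 ≤ ‖(spA A)ᗮ.starProjection (v 0)‖ ∧
    ∀ t < T, p.expl A v (p.sim A v t) → (p.sim A v t).j < N →
      GoodV (spA A) (p.Wsp A v (p.sim A v t)) (p.Xs A v t) δ κ (v ((p.sim A v t).j + 1))

/-- Constraints on the parameters. -/
structure ParOk (p : SimP M d) (δ κ : ℝ) : Prop where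
  hη : 0 < p.η
  hη2 : p.η ≤ 1 / 2
  hδ : 0 ≤ δ
  hβ : 0 ≤ p.β
  hκ : 0 ≤ κ
  h1 : 4 * κ ≤ p.γ1
  h2 : 2 * δ + 2 * p.β ≤ p.γ2
  h3 : κ + δ + p.β ≤ p.γ1
  hk : 1 ≤ p.k

variable {p : SimP M d} {A : Fin n → EuclideanSpace ℝ (Fin d)} {v : ℕ → EuclideanSpace ℝ (Fin d)}
  {δ κ : ℝ} {T N : ℕ}

lemma ParOk.hγ1 (h : ParOk p δ κ) : 0 ≤ p.γ1 := by have := h.h1; have := h.hκ; linarith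

lemma ParOk.hγ2 (h : ParOk p δ κ) : 0 ≤ p.γ2 := by
  have := h.h2; have := h.hδ; have := h.hβ; linarith

lemma exists_trigger (s : SimSt M d) {t0 T i : ℕ} (h0 : (p.run A v s t0).j < i)
    (hT : i ≤ (p.run A v s T).j) :
    ∃ t, t0 ≤ t ∧ t < T ∧ p.expl A v (p.run A v s t) ∧ (p.run A v s t).j + 1 = i := by
  induction T with
  | zero =>
    have := run_mono (p := p) (A := A) (v := v) s (Nat.zero_le t0)
    omega
  | succ T ih =>
    by_cases h : i ≤ (p.run A v s T).j
    · obtain ⟨t, h1, h2, h3⟩ := ih h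
      exact ⟨t, h1, by omega, h3⟩
    · have hx : p.expl A v (p.run A v s T) := by
        by_contra hx
        rw [run, step_j_neg hx] at hT
        exact h hT
      rw [run, step_j_pos hx] at hT
      refine ⟨T, ?_, by omega, hx, by omega⟩
      by_contra hlt
      have h1 : T + 1 ≤ t0 := by omega
      have h2 := run_mono (p := p) (A := A) (v := v) s h1
      rw [run, step_j_pos hx] at h2
      omega

lemma ys_const (s : SimSt M d) {t t' : ℕ} (h : t ≤ t')
    (hj : (p.run A v s t).j = (p.run A v s t').j) :
    (p.run A v s t').ys = (p.run A v s t).ys := by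
  induction t', h using Nat.le_induction with
  | base => rfl
  | succ t' htt ih =>
    have h1 := run_mono (p := p) (A := A) (v := v) s htt
    have h2 : (p.run A v s t').j ≤ (p.run A v s (t' + 1)).j := run_mono s (Nat.le_succ t')
    have hx : ¬ p.expl A v (p.run A v s t') := by
      intro hx
      rw [run, step_j_pos hx] at hj
      omega
    rw [run, step_ys_neg hx]
    exact ih (by omega)

lemma spl_mono {l l' : List 𝔼} (h : ∀ y ∈ l, y ∈ l') : spl l ≤ spl l' :=
  Submodule.span_mono h

lemma inv_ini : Inv A v p (ini M d) := ⟨by simp [ini], trivial, by simp [ini]⟩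

lemma ys_zero (hp : ParOk p δ κ) (t : ℕ) (h : (p.sim A v t).j = 0) : (p.sim A v t).ys = [] := by
  have := (inv_run (p := p) (A := A) (v := v) hp.hη.le hp.hγ1 hp.hk inv_ini t).1
  change (p.sim A v t).ys.length = (p.sim A v t).j % p.k at this
  rw [h, Nat.zero_mod] at this
  exact List.length_eq_zero_iff.1 this

/-- The current vector is almost orthogonal to the current exploratory queries. -/
lemma cur_orth (hp : ParOk p δ κ) (hL : Legit p A v δ κ T N) {t : ℕ} (ht : t ≤ T)
    (hN : (p.sim A v t).j ≤ N) {u : 𝔼} (hu : u ∈ spl (p.sim A v t).ys) :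
    |⟪v (p.sim A v t).j, u⟫| ≤ δ * ‖u‖ := by
  rcases Nat.eq_zero_or_pos (p.sim A v t).j with h0 | h0
  · rw [ys_zero hp t h0] at hu
    have : u = 0 := by simpa [spl] using hu
    simp [this]
  · obtain ⟨t1, -, h1, h2, h3⟩ := exists_trigger (p := p) (A := A) (v := v) (ini M d) (t0 := 0)
      (show (p.run A v (ini M d) 0).j < (p.sim A v t).j from h0) (le_refl (p.sim A v t).j)
    have hg := hL.2 t1 (by omega) h2 (by change (p.run A v (ini M d) t1).j < N; omega)
    have e : (p.sim A v t1).j + 1 = (p.sim A v t).j := h3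
    rw [e] at hg
    refine hg.1 u ?_
    have hj : (p.run A v (ini M d) (t1 + 1)).j = (p.run A v (ini M d) t).j := by
      rw [run, step_j_pos h2]; exact h3
    have hys := ys_const (p := p) (A := A) (v := v) (ini M d) (by omega : t1 + 1 ≤ t) hj
    have hys' : (p.sim A v t).ys = (p.run A v (ini M d) (t1 + 1)).ys := hys
    rw [hys', run, step_ys_pos h2] at hu
    refine Submodule.mem_sup_left ?_
    split_ifs at hu
    · have : u = 0 := by simpa [spl] using hu
      rw [this]; exact Submodule.zero_mem _
    · exact hu

/-- Offsets at later indices. -/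
lemma off_succ_ge (hp : ParOk p δ κ) {j i : ℕ} (hji : j ≤ i) :
    ((j / p.k : ℕ) + 1) * p.γ1 ≤ p.off (i + 1) := by
  have h1 : (j / p.k : ℕ) ≤ ((i / p.k : ℕ)) := Nat.div_le_div_right hji
  have h2 : ((j / p.k : ℕ) : ℝ) ≤ ((i / p.k : ℕ) : ℝ) := by exact_mod_cast h1
  have h3 := mul_le_mul_of_nonneg_right h2 hp.hγ1
  have h4 : 0 ≤ ((i : ℝ) + 1) * p.γ2 := mul_nonneg (by positivity) hp.hγ2
  rw [off]; linarith

lemma off_diff_same (hp : ParOk p δ κ) {j i : ℕ} (hji : j ≤ i) :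
    p.off j + p.γ2 ≤ p.off (i + 1) := by
  have hji' : (j : ℝ) ≤ i := by exact_mod_cast hji
  have h4 := mul_le_mul_of_nonneg_right hji' hp.hγ2
  cases j with
  | zero =>
    have := off_succ_ge (p := p) hp (Nat.zero_le i)
    rw [off, off]
    have h5 : 0 ≤ (((i / p.k : ℕ) : ℝ) + 1) * p.γ1 := mul_nonneg (by positivity) hp.hγ1
    push_cast at h4
    linarith
  | succ j =>
    have h1 : (j / p.k : ℕ) ≤ ((i / p.k : ℕ)) := Nat.div_le_div_right (by omega)
    have h2 : ((j / p.k : ℕ) : ℝ) ≤ ((i / p.k : ℕ) : ℝ) := by exact_mod_cast h1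
    have h3 := mul_le_mul_of_nonneg_right h2 hp.hγ1
    rw [off, off]
    push_cast at h4
    linarith

lemma off_diff_next (hp : ParOk p δ κ) {j i : ℕ} (hji : j ≤ i) 
    (hper : j / p.k + 1 ≤ i / p.k) : p.off j + p.γ1 ≤ p.off (i + 1) := by
  have hji' : (j : ℝ) ≤ i := by exact_mod_cast hji
  have h4 := mul_le_mul_of_nonneg_right hji' hp.hγ2
  have hg := hp.hγ2
  cases j with
  | zero =>
    have := off_succ_ge (p := p) hp (Nat.zero_le i)
    simp only [Nat.zero_div, Nat.cast_zero] at this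
    rw [off]
    linarith
  | succ j =>
    have h0 : j / p.k ≤ (j + 1) / p.k := Nat.div_le_div_right (by omega)
    have h1 : (j / p.k : ℕ) + 1 ≤ ((i / p.k : ℕ)) := by omega
    have h2 : ((j / p.k : ℕ) : ℝ) + 1 ≤ ((i / p.k : ℕ) : ℝ) := by exact_mod_cast h1
    have h3 := mul_le_mul_of_nonneg_right h2 hp.hγ1
    rw [off, off]
    push_cast at h4
    linarith

lemma off_le (hp : ParOk p δ κ) {P j : ℕ} (hj : j ≤ p.k * P) (hNγ : (p.k * P : ℕ) * p.γ2 ≤ p.γ1) :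
    p.off j ≤ (P + 1) * p.γ1 := by
  have hg := hp.hγ1
  cases j with
  | zero => rw [off]; positivity
  | succ j =>
    have h1 : j / p.k < P := Nat.div_lt_of_lt_mul (by omega)
    have h2 : ((j / p.k : ℕ) : ℝ) + 1 ≤ P := by exact_mod_cast h1
    have h3 := mul_le_mul_of_nonneg_right h2 hg
    have h4 : ((j : ℝ) + 1) ≤ (p.k * P : ℕ) := by exact_mod_cast hj
    have h5 := mul_le_mul_of_nonneg_right h4 hp.hγ2
    rw [off]; linarith

/-- Deep, non exploratory queries have a lower bound on the current piece. -/
lemma caseC (hp : ParOk p δ κ) (hv : ∀ i, ‖v i‖ ≤ 1) (hL : Legit p A v δ κ T N) {t : ℕ} (ht : t ≤ T)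
    (hN : (p.sim A v t).j ≤ N) (hdeep : p.deep A v (p.sim A v t))
    (hx : ¬ p.expl A v (p.sim A v t)) :
    |⟪v (p.sim A v t).j, p.qry (p.sim A v t)⟫| ≤ δ + p.β := by
  set s := p.sim A v t
  set x := p.qry s
  have hb : ‖x - (spl s.ys).starProjection x‖ < p.β := by
    by_contra h
    exact hx ⟨hdeep, not_lt.1 h⟩
  have hx1 := (deep_prop hp.hη.le hp.hγ1 hdeep).1
  have h1 := cur_orth hp hL ht hN (Submodule.starProjection_apply_mem (spl s.ys) x)
  have h2 := Submodule.norm_starProjection_apply_le (spl s.ys) x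
  have h3 : ⟪v s.j, x⟫ = ⟪v s.j, (spl s.ys).starProjection x⟫ +
      ⟪v s.j, x - (spl s.ys).starProjection x⟫ := by
    rw [← inner_add_right]; congr 1; abel
  have h4 := abs_real_inner_le_norm (v s.j) (x - (spl s.ys).starProjection x)
  have h5 : ‖v s.j‖ * ‖x - (spl s.ys).starProjection x‖ ≤ 1 * p.β :=
    mul_le_mul (hv _) hb.le (norm_nonneg _) (by norm_num)
  have h6 : δ * ‖(spl s.ys).starProjection x‖ ≤ δ * 1 :=
    mul_le_mul_of_nonneg_left (h2.trans hx1) hp.hδ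
  rw [h3]
  refine (abs_add_le _ _).trans ?_
  linarith

lemma caseD (hp : ParOk p δ κ) (hL : Legit p A v δ κ T N) {t : ℕ} (ht : t < T)
    (hN : (p.sim A v t).j < N) (hx : p.expl A v (p.sim A v t)) :
    |⟪v ((p.sim A v t).j + 1), p.qry (p.sim A v t)⟫| ≤ δ := by
  have hx1 := (deep_prop hp.hη.le hp.hγ1 hx.1).1
  have h1 := (hL.2 t ht hx hN).1 (p.qry (p.sim A v t))
    (Submodule.mem_sup_left (Submodule.subset_span List.mem_cons_self))
  have h6 : δ * ‖p.qry (p.sim A v t)‖ ≤ δ * 1 := mul_le_mul_of_nonneg_left hx1 hp.hδ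
  linarith

lemma consistent (hp : ParOk p δ κ) (hv : ∀ i, ‖v i‖ ≤ 1) (hL : Legit p A v δ κ T N) {t i : ℕ}
    (ht : t < T) (hi : (p.sim A v (t + 1)).j < i) (hiT : i ≤ (p.sim A v T).j) (hiN : i ≤ N) :
    (p.W v i (p.qry (p.sim A v t))).1 ≤
      (p.R A v (p.sim A v (t + 1)).j (p.qry (p.sim A v t))).1 := by
  obtain ⟨t1, h1, h2, h3, h4⟩ := exists_trigger (ini M d) hi hiT
  set s := p.sim A v t with hs
  set x := p.qry s with hxdef
  have hs1 : p.sim A v (t + 1) = p.step A v s := rfl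
  change p.expl A v (p.sim A v t1) at h3
  change (p.sim A v t1).j + 1 = i at h4
  have hg := hL.2 t1 h2 h3 (by omega)
  rw [h4] at hg
  have hxX : x ∈ p.Xs A v t1 := by
    classical
    rw [Xs]
    exact Finset.mem_image.2 ⟨t, Finset.mem_range.2 (by omega), rfl⟩
  have hb := hg.2.1 x hxX
  have hjj : s.j ≤ (p.sim A v (t + 1)).j := j_le_step s
  have hη := hp.hη
  have hη2 := hp.hη2
  have hγ1 := hp.hγ1
  have hγ2 := hp.hγ2
  have hh1 := hp.h1
  have hh2 := hp.h2
  have hh3 := hp.h3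
  have hδ := hp.hδ
  have hβ := hp.hβ
  have hκ := hp.hκ
  rw [W_fst]
  obtain ⟨i', rfl⟩ : ∃ i', i = i' + 1 := ⟨i - 1, by omega⟩
  have h4' : (p.sim A v t1).j = i' := by omega
  by_cases hn : 2 < ‖x‖
  · refine le_trans ?_ (norm_le_R _ x)
    have h5 := abs_real_inner_le_norm (v (i' + 1)) x
    have h6 := le_abs_self ⟪v (i' + 1), x⟫
    have h7 : ‖v (i' + 1)‖ * ‖x‖ ≤ 1 * ‖x‖ := mul_le_mul_of_nonneg_right (hv _) (norm_nonneg _)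
    have h8 : 0 ≤ p.off (i' + 1) :=
      le_trans (by positivity) (off_succ_ge (p := p) hp (Nat.zero_le i'))
    have h9 : p.η * (⟪v (i' + 1), x⟫ - p.off (i' + 1)) ≤ p.η * ‖x‖ :=
      mul_le_mul_of_nonneg_left (by linarith) hη.le
    have h10 : p.η * ‖x‖ ≤ 1 / 2 * ‖x‖ := mul_le_mul_of_nonneg_right hη2 (norm_nonneg _)
    linarith
  push Not at hn
  by_cases hdeep : p.deep A v s
  swap
  · -- not deep
    have hx : ¬ p.expl A v s := fun h => hdeep h.1
    have hj : (p.sim A v (t + 1)).j = s.j := by rw [hs1, step_j_neg hx]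
    have h5 : p.thr s.j ≤ (p.R A v s.j x).1 := not_lt.1 hdeep
    rw [hj]
    refine le_trans ?_ h5
    rw [thr, ← mul_neg]
    refine mul_le_mul_of_nonneg_left ?_ hη.le
    have h6 := off_succ_ge (p := p) hp (show s.j ≤ i' by omega)
    have h7 := le_abs_self ⟪v (i' + 1), x⟫
    have h8 := mul_le_mul_of_nonneg_left hn hκ
    linarith
  have hx1 := (deep_prop hη.le hγ1 hdeep).1
  have hbκ : ⟪v (i' + 1), x⟫ ≤ κ := by
    have h7 := le_abs_self ⟪v (i' + 1), x⟫
    have h8 := mul_le_mul_of_nonneg_left hx1 hκ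
    linarith
  by_cases hx : p.expl A v s
  · -- exploratory
    have hj : (p.sim A v (t + 1)).j = s.j + 1 := by rw [hs1, step_j_pos hx]
    rw [hj] at hi ⊢
    have h5 := caseD hp hL ht (by change s.j < N; omega) hx
    refine le_trans ?_ (W_le_R (le_refl (s.j + 1)) x)
    refine mul_le_mul_of_nonneg_left ?_ hη.le
    have h6 := (abs_le.1 h5).1
    change -δ ≤ ⟪v (s.j + 1), x⟫ at h6
    by_cases hper : i' / p.k = s.j / p.k
    · have h7 : (s.j + 1) / p.k = i' / p.k := by
        have a1 : s.j / p.k ≤ (s.j + 1) / p.k := Nat.div_le_div_right (by omega)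
        have a2 : (s.j + 1) / p.k ≤ i' / p.k := Nat.div_le_div_right (by omega)
        omega
      have h8 : x ∈ (p.sim A v t1).ys := by
        refine ys_mono (p := p) (A := A) (v := v) (ini M d) h1 ?_ hp.hk x ?_
        · change (p.sim A v (t + 1)).j / p.k = (p.sim A v t1).j / p.k
          rw [hj, h4', h7]
        · change x ∈ (p.sim A v (t + 1)).ys
          rw [hs1, step_ys_pos hx]
          split_ifs with h0
          · exfalso
            have := Nat.succ_div_of_dvd (Nat.dvd_of_mod_eq_zero h0)
            omega
          · exact List.mem_cons_self
      have h9 := hg.1 x (Submodule.mem_sup_left (Submodule.subset_span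
        (List.mem_cons_of_mem _ h8)))
      have h10 := le_abs_self ⟪v (i' + 1), x⟫
      have h11 := mul_le_mul_of_nonneg_left hx1 hδ
      have h12 := off_diff_same (p := p) hp (show s.j + 1 ≤ i' by omega)
      linarith
    · have a2 : s.j / p.k ≤ i' / p.k := Nat.div_le_div_right (by omega)
      have h12 : p.off (s.j + 1) + p.γ1 ≤ p.off (i' + 1) := by
        have h2 : ((s.j / p.k : ℕ) : ℝ) + 1 ≤ ((i' / p.k : ℕ) : ℝ) := by
          exact_mod_cast (show s.j / p.k + 1 ≤ i' / p.k by omega)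
        have h3 := mul_le_mul_of_nonneg_right h2 hγ1
        have hji' : (s.j : ℝ) ≤ i' := by exact_mod_cast (show s.j ≤ i' by omega)
        have h4 := mul_le_mul_of_nonneg_right hji' hγ2
        rw [off, off]
        linarith
      linarith
  · have hj : (p.sim A v (t + 1)).j = s.j := by rw [hs1, step_j_neg hx]
    rw [hj] at hi ⊢
    have h5 := caseC hp hv hL ht.le (by change s.j ≤ N; omega) hdeep hx
    refine le_trans ?_ (W_le_R (le_refl s.j) x)
    refine mul_le_mul_of_nonneg_left ?_ hη.le
    have h6 := (abs_le.1 h5).1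
    change -(δ + p.β) ≤ ⟪v s.j, x⟫ at h6
    by_cases hper : i' / p.k = s.j / p.k
    · have h8 : ∀ y ∈ s.ys, y ∈ (p.sim A v t1).ys := by
        refine ys_mono (p := p) (A := A) (v := v) (ini M d) (show t ≤ t1 by omega) ?_ hp.hk
        change s.j / p.k = (p.sim A v t1).j / p.k
        rw [h4', hper]
      have hb' : ‖x - (spl s.ys).starProjection x‖ < p.β := by
        by_contra h
        exact hx ⟨hdeep, not_lt.1 h⟩
      have h9 := hg.1 ((spl s.ys).starProjection x) (Submodule.mem_sup_left
        (spl_mono (fun y hy => List.mem_cons_of_mem _ (h8 y hy))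
          (Submodule.starProjection_apply_mem _ _)))
      have h10 := Submodule.norm_starProjection_apply_le (spl s.ys) x
      have h11 : ⟪v (i' + 1), x⟫ = ⟪v (i' + 1), (spl s.ys).starProjection x⟫ +
          ⟪v (i' + 1), x - (spl s.ys).starProjection x⟫ := by
        rw [← inner_add_right]; congr 1; abel
      have h12 := real_inner_le_norm (v (i' + 1)) (x - (spl s.ys).starProjection x)
      have h13 : ‖v (i' + 1)‖ * ‖x - (spl s.ys).starProjection x‖ ≤ 1 * p.β :=
        mul_le_mul (hv _) hb'.le (norm_nonneg _) (by norm_num)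
      have h14 : δ * ‖(spl s.ys).starProjection x‖ ≤ δ * 1 :=
        mul_le_mul_of_nonneg_left (h10.trans hx1) hδ
      have h15 := le_abs_self ⟪v (i' + 1), (spl s.ys).starProjection x⟫
      have h16 := off_diff_same (p := p) hp (show s.j ≤ i' by omega)
      linarith
    · have a2 : s.j / p.k ≤ i' / p.k := Nat.div_le_div_right (by omega)
      have h16 := off_diff_next (p := p) hp (show s.j ≤ i' by omega) (by omega)
      linarith

/-- Lower bound on all observed values. -/
lemma value_ge (hp : ParOk p δ κ) (hv : ∀ i, ‖v i‖ ≤ 1) {P : ℕ} (hL : Legit p A v δ κ T (p.k * P))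
    (hNγ : (p.k * P : ℕ) * p.γ2 ≤ p.γ1) {t : ℕ}
    (ht : t < T) (hjN : (p.sim A v (t + 1)).j ≤ p.k * P) :
    -(p.η * ((P + 1) * p.γ1 + δ + p.β)) ≤
      (p.R A v (p.sim A v (t + 1)).j (p.qry (p.sim A v t))).1 := by
  set s := p.sim A v t with hs
  set x := p.qry s with hxdef
  have hs1 : p.sim A v (t + 1) = p.step A v s := rfl
  have hjj : s.j ≤ (p.sim A v (t + 1)).j := j_le_step s
  have hη := hp.hη
  have hγ1 := hp.hγ1
  have hδ := hp.hδ
  have hβ := hp.hβ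
  have hoff := off_le hp hjN hNγ
  rw [← mul_neg]
  by_cases hx : p.expl A v s
  · have hj : (p.sim A v (t + 1)).j = s.j + 1 := by rw [hs1, step_j_pos hx]
    rw [hj] at hoff hjN ⊢
    have h5 := caseD hp hL ht (by change s.j < _; omega) hx
    refine le_trans ?_ (W_le_R (le_refl (s.j + 1)) x)
    refine mul_le_mul_of_nonneg_left ?_ hη.le
    have h6 := (abs_le.1 h5).1
    change -δ ≤ ⟪v (s.j + 1), x⟫ at h6
    linarith
  have hj : (p.sim A v (t + 1)).j = s.j := by rw [hs1, step_j_neg hx]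
  rw [hj] at hoff hjN ⊢
  by_cases hdeep : p.deep A v s
  · have h5 := caseC hp hv hL ht.le hjN hdeep hx
    refine le_trans ?_ (W_le_R (le_refl s.j) x)
    refine mul_le_mul_of_nonneg_left ?_ hη.le
    have h6 := (abs_le.1 h5).1
    change -(δ + p.β) ≤ ⟪v s.j, x⟫ at h6
    linarith
  · have h5 : p.thr s.j ≤ (p.R A v s.j x).1 := not_lt.1 hdeep
    refine le_trans ?_ h5
    rw [thr, ← mul_neg]
    refine mul_le_mul_of_nonneg_left ?_ hη.le
    have h1 : s.j / p.k ≤ P := Nat.div_le_of_le_mul hjN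
    have h2 : ((s.j / p.k : ℕ) : ℝ) ≤ P := by exact_mod_cast h1
    have h3 := mul_le_mul_of_nonneg_right h2 hγ1
    linarith

/-- The real run on the final oracle coincides with the simulation. -/
lemma mem_eq (hp : ParOk p δ κ) (hv : ∀ i, ‖v i‖ ≤ 1) (hL : Legit p A v δ κ T N)
    (hJ : (p.sim A v T).j ≤ N) :
    ∀ t ≤ T, p.alg.mem (p.R A v (p.sim A v T).j) t = (p.sim A v t).mem := by
  intro t
  induction t with
  | zero => intro _; rfl
  | succ t ih =>
    intro ht
    have h1 := ih (by omega)
    have h2 : p.sim A v (t + 1) = p.step A v (p.sim A v t) := rfl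
    have h3 : p.R A v (p.sim A v T).j (p.qry (p.sim A v t)) =
        p.R A v (p.sim A v (t + 1)).j (p.qry (p.sim A v t)) := by
      have hm : (p.sim A v (t + 1)).j ≤ (p.sim A v T).j := run_mono _ ht
      apply pcs_stable (by omega)
      intro i hi hi'
      exact consistent hp hv hL (by omega) (by omega) (by omega) (by omega)
    rw [MemAlg.mem, h1]
    rw [h2, step_mem, ← h2, ← h3]
    rfl

end SimP
end partD2

open scoped RealInnerProductSpace

section partD3
variable {d : ℕ}
local notation "𝔼" => EuclideanSpace ℝ (Fin d)

namespace SimP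
variable {M n : ℕ}
variable {p : SimP M d} {A : Fin n → EuclideanSpace ℝ (Fin d)} {v : ℕ → EuclideanSpace ℝ (Fin d)}
  {δ κ : ℝ} {T N : ℕ}

lemma off_nonneg (hp : ParOk p δ κ) (i : ℕ) : 0 ≤ p.off i := by
  cases i with
  | zero => exact le_rfl
  | succ i =>
    have := hp.hγ1; have := hp.hγ2
    rw [off]; positivity

lemma proj_orth (hv : ∀ i, ‖v i‖ ≤ 1) (hL : Legit p A v δ κ T N) (hδ : 0 ≤ δ)
    (hJ : (p.sim A v T).j ≤ N) {i l : ℕ} (hil : i < l) (hl : l ≤ (p.sim A v T).j) :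
    |⟪(spA A)ᗮ.starProjection (v l), (spA A)ᗮ.starProjection (v i)⟫| ≤ δ := by
  obtain ⟨t1, -, h1, h2, h3⟩ := exists_trigger (p := p) (A := A) (v := v) (ini M d) (t0 := 0)
      (show (p.run A v (ini M d) 0).j < l from by change 0 < l; omega) hl
  have h3' : (p.sim A v t1).j + 1 = l := h3
  have hg := hL.2 t1 h1 h2 (by omega)
  rw [h3'] at hg
  have h4 := hg.1 ((spA A)ᗮ.starProjection (v i)) (Submodule.mem_sup_right
    (Submodule.subset_span ⟨i, by simp only [Set.mem_Iic]; omega, rfl⟩))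
  have h5 : ‖(spA A)ᗮ.starProjection (v i)‖ ≤ 1 :=
    (Submodule.norm_starProjection_apply_le _ _).trans (hv i)
  rw [Submodule.inner_starProjection_left_eq_right,
    Submodule.starProjection_eq_self_iff.2 (Submodule.starProjection_apply_mem _ _)]
  nlinarith

lemma proj_big (hL : Legit p A v δ κ T N)
    (hJ : (p.sim A v T).j ≤ N) {l : ℕ} (hl : l ≤ (p.sim A v T).j) :
    1 / 8 ≤ ‖(spA A)ᗮ.starProjection (v l)‖ := by
  rcases Nat.eq_zero_or_pos l with rfl | h0
  · exact hL.1
  obtain ⟨t1, -, h1, h2, h3⟩ := exists_trigger (p := p) (A := A) (v := v) (ini M d) (t0 := 0)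
      (show (p.run A v (ini M d) 0).j < l from by change 0 < l; omega) hl
  have h3' : (p.sim A v t1).j + 1 = l := h3
  have hg := hL.2 t1 h1 h2 (by omega)
  rw [h3'] at hg
  exact hg.2.2

/-- There is a point of the ball with very negative value. -/
lemma exists_low (hp : ParOk p δ κ) (hv : ∀ i, ‖v i‖ ≤ 1) (hL : Legit p A v δ κ T N)
    (hJ : (p.sim A v T).j ≤ N) (hδN : 128 * (N * δ) ≤ 1) :
    ∃ x : 𝔼, ‖x‖ ≤ 1 ∧ (p.R A v (p.sim A v T).j x).1 ≤ -(p.η / (400 * √(N + 1))) := by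
  set J := (p.sim A v T).j with hJd
  set u : ℕ → 𝔼 := fun i => (spA A)ᗮ.starProjection (v i) with hu
  have hu1 : ∀ i, ‖u i‖ ≤ 1 := fun i =>
    (Submodule.norm_starProjection_apply_le _ _).trans (hv i)
  have hδ := hp.hδ
  have hη := hp.hη
  have hη2 := hp.hη2
  have horth : ∀ i l, i ≤ J → l ≤ J → i ≠ l → |⟪u l, u i⟫| ≤ δ := by
    intro i l hi hl hne
    rcases Nat.lt_or_gt_of_ne hne with h | h
    · exact proj_orth hv hL hδ hJ h hl
    · rw [real_inner_comm]; exact proj_orth hv hL hδ hJ h hi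
  have hbig : ∀ l ≤ J, 1 / 8 ≤ ‖u l‖ := fun l hl => proj_big hL hJ hl
  have hvu : ∀ l i, ⟪v l, u i⟫ = ⟪u l, u i⟫ := by
    intro l i
    simp only [hu]
    rw [Submodule.inner_starProjection_left_eq_right,
      Submodule.starProjection_eq_self_iff.2 (Submodule.starProjection_apply_mem _ _)]
  have hAu : ∀ i l, ⟪A i, u l⟫ = 0 := by
    intro i l
    exact Submodule.inner_right_of_mem_orthogonal (K := spA A)
      (Submodule.subset_span ⟨i, rfl⟩) (Submodule.starProjection_apply_mem _ _)
  set S : 𝔼 := ∑ i ∈ Finset.range (J + 1), u i with hS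
  have hJN : (J : ℝ) ≤ N := by exact_mod_cast hJ
  have hJδ : (J : ℝ) * δ ≤ 1 / 128 := by nlinarith
  have hsum : ∀ l ≤ J, |∑ i ∈ (Finset.range (J + 1)).erase l, ⟪u l, u i⟫| ≤ J * δ := by
    intro l hl
    refine (Finset.abs_sum_le_sum_abs _ _).trans ?_
    have : ∑ i ∈ (Finset.range (J + 1)).erase l, |⟪u l, u i⟫| ≤
        ∑ i ∈ (Finset.range (J + 1)).erase l, δ := by
      refine Finset.sum_le_sum fun i hi => ?_
      rw [Finset.mem_erase, Finset.mem_range] at hi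
      exact horth i l (by omega) hl hi.1
    refine this.trans ?_
    rw [Finset.sum_const, Finset.card_erase_of_mem (by simp; omega), Finset.card_range]
    simp
  have hinner : ∀ l ≤ J, ⟪u l, S⟫ = ‖u l‖ ^ 2 +
      ∑ i ∈ (Finset.range (J + 1)).erase l, ⟪u l, u i⟫ := by
    intro l hl
    rw [hS, inner_sum, ← Finset.add_sum_erase _ _ (show l ∈ Finset.range (J + 1) by simp; omega),
      real_inner_self_eq_norm_sq]
  have hlow : ∀ l ≤ J, 1 / 128 ≤ ⟪v l, S⟫ := by
    intro l hl
    have e : ⟪v l, S⟫ = ⟪u l, S⟫ := by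
      rw [hS, inner_sum, inner_sum]; exact Finset.sum_congr rfl fun i _ => hvu l i
    rw [e, hinner l hl]
    have h1 := (abs_le.1 (hsum l hl)).1
    have h2 := hbig l hl
    nlinarith
  have hSn : ‖S‖ ^ 2 ≤ 2 * (N + 1) := by
    rw [← real_inner_self_eq_norm_sq]
    have : ⟪S, S⟫ = ∑ l ∈ Finset.range (J + 1), ⟪u l, S⟫ := by
      conv_lhs => rw [hS, sum_inner]
    rw [this]
    have : ∑ l ∈ Finset.range (J + 1), ⟪u l, S⟫ ≤ ∑ l ∈ Finset.range (J + 1), (2 : ℝ) := by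
      refine Finset.sum_le_sum fun l hl => ?_
      rw [Finset.mem_range] at hl
      rw [hinner l (by omega)]
      have h1 := (abs_le.1 (hsum l (by omega))).2
      have h2 := hu1 l
      have h3 := norm_nonneg (u l)
      nlinarith
    refine this.trans ?_
    rw [Finset.sum_const, Finset.card_range]
    push_cast [nsmul_eq_mul]
    linarith
  set r := √((N : ℝ) + 1) with hr
  have hr2 : r ^ 2 = N + 1 := Real.sq_sqrt (by positivity)
  have hr1 : 1 ≤ r := by
    rw [hr, Real.one_le_sqrt]; have : (0 : ℝ) ≤ N := by positivity
    linarith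
  have hSr : ‖S‖ ≤ 1.5 * r := by
    apply abs_le_of_sq_le_sq' _ (by positivity) |>.2
    nlinarith
  refine ⟨-((1 / (3 * r)) • S), ?_, ?_⟩
  · rw [norm_neg, norm_smul, Real.norm_of_nonneg (by positivity), one_div_mul_eq_div,
      div_le_one (by positivity)]
    nlinarith
  · have hneg : p.η / (400 * r) ≤ p.η := by
      apply div_le_self hη.le; linarith
    apply pcs_le
    · apply rowsO_le
      · rw [norm_neg, norm_smul, Real.norm_of_nonneg (by positivity), one_div_mul_eq_div]
        have : ‖S‖ / (3 * r) ≤ 1 / 2 := by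
          rw [div_le_iff₀ (by positivity)]; linarith
        linarith
      · intro i
        have : ⟪A i, -((1 / (3 * r)) • S)⟫ = 0 := by
          rw [inner_neg_right, real_inner_smul_right, hS, inner_sum,
            Finset.sum_eq_zero (fun l _ => hAu i l)]
          simp
        rw [this]; simp; linarith
    · intro l hl
      rw [W_fst, inner_neg_right, real_inner_smul_right]
      have h1 := hlow l (by omega)
      have h2 := off_nonneg hp l
      have h3 : 1 / (400 * r) ≤ 1 / (3 * r) * ⟪v l, S⟫ := by
        have : 1 / (400 * r) ≤ 1 / (3 * r) * (1 / 128) := by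
          rw [one_div_mul_one_div]
          exact one_div_le_one_div_of_le (by positivity) (by linarith)
        refine this.trans (mul_le_mul_of_nonneg_left h1 (by positivity))
      have h4 : p.η / (400 * r) = p.η * (1 / (400 * r)) := by ring
      rw [h4, ← mul_neg p.η (1 / (400 * r))]
      apply mul_le_mul_of_nonneg_left _ hη.le
      linarith

lemma nice_R (hp : ParOk p δ κ) (hv : ∀ i, ‖v i‖ ≤ 1) (hA : ∀ i, ‖A i‖ ≤ 1) (j : ℕ) :
    NiceO (p.R A v j) := by
  apply nice_pcs (nice_rowsO _ hA)
  intro i _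
  apply nice_aff
  rw [norm_smul, Real.norm_of_nonneg hp.hη.le]
  have := hv i; have := norm_nonneg (v i); have := hp.hη; have := hp.hη2
  nlinarith

/-- A legitimate run of a successful algorithm must explore `N` times. -/
lemma reaches (hp : ParOk p δ κ) (hv : ∀ i, ‖v i‖ ≤ 1) (hA : ∀ i, ‖A i‖ ≤ 1) {P : ℕ}
    (hL : Legit p A v δ κ T (p.k * P)) (hT : 1 ≤ T) {ε : ℝ}
    (hmin : MinimizesConvex d p.alg T ε)
    (hNγ : (p.k * P : ℕ) * p.γ2 ≤ p.γ1) (hδN : 128 * ((p.k * P : ℕ) * δ) ≤ 1)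
    (hfin : p.η * ((P + 1) * p.γ1 + δ + p.β) + ε < p.η / (400 * √((p.k * P : ℕ) + 1))) :
    p.k * P ≤ (p.sim A v T).j := by
  by_contra hlt
  push Not at hlt
  obtain ⟨x, hx1, hx2⟩ := exists_low hp hv hL hlt.le hδN
  have h1 := hmin.nice (nice_R hp hv hA (p.sim A v T).j) hx1
  obtain ⟨t, rfl⟩ : ∃ t, T = t + 1 := ⟨T - 1, by omega⟩
  have h2 := value_ge hp hv hL hNγ (Nat.lt_succ_self t) hlt.le
  have h3 : p.alg.output (p.R A v (p.sim A v (t + 1)).j) (t + 1) = p.qry (p.sim A v t) := by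
    rw [MemAlg.output, Nat.add_sub_cancel, mem_eq hp hv hL hlt.le t (by omega)]
    rfl
  rw [h3] at h1
  linarith

end SimP
end partD3

open scoped RealInnerProductSpace

section partE
variable {d : ℕ}
local notation "𝔼" => EuclideanSpace ℝ (Fin d)

open Classical in
/-- Counting functions whose coordinates outside `I` are constrained by those in `I`. -/
lemma count_constrained {G : Type} [Fintype G] {n : ℕ} (I : Finset (Fin n))
    (F : (Fin n → G) → Finset G) (hF : ∀ a a', (∀ i ∈ I, a i = a' i) → F a = F a')
    (c : ℕ) (hc : ∀ a, (F a).card ≤ c) :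
    (Finset.univ.filter fun a : Fin n → G => ∀ i ∉ I, a i ∈ F a).card ≤
      c ^ (n - I.card) * Fintype.card G ^ I.card := by
  set S := Finset.univ.filter fun a : Fin n → G => ∀ i ∉ I, a i ∈ F a with hS
  have h := Finset.card_le_mul_card_image (f := fun (a : Fin n → G) (i : I) => a i) S
    (c ^ (n - I.card)) ?_
  · refine h.trans (Nat.mul_le_mul_left _ ?_)
    refine (Finset.card_le_univ _).trans ?_
    simp
  · intro b hb
    obtain ⟨a0, -, rfl⟩ := Finset.mem_image.1 hb
    have hsub : S.filter (fun x => (fun i : I => x i) = fun i : I => a0 i) ⊆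
        Fintype.piFinset (fun i => if i ∈ I then {a0 i} else F a0) := by
      intro a ha
      rw [Finset.mem_filter, hS, Finset.mem_filter] at ha
      have h1 : ∀ i ∈ I, a i = a0 i := fun i hi => congrFun ha.2 ⟨i, hi⟩
      rw [Fintype.mem_piFinset]
      intro i
      split_ifs with hi
      · simp [h1 i hi]
      · rw [← hF a a0 h1]; exact ha.1.2 i hi
    refine (Finset.card_le_card hsub).trans ?_
    rw [Fintype.card_piFinset]
    have : ∀ i, (if i ∈ I then ({a0 i} : Finset G) else F a0).card ≤ if i ∈ I then 1 else c := by
      intro i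
      split_ifs
      · simp
      · exact hc a0
    refine (Finset.prod_le_prod' fun i _ => this i).trans ?_
    rw [Finset.prod_ite]
    simp only [Finset.prod_const_one, one_mul, Finset.prod_const]
    have e : (Finset.univ.filter fun i => i ∉ I) = Iᶜ := by ext; simp
    rw [e, Finset.card_compl, Fintype.card_fin]

namespace SimP
variable {M n : ℕ} (p : SimP M d)

/-- Response encoded by a symbol. -/
noncomputable def resp {N : ℕ} (A : Fin n → EuclideanSpace ℝ (Fin d))
    (v : ℕ → EuclideanSpace ℝ (Fin d)) :
    Option (Fin n ⊕ Fin (N + 1)) → EuclideanSpace ℝ (Fin d) → ℝ × EuclideanSpace ℝ (Fin d)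
  | none => hball
  | some (Sum.inl i) => rowO p.η (A i)
  | some (Sum.inr i) => p.W v i

/-- Decoding of a run from symbols. -/
noncomputable def dec {N m : ℕ} (A : Fin n → EuclideanSpace ℝ (Fin d))
    (v : ℕ → EuclideanSpace ℝ (Fin d)) (s : SimSt M d)
    (σ : Fin m → Bool × Option (Fin n ⊕ Fin (N + 1))) : ℕ → SimSt M d
  | 0 => s
  | t + 1 => if h : t < m then
      p.upd (dec A v s σ t) (σ ⟨t, h⟩).1 (p.resp A v (σ ⟨t, h⟩).2 (p.qry (dec A v s σ t)))
    else dec A v s σ t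

variable {p} {A : Fin n → EuclideanSpace ℝ (Fin d)} {v : ℕ → EuclideanSpace ℝ (Fin d)}

lemma R_resp {N j : ℕ} (hj : j ≤ N) (x : 𝔼) :
    ∃ o : Option (Fin n ⊕ Fin (N + 1)), p.R A v j x = p.resp A v o x := by
  rcases pcs_cases (rowsO p.η A) (p.W v) (j + 1) x with h | ⟨i, hi, h⟩
  · rcases rowsO_cases p.η A x with h' | ⟨i, h'⟩
    · exact ⟨none, h.trans h'⟩
    · exact ⟨some (Sum.inl i), h.trans h'⟩
  · exact ⟨some (Sum.inr ⟨i, by omega⟩), h⟩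

lemma step_resp {N : ℕ} (s : SimSt M d) (hj : (p.step A v s).j ≤ N) :
    ∃ o : Bool × Option (Fin n ⊕ Fin (N + 1)),
      p.step A v s = p.upd s o.1 (p.resp A v o.2 (p.qry s)) := by
  by_cases hx : p.expl A v s
  · rw [step_j_pos hx] at hj
    obtain ⟨o, ho⟩ := R_resp (p := p) (A := A) (v := v) hj (p.qry s)
    exact ⟨(true, o), by rw [step_pos hx, ho]⟩
  · rw [step_j_neg hx] at hj
    obtain ⟨o, ho⟩ := R_resp (p := p) (A := A) (v := v) hj (p.qry s)
    exact ⟨(false, o), by rw [step_neg hx, ho]⟩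

open Classical in
lemma exists_dec {N m : ℕ} (s : SimSt M d) {t0 : ℕ} (ht0 : t0 ≤ m)
    (hj : (p.run A v s t0).j ≤ N) :
    ∃ σ : Fin m → Bool × Option (Fin n ⊕ Fin (N + 1)), p.dec A v s σ t0 = p.run A v s t0 := by
  have h1 : ∀ t : ℕ, ∃ o : Bool × Option (Fin n ⊕ Fin (N + 1)), t < t0 →
      p.step A v (p.run A v s t) =
        p.upd (p.run A v s t) o.1 (p.resp A v o.2 (p.qry (p.run A v s t))) := by
    intro t
    by_cases ht : t < t0
    · obtain ⟨o, ho⟩ := step_resp (p := p) (A := A) (v := v) (N := N) (p.run A v s t)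
        (le_trans (run_mono (p := p) (A := A) (v := v) s (show t + 1 ≤ t0 by omega)) hj)
      exact ⟨o, fun _ => ho⟩
    · exact ⟨(true, none), fun h => absurd h ht⟩
  choose o ho using h1
  refine ⟨fun t => o t, ?_⟩
  have : ∀ t ≤ t0, p.dec A v s (fun t : Fin m => o t) t = p.run A v s t := by
    intro t
    induction t with
    | zero => intro _; rfl
    | succ t ih =>
      intro ht
      rw [dec, dif_pos (by omega), ih (by omega), run, ho t (by omega)]
  exact this t0 le_rfl

open Classical in
/-- Rows revealed by the symbols. -/
noncomputable def revealed {N m : ℕ} (σ : Fin m → Bool × Option (Fin n ⊕ Fin (N + 1))) :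
    Finset (Fin n) :=
  Finset.univ.biUnion fun t => match (σ t).2 with
    | some (Sum.inl i) => {i}
    | _ => ∅

lemma card_revealed {N m : ℕ} (σ : Fin m → Bool × Option (Fin n ⊕ Fin (N + 1))) :
    (revealed σ).card ≤ m := by
  classical
  refine Finset.card_biUnion_le.trans ?_
  refine (Finset.sum_le_sum (g := fun _ => 1) fun t _ => ?_).trans (by simp)
  split <;> simp

lemma mem_revealed {N m : ℕ} {σ : Fin m → Bool × Option (Fin n ⊕ Fin (N + 1))} {t : Fin m}
    {i : Fin n} (h : (σ t).2 = some (Sum.inl i)) : i ∈ revealed σ := by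
  classical
  rw [revealed, Finset.mem_biUnion]
  exact ⟨t, Finset.mem_univ _, by rw [h]; simp⟩

lemma dec_congr {N m : ℕ} {A' : Fin n → 𝔼}
    (σ : Fin m → Bool × Option (Fin n ⊕ Fin (N + 1)))
    (h : ∀ i ∈ revealed σ, A i = A' i) (s : SimSt M d) (t : ℕ) :
    p.dec A v s σ t = p.dec A' v s σ t := by
  induction t with
  | zero => rfl
  | succ t ih =>
    rw [dec, dec, ih]
    split_ifs with ht
    · congr 1
      rcases hσ : (σ ⟨t, ht⟩).2 with _ | (i | i)
      · rfl
      · rw [resp, resp, h i (mem_revealed hσ)]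
      · rfl
    · rfl

/-- The exploratory list at the decoded state. -/
def elist (p : SimP M d) (s : SimSt M d) : List (EuclideanSpace ℝ (Fin d)) := p.qry s :: s.ys

/-- The list is a robustly independent family of the right length. -/
def GoodL (p : SimP M d) (l : List (EuclideanSpace ℝ (Fin d))) : Prop :=
  l.length = p.k ∧ Rob p.β l ∧ ∀ y ∈ l, ‖y‖ ≤ 1

/-- The event that many almost orthogonal vectors to the rows are found quickly. -/
def BadE {N m : ℕ} (p : SimP M d) (A : Fin n → EuclideanSpace ℝ (Fin d))
    (v : ℕ → EuclideanSpace ℝ (Fin d)) (s : SimSt M d)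
    (σ : Fin m → Bool × Option (Fin n ⊕ Fin (N + 1))) (t : ℕ) : Prop :=
  p.GoodL (p.elist (p.dec A v s σ t)) ∧
    ∀ i, ∀ y ∈ p.elist (p.dec A v s σ t), |⟪A i, y⟫| ≤ p.η

open Classical in
lemma count_bad_aux {G : Type} [Fintype G] (gf : G → EuclideanSpace ℝ (Fin d)) {N m : ℕ}
    (v : ℕ → EuclideanSpace ℝ (Fin d)) (s : SimSt M d)
    (σ : Fin m → Bool × Option (Fin n ⊕ Fin (N + 1))) (t : ℕ)
    (hcnt : ∀ l, p.GoodL l → ((Finset.univ.filter fun g => ∀ y ∈ l, |⟪gf g, y⟫| ≤ p.η).card : ℝ) ≤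
      Real.exp (-(p.k : ℝ)) * (Fintype.card G : ℝ)) (hmn : m ≤ n) :
    ((Finset.univ.filter fun a : Fin n → G =>
      p.BadE (fun i => gf (a i)) v s σ t).card : ℝ) ≤
      Real.exp (-(p.k * (n - m) : ℝ)) * (Fintype.card G : ℝ) ^ n := by
  set I := revealed σ
  let l : (Fin n → G) → List 𝔼 := fun a => p.elist (p.dec (fun i => gf (a i)) v s σ t)
  let F : (Fin n → G) → Finset G := fun a =>
    if p.GoodL (l a) then Finset.univ.filter fun g => ∀ y ∈ l a, |⟪gf g, y⟫| ≤ p.η else ∅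
  have hl : ∀ a a', (∀ i ∈ I, a i = a' i) → l a = l a' := by
    intro a a' h
    simp only [l]
    rw [dec_congr σ (A' := fun i => gf (a' i)) (fun i hi => by rw [h i hi])]
  have hF : ∀ a a', (∀ i ∈ I, a i = a' i) → F a = F a' := by
    intro a a' h
    simp only [F, hl a a' h]
  set g : ℝ := (Fintype.card G : ℝ) with hg
  have hg0 : 0 ≤ g := by positivity
  have hFc : ∀ a, ((F a).card : ℝ) ≤ Real.exp (-(p.k : ℝ)) * g := by
    intro a
    simp only [F]
    split_ifs with hgood
    · exact hcnt (l a) hgood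
    · simp; positivity
  have h1 := count_constrained I F hF ⌊Real.exp (-(p.k : ℝ)) * g⌋₊
    (fun a => Nat.le_floor (hFc a))
  have hsub : (Finset.univ.filter fun a : Fin n → G =>
      p.BadE (fun i => gf (a i)) v s σ t) ⊆
      Finset.univ.filter fun a : Fin n → G => ∀ i ∉ I, a i ∈ F a := by
    intro a ha
    rw [Finset.mem_filter] at ha ⊢
    refine ⟨Finset.mem_univ _, fun i _ => ?_⟩
    have hgood : p.GoodL (l a) := ha.2.1
    simp only [F, if_pos hgood, Finset.mem_filter, Finset.mem_univ, true_and]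
    exact ha.2.2 i
  have h2 := Nat.cast_le (α := ℝ).2 ((Finset.card_le_card hsub).trans h1)
  refine h2.trans ?_
  have hI : I.card ≤ m := card_revealed σ
  rw [Nat.cast_mul, Nat.cast_pow, Nat.cast_pow, ← hg]
  calc (⌊Real.exp (-(p.k : ℝ)) * g⌋₊ : ℝ) ^ (n - I.card) * g ^ I.card
      ≤ (Real.exp (-(p.k : ℝ)) * g) ^ (n - I.card) * g ^ I.card := by
        gcongr; exact Nat.floor_le (by positivity)
    _ = Real.exp (-(p.k : ℝ)) ^ (n - I.card) * g ^ n := by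
        rw [mul_pow, mul_assoc, ← pow_add, Nat.sub_add_cancel (by omega)]
    _ ≤ Real.exp (-(p.k * (n - m) : ℝ)) * g ^ n := by
        refine mul_le_mul_of_nonneg_right ?_ (by positivity)
        rw [← Real.exp_nat_mul, Real.exp_le_exp, Nat.cast_sub (by omega)]
        have : (I.card : ℝ) ≤ m := by exact_mod_cast hI
        have : (0 : ℝ) ≤ p.k := by positivity
        nlinarith

open Classical in
lemma count_gv {L0 : ℕ}
    (hd : 1 ≤ d) (hη : 0 < p.η) (hβ : 0 < p.β) (hL : 4 * d ≤ L0) (hLη : 1 < p.η * L0)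
    (hs : 7 * (3 * p.η / p.β) * (d * √d) ≤ 1 / 2) (hk : 1 ≤ p.k) (l : List 𝔼)
    (hgood : p.GoodL l) :
    ((Finset.univ.filter fun g : Fin d → Fin (2 * L0 + 1) =>
      ∀ y ∈ l, |⟪gv L0 g, y⟫| ≤ p.η).card : ℝ) ≤
      Real.exp (-(p.k : ℝ)) * (Fintype.card (Fin d → Fin (2 * L0 + 1)) : ℝ) := by
  have h := anticonc hd hη hβ hL hLη hs l hgood.2.1 hgood.2.2 (by rw [hgood.1]; exact hk)
  rw [hgood.1] at h
  have e : (Fintype.card (Fin d → Fin (2 * L0 + 1)) : ℝ) = ((2 * L0 + 1 : ℕ) : ℝ) ^ d := by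
    rw [Fintype.card_fun, Fintype.card_fin, Fintype.card_fin, Nat.cast_pow]
  rw [e]
  convert h

lemma exists_time (s : SimSt M d) {t0 T i : ℕ} (h0 : (p.run A v s t0).j ≤ i)
    (hT : i ≤ (p.run A v s T).j) : ∃ t, t0 ≤ t ∧ (p.run A v s t).j = i := by
  rcases Nat.lt_or_ge (p.run A v s t0).j i with h | h
  · obtain ⟨t, h1, h2, h3, h4⟩ := exists_trigger s h hT
    exact ⟨t + 1, by omega, by rw [run, step_j_pos h3, h4]⟩
  · exact ⟨t0, le_rfl, by omega⟩

/-- If the simulation reaches `k * P` quickly, then some period is short. -/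
lemma short_period {P m : ℕ} (hk : 1 ≤ p.k) (hP : 1 ≤ P)
    (hr : p.k * P ≤ (p.sim A v (P * m)).j) :
    ∃ q < P, ∃ t, (p.sim A v t).j = q * p.k ∧ (q + 1) * p.k ≤ (p.sim A v (t + m)).j := by
  by_contra hcon
  push Not at hcon
  have key : ∀ q ≤ P, (p.sim A v (q * m)).j ≤ q * p.k ∧
      (1 ≤ q → (p.sim A v (q * m)).j < q * p.k) := by
    intro q
    induction q with
    | zero => intro _; simp [sim, run, ini]
    | succ q ih =>
      intro hq
      have h1 := (ih (by omega)).1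
      have h2 : (p.sim A v ((q + 1) * m)).j < (q + 1) * p.k := by
        by_contra h
        push Not at h
        have h3 : q * p.k ≤ (p.sim A v ((q + 1) * m)).j := by nlinarith
        obtain ⟨t, ht1, ht2⟩ := exists_time (ini M d) h1 h3
        have h4 := hcon q (by omega) t ht2
        have h5 : (p.sim A v ((q + 1) * m)).j ≤ (p.sim A v (t + m)).j :=
          run_mono _ (by rw [add_mul, one_mul]; omega)
        omega
      exact ⟨h2.le, fun _ => h2⟩
  have := (key P le_rfl).2 hP
  rw [mul_comm] at hr
  omega

lemma exists_bad {P m : ℕ} (hη : 0 ≤ p.η) (hγ : 0 ≤ p.γ1) (hk : 1 ≤ p.k) (hP : 1 ≤ P)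
    (hr : p.k * P ≤ (p.sim A v (P * m)).j) :
    ∃ (q : Fin P) (μ : Fin M → Bool) (t : Fin m)
      (σ : Fin m → Bool × Option (Fin n ⊕ Fin (p.k * P + 1))),
      p.BadE A v ⟨μ, q * p.k, []⟩ σ t := by
  obtain ⟨q, hq, a, ha1, ha2⟩ := short_period hk hP hr
  have hinv := inv_run (p := p) (A := A) (v := v) hη hγ hk (inv_ini) a
  change Inv A v p (p.sim A v a) at hinv
  have hs0 : p.sim A v a = ⟨(p.sim A v a).mem, q * p.k, []⟩ := by
    have h1 := hinv.1
    rw [ha1, Nat.mul_mod_left] at h1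
    have h2 := List.length_eq_zero_iff.1 h1
    rw [← h2, ← ha1]
  set s0 : SimSt M d := ⟨(p.sim A v a).mem, q * p.k, []⟩ with hs0d
  have e : p.sim A v (a + m) = p.run A v s0 m := by
    rw [sim, run_add]; change p.run A v (p.sim A v a) m = _; rw [hs0]
  rw [e] at ha2
  obtain ⟨t, -, ht, hx, hj⟩ := exists_trigger (t0 := 0) s0
    (show (p.run A v s0 0).j < (q + 1) * p.k by
      change q * p.k < _; rw [add_mul, one_mul]; omega) ha2
  have hle : (q + 1) * p.k ≤ P * p.k := Nat.mul_le_mul_right _ (by omega)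
  obtain ⟨σ, hσ⟩ := exists_dec (p := p) (A := A) (v := v) (N := p.k * P) (m := m) s0 ht.le
    (by rw [mul_comm]; omega)
  refine ⟨⟨q, hq⟩, (p.sim A v a).mem, ⟨t, ht⟩, σ, ?_⟩
  have hinv2 := inv_run (p := p) (A := A) (v := v) hη hγ hk (hs0 ▸ hinv) t
  have hd := deep_prop hη hγ hx.1
  change p.GoodL (p.elist (p.dec A v s0 σ t)) ∧
    ∀ i, ∀ y ∈ p.elist (p.dec A v s0 σ t), |⟪A i, y⟫| ≤ p.η
  rw [hσ, elist]
  refine ⟨⟨?_, ⟨hinv2.2.1, hx.2⟩, ?_⟩, ?_⟩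
  · rw [List.length_cons, hinv2.1]
    have : (p.run A v s0 t).j = (p.k - 1) + q * p.k := by
      rw [add_mul, one_mul] at hj; omega
    rw [this, Nat.add_mul_mod_self_right, Nat.mod_eq_of_lt (by omega)]
    omega
  · intro y hy
    rcases List.mem_cons.1 hy with rfl | hy
    · exact hd.1
    · exact (hinv2.2.2 y hy).1
  · intro i y hy
    rcases List.mem_cons.1 hy with rfl | hy
    · exact hd.2 i
    · exact (hinv2.2.2 y hy).2 i

end SimP
end partE

open scoped RealInnerProductSpace

section partF
variable {d : ℕ}
local notation "𝔼" => EuclideanSpace ℝ (Fin d)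

open Classical in
/-- Counting branches of a tree. -/
lemma tree_count {U : Type} [Fintype U] (Good : (i : ℕ) → (Fin i → U) → U → Prop) {c : ℝ}
    (hc : 0 ≤ c) (N : ℕ)
    (h : ∀ i < N, ∀ w, c ≤ ((Finset.univ.filter fun u => Good i w u).card : ℝ)) :
    c ^ N ≤ ((Finset.univ.filter fun w : Fin N → U =>
      ∀ i : Fin N, Good i (fun j : Fin i => w (Fin.castLE i.2.le j)) (w i)).card : ℝ) := by
  induction N with
  | zero => simp
  | succ N ih =>
    have ih' := ih (fun i hi => h i (by omega))
    set S := Finset.univ.filter fun w : Fin N → U =>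
      ∀ i : Fin N, Good i (fun j : Fin i => w (Fin.castLE i.2.le j)) (w i) with hS
    set S' := Finset.univ.filter fun w : Fin (N + 1) → U =>
      ∀ i : Fin (N + 1), Good i (fun j : Fin i => w (Fin.castLE i.2.le j)) (w i) with hS'
    have hsub : (S.sigma (fun w => Finset.univ.filter fun u => Good N w u)).card ≤ S'.card := by
      refine Finset.card_le_card_of_injOn
        (fun x => (Fin.snoc (α := fun _ => U) x.1 x.2 : Fin (N + 1) → U)) ?_ ?_
      · rintro ⟨w, u⟩ hx
        simp only [Finset.coe_sigma, Set.mem_sigma_iff, Finset.mem_coe] at hx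
        obtain ⟨hw, hu⟩ := hx
        rw [hS, Finset.mem_filter] at hw
        rw [Finset.mem_filter] at hu
        simp only [hS', Finset.coe_filter, Finset.mem_univ, true_and, Set.mem_ofPred_eq]
        intro i
        refine Fin.lastCases ?_ (fun i => ?_) i
        · rw [Fin.snoc_last]
          have e : (fun j : Fin N => (Fin.snoc (α := fun _ => U) w u : Fin (N + 1) → U)
              (Fin.castLE (Fin.last N).2.le j)) = w := ?_
          · change Good N (fun j : Fin N => (Fin.snoc (α := fun _ => U) w u : Fin (N + 1) → U)
              (Fin.castLE (Fin.last N).2.le j)) u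
            rw [e]; exact hu.2
          funext j
          have : (Fin.castLE (Fin.last N).2.le j : Fin (N + 1)) = Fin.castSucc j := by ext; rfl
          rw [this, Fin.snoc_castSucc]
        · rw [Fin.snoc_castSucc]
          have e : (fun j : Fin i => (Fin.snoc (α := fun _ => U) w u : Fin (N + 1) → U)
              (Fin.castLE (Fin.castSucc i).2.le j)) = fun j : Fin i => w (Fin.castLE i.2.le j) := ?_
          · change Good i (fun j : Fin i => (Fin.snoc (α := fun _ => U) w u : Fin (N + 1) → U)
              (Fin.castLE (Fin.castSucc i).2.le j)) (w i)
            rw [e]; exact hw.2 i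
          funext j
          have : (Fin.castLE (Fin.castSucc i).2.le j : Fin (N + 1)) =
            Fin.castSucc (Fin.castLE i.2.le j) := by ext; rfl
          rw [this, Fin.snoc_castSucc]
      · rintro ⟨w, u⟩ _ ⟨w', u'⟩ _ hx
        have h1 := Fin.snoc_injective2 hx
        simp only [Sigma.mk.injEq]
        exact ⟨h1.1, heq_of_eq h1.2⟩
    have h2 : (S.card : ℝ) * c ≤ (S'.card : ℝ) := by
      rw [Finset.card_sigma] at hsub
      have h3 : ((∑ w ∈ S, (Finset.univ.filter fun u => Good N w u).card : ℕ) : ℝ) ≤ S'.card := by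
        exact_mod_cast hsub
      refine le_trans ?_ h3
      push_cast
      rw [← nsmul_eq_mul, ← Finset.sum_const]
      exact Finset.sum_le_sum fun w _ => h N (by omega) w
    refine le_trans ?_ h2
    rw [pow_succ]
    exact mul_le_mul_of_nonneg_right ih' hc

lemma card_fin_fun (X : Type) [Fintype X] (n : ℕ) :
    (Fintype.card (Fin n → X) : ℝ) = (Fintype.card X : ℝ) ^ n := by
  rw [Fintype.card_fun, Fintype.card_fin, Nat.cast_pow]

namespace SimP
variable {M n : ℕ}

/-- Extension of a finite history of sign patterns to a sequence of vectors. -/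
noncomputable def ext {i : ℕ} (w : Fin i → (Fin d → Bool) × (Fin d → Bool)) (l : ℕ) :
    EuclideanSpace ℝ (Fin d) :=
  if h : l < i then vv (w ⟨l, h⟩) else 0

/-- Legitimate continuation of a history. -/
def GoodH (p : SimP M d) (A : Fin n → EuclideanSpace ℝ (Fin d)) (δ κ : ℝ) (T : ℕ) (i : ℕ)
    (w : Fin i → (Fin d → Bool) × (Fin d → Bool)) (u : (Fin d → Bool) × (Fin d → Bool)) : Prop :=
  (i = 0 → 1 / 8 ≤ ‖(spA A)ᗮ.starProjection (vv u : EuclideanSpace ℝ (Fin d))‖) ∧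
    ∀ t < T, p.expl A (ext w) (p.sim A (ext w) t) → (p.sim A (ext w) t).j + 1 = i →
      GoodV (spA A) (p.Wsp A (ext w) (p.sim A (ext w) t)) (p.Xs A (ext w) t) δ κ (vv u)

variable {p : SimP M d} {A : Fin n → EuclideanSpace ℝ (Fin d)} {v : ℕ → EuclideanSpace ℝ (Fin d)}
  {δ κ : ℝ} {T N : ℕ}

lemma norm_ext (hd : 1 ≤ d) {i : ℕ} (w : Fin i → (Fin d → Bool) × (Fin d → Bool)) (l : ℕ) :
    ‖(ext w l : 𝔼)‖ ≤ 1 := by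
  rw [ext]; split_ifs
  · exact norm_vv hd _
  · simp

lemma Wsp_congr {v' : ℕ → 𝔼} {s : SimSt M d} (h : ∀ l ≤ s.j, v l = v' l) :
    p.Wsp A v s = p.Wsp A v' s := by
  rw [Wsp, Wsp]
  congr 2
  ext x
  constructor
  · rintro ⟨i, hi, rfl⟩; exact ⟨i, hi, by simp only [h i hi]⟩
  · rintro ⟨i, hi, rfl⟩; exact ⟨i, hi, by simp only [h i hi]⟩

lemma expl_congr {v' : ℕ → 𝔼} {s : SimSt M d} (h : ∀ l ≤ s.j, v l = v' l) :
    p.expl A v s ↔ p.expl A v' s := by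
  simp only [expl, deep, R_congr h]

lemma legit_of_good (w : Fin (N + 1) → (Fin d → Bool) × (Fin d → Bool))
    (h : ∀ i : Fin (N + 1), GoodH p A δ κ T i (fun j : Fin i => w (Fin.castLE i.2.le j)) (w i)) :
    Legit p A (ext w) δ κ T N := by
  constructor
  · have := (h 0).1 rfl
    simpa [ext] using this
  · intro t ht hx hj
    set v : ℕ → 𝔼 := ext w with hv
    set i := (p.sim A v t).j + 1 with hi
    have hiN : i < N + 1 := by omega
    set v' : ℕ → 𝔼 := ext (fun j : Fin i => w (Fin.castLE hiN.le j)) with hv'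
    have hvv : ∀ l ≤ (p.sim A v t).j, v l = v' l := by
      intro l hl
      rw [hv, hv', ext, ext, dif_pos (by omega), dif_pos (by omega)]
      rfl
    have hsim : ∀ t' ≤ t, p.sim A v' t' = p.sim A v t' := fun t' ht' =>
      run_congr hvv (ini M d) t' (run_mono _ ht')
    have hx' : p.expl A v' (p.sim A v' t) := by
      rw [hsim t le_rfl]; exact (expl_congr hvv).1 hx
    have h1 := (h ⟨i, hiN⟩).2 t ht hx' (by rw [← hv', hsim t le_rfl])
    change GoodV (spA A) (p.Wsp A v' (p.sim A v' t)) (p.Xs A v' t) δ κ (vv (w ⟨i, hiN⟩)) at h1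
    have e1 : p.Xs A v' t = p.Xs A v t := by
      rw [Xs, Xs]
      refine Finset.image_congr fun s hs => ?_
      simp only [Finset.coe_range, Set.mem_Iio] at hs
      change p.qry (p.sim A v' s) = p.qry (p.sim A v s)
      rw [hsim s (by omega)]
    have e2 : v i = vv (w ⟨i, hiN⟩) := by rw [hv, ext, dif_pos hiN]
    rw [e1, hsim t le_rfl, ← Wsp_congr hvv] at h1
    rw [e2]; exact h1

lemma finrank_spA : Module.finrank ℝ (spA A) ≤ n := by
  have := finrank_range_le_card (R := ℝ) A
  rw [Fintype.card_fin] at this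
  exact this

lemma finrank_Wsp (hp : ParOk p δ κ) (t : ℕ) (hj : (p.sim A v t).j ≤ N) :
    Module.finrank ℝ (p.Wsp A v (p.sim A v t)) ≤ p.k + N + 1 := by
  classical
  set s := p.sim A v t
  have hinv : Inv A v p s := inv_run hp.hη.le hp.hγ1 hp.hk inv_ini t
  have h1 : Module.finrank ℝ (spl (p.qry s :: s.ys)) ≤ p.k := by
    have e : spl (p.qry s :: s.ys) = Submodule.span ℝ ((p.qry s :: s.ys).toFinset : Set 𝔼) := by
      rw [spl]; congr 1; ext y; simp
    rw [e]
    refine (finrank_span_finset_le_card _).trans ((List.toFinset_card_le _).trans ?_)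
    rw [List.length_cons, hinv.1]
    exact Nat.mod_lt _ hp.hk
  have h2 : Module.finrank ℝ (Submodule.span ℝ
      (Set.image (fun i => (spA A)ᗮ.starProjection (v i)) (Set.Iic s.j))) ≤ N + 1 := by
    have e : (Set.image (fun i => (spA A)ᗮ.starProjection (v i)) (Set.Iic s.j)) =
        ((Finset.range (s.j + 1)).image (fun i => (spA A)ᗮ.starProjection (v i)) : Set 𝔼) := by
      ext y
      simp [Nat.lt_succ_iff]
    rw [e]
    refine (finrank_span_finset_le_card _).trans (Finset.card_image_le.trans ?_)
    rw [Finset.card_range]; omega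
  have := Submodule.finrank_add_le_finrank_add_finrank (spl (p.qry s :: s.ys))
    (Submodule.span ℝ (Set.image (fun i => (spA A)ᗮ.starProjection (v i)) (Set.Iic s.j)))
  rw [Wsp]
  omega

open Classical in
lemma count_goodH (hd : 1 ≤ d) (hp : ParOk p δ κ) {B : ℕ}
    (hX : 4 * (T : ℝ) ≤ Real.exp (κ ^ 2 * d / 2)) (hT : 1 ≤ T) (hδ : 0 < δ) (hB : √d ≤ 2 * δ * B)
    (hbig : 8 * ((2 * (B : ℝ) + 1) ^ (p.k + N + 1)) ^ 2 * 5 ^ n ≤ Real.exp (d / 4))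
    {i : ℕ} (hi : i < N + 1) (w : Fin i → (Fin d → Bool) × (Fin d → Bool)) :
    (2 ^ d * 2 ^ d : ℝ) / (8 * ((2 * (B : ℝ) + 1) ^ (p.k + N + 1)) ^ 2) ≤
      ((Finset.univ.filter fun u => GoodH p A δ κ T i w u).card : ℝ) := by
  rcases Nat.eq_zero_or_pos i with rfl | hi0
  · refine (good_set hd (spA A) ⊥ ∅ finrank_spA (D := p.k + N + 1) (by simp) hp.hκ
      (by simp; positivity) hδ hB hbig).trans ?_
    refine Nat.cast_le.2 (Finset.card_le_card fun u hu => ?_)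
    rw [Finset.mem_filter] at hu ⊢
    refine ⟨hu.1, fun _ => hu.2.2.2, fun t _ _ h => ?_⟩
    omega
  by_cases hex : ∃ t < T, p.expl A (ext w) (p.sim A (ext w) t) ∧ (p.sim A (ext w) t).j + 1 = i
  · obtain ⟨t, ht, hx, hj⟩ := hex
    refine (good_set hd (spA A) (p.Wsp A (ext w) (p.sim A (ext w) t)) (p.Xs A (ext w) t)
      finrank_spA (D := p.k + N + 1) (finrank_Wsp hp t (by omega)) hp.hκ ?_ hδ hB hbig).trans ?_
    · have : (p.Xs A (ext w) t).card ≤ T := by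
        rw [Xs]
        refine Finset.card_image_le.trans ?_
        rw [Finset.card_range]; omega
      have : ((p.Xs A (ext w) t).card : ℝ) ≤ T := by exact_mod_cast this
      linarith
    refine Nat.cast_le.2 (Finset.card_le_card fun u hu => ?_)
    rw [Finset.mem_filter] at hu ⊢
    refine ⟨hu.1, fun h => by omega, fun t' ht' hx' hj' => ?_⟩
    have htt : t' = t := by
      have aux : ∀ a b, a < b → p.expl A (ext w) (p.sim A (ext w) a) →
          (p.sim A (ext w) a).j < (p.sim A (ext w) b).j := by
        intro a b hab ha
        have h1 : (p.sim A (ext w) (a + 1)).j ≤ (p.sim A (ext w) b).j := run_mono _ hab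
        have h2 : (p.sim A (ext w) (a + 1)).j = (p.sim A (ext w) a).j + 1 := step_j_pos ha
        omega
      rcases Nat.lt_trichotomy t' t with h | h | h
      · have := aux _ _ h hx'; omega
      · exact h
      · have := aux _ _ h hx; omega
    rw [htt]; exact hu.2
  · have hall : (Finset.univ.filter fun u => GoodH p A δ κ T i w u) = Finset.univ := by
      rw [Finset.filter_eq_self]
      intro u _
      exact ⟨fun h => by omega, fun t ht hx hj => absurd ⟨t, ht, hx, hj⟩ hex⟩
    rw [hall, Finset.card_univ]
    have : (Fintype.card ((Fin d → Bool) × (Fin d → Bool)) : ℝ) = 2 ^ d * 2 ^ d := by simp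
    rw [this]
    apply div_le_self (by positivity)
    have : (1 : ℝ) ≤ (2 * (B : ℝ) + 1) ^ (p.k + N + 1) :=
      one_le_pow₀ (by have : (0 : ℝ) ≤ B := by positivity
                      linarith)
    nlinarith

open Classical in
/-- For each `v`, few matrices are bad. -/
lemma count_all {G : Type} [Fintype G] (gf : G → EuclideanSpace ℝ (Fin d)) {P m : ℕ}
    (v : ℕ → EuclideanSpace ℝ (Fin d))
    (hcnt : ∀ l, p.GoodL l → ((Finset.univ.filter fun g => ∀ y ∈ l, |⟪gf g, y⟫| ≤ p.η).card : ℝ) ≤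
      Real.exp (-(p.k : ℝ)) * (Fintype.card G : ℝ)) (hmn : m ≤ n) :
    ((Finset.univ.filter fun a : Fin n → G =>
      ∃ (q : Fin P) (μ : Fin M → Bool) (t : Fin m)
      (σ : Fin m → Bool × Option (Fin n ⊕ Fin (p.k * P + 1))),
      p.BadE (fun i => gf (a i)) v ⟨μ, q * p.k, []⟩ σ t).card : ℝ) ≤
      (P * 2 ^ M * m * (2 * (n + p.k * P + 2)) ^ m) *
      (Real.exp (-(p.k * (n - m) : ℝ)) * (Fintype.card G : ℝ) ^ n) := by
  set X := Real.exp (-(p.k * (n - m) : ℝ)) * (Fintype.card G : ℝ) ^ n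
  let ι := Fin P × (Fin M → Bool) × Fin m × (Fin m → Bool × Option (Fin n ⊕ Fin (p.k * P + 1)))
  have hsub : (Finset.univ.filter fun a : Fin n → G =>
      ∃ (q : Fin P) (μ : Fin M → Bool) (t : Fin m)
      (σ : Fin m → Bool × Option (Fin n ⊕ Fin (p.k * P + 1))),
      p.BadE (fun i => gf (a i)) v ⟨μ, q * p.k, []⟩ σ t) ⊆
      (Finset.univ : Finset ι).biUnion fun x => Finset.univ.filter fun a : Fin n → G =>
        p.BadE (fun i => gf (a i)) v ⟨x.2.1, x.1 * p.k, []⟩ x.2.2.2 x.2.2.1 := by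
    intro a ha
    rw [Finset.mem_filter] at ha
    obtain ⟨-, q, μ, t, σ, h⟩ := ha
    rw [Finset.mem_biUnion]
    exact ⟨(q, μ, t, σ), Finset.mem_univ _, by rw [Finset.mem_filter]; exact ⟨Finset.mem_univ _, h⟩⟩
  have h1 := (Finset.card_le_card hsub).trans Finset.card_biUnion_le
  have h2 := Nat.cast_le (α := ℝ).2 h1
  refine h2.trans ?_
  rw [Nat.cast_sum]
  refine (Finset.sum_le_sum fun x _ => count_bad_aux gf v _ x.2.2.2 x.2.2.1 hcnt hmn).trans ?_
  rw [Finset.sum_const, nsmul_eq_mul, Finset.card_univ]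
  refine le_of_eq ?_
  congr 1
  simp only [ι, Fintype.card_prod, Fintype.card_fun, Fintype.card_fin, Fintype.card_bool,
    Fintype.card_option, Fintype.card_sum]
  push_cast
  ring

open Classical in
/-- The main counting inequality. -/
lemma main_ineq {P m B L0 : ℕ} {ε : ℝ} (hd : 1 ≤ d) (hp : ParOk p δ κ) (hβ : 0 < p.β)
    (hL : 4 * d ≤ L0) (hLη : 1 < p.η * L0)
    (hs : 7 * (3 * p.η / p.β) * (d * √d) ≤ 1 / 2) (hP : 1 ≤ P) (hmn : m ≤ n)
    (hX : 4 * (T : ℝ) ≤ Real.exp (κ ^ 2 * d / 2)) (hT : 1 ≤ T) (hTm : T ≤ P * m)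
    (hδ : 0 < δ) (hB : √d ≤ 2 * δ * B)
    (hbig : 8 * ((2 * (B : ℝ) + 1) ^ (p.k + p.k * P + 1)) ^ 2 * 5 ^ n ≤ Real.exp (d / 4))
    (hmin : MinimizesConvex d p.alg T ε)
    (hNγ : (p.k * P : ℕ) * p.γ2 ≤ p.γ1) (hδN : 128 * ((p.k * P : ℕ) * δ) ≤ 1)
    (hfin : p.η * ((P + 1) * p.γ1 + δ + p.β) + ε < p.η / (400 * √((p.k * P : ℕ) + 1))) :
    (1 / (8 * ((2 * (B : ℝ) + 1) ^ (p.k + p.k * P + 1)) ^ 2)) ^ (p.k * P + 1) ≤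
      (P * 2 ^ M * m * (2 * (n + p.k * P + 2)) ^ m) * Real.exp (-(p.k * (n - m) : ℝ)) := by
  let G := Fin d → Fin (2 * L0 + 1)
  let U := (Fin d → Bool) × (Fin d → Bool)
  let gf : G → 𝔼 := gv L0
  have hcnt := fun l hl => count_gv (p := p) hd hp.hη hβ hL hLη hs hp.hk l hl
  have hL1 : 1 ≤ L0 := by omega
  set Bad : (Fin n → G) → (Fin (p.k * P + 1) → U) → Prop := fun a w =>
    ∃ (q : Fin P) (μ : Fin M → Bool) (t : Fin m)
      (σ : Fin m → Bool × Option (Fin n ⊕ Fin (p.k * P + 1))),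
      p.BadE (fun i => gf (a i)) (ext w) ⟨μ, q * p.k, []⟩ σ t with hBad
  have hrow : ∀ w, ((Finset.univ.filter fun a => Bad a w).card : ℝ) ≤ _ := fun w =>
    count_all (p := p) (n := n) (P := P) (m := m) gf (ext w) hcnt hmn
  set c : ℝ := (2 ^ d * 2 ^ d : ℝ) / (8 * ((2 * (B : ℝ) + 1) ^ (p.k + p.k * P + 1)) ^ 2) with hc
  have hcol : ∀ a, c ^ (p.k * P + 1) ≤ ((Finset.univ.filter fun w => Bad a w).card : ℝ) := by
    intro a
    refine (tree_count (GoodH p (fun i => gf (a i)) δ κ T) (c := c) (by positivity) (p.k * P + 1)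
      (fun i hi w => count_goodH hd hp hX hT hδ hB hbig hi w)).trans ?_
    refine Nat.cast_le.2 (Finset.card_le_card fun w hw => ?_)
    rw [Finset.mem_filter] at hw ⊢
    refine ⟨hw.1, ?_⟩
    have hleg := legit_of_good w hw.2
    have hreach := reaches hp (norm_ext hd w) (fun i => norm_gv hL1 hd (a i)) hleg hT hmin hNγ
      hδN hfin
    exact exists_bad hp.hη.le hp.hγ1 hp.hk hP (hreach.trans (run_mono _ hTm))
  have hdc := Finset.sum_card_bipartiteAbove_eq_sum_card_bipartiteBelow
    (s := (Finset.univ : Finset (Fin n → G)))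
    (t := (Finset.univ : Finset (Fin (p.k * P + 1) → U))) Bad
  have hdc' : ((∑ a : Fin n → G, (Finset.univ.filter fun w => Bad a w).card : ℕ) : ℝ) =
    ((∑ w : Fin (p.k * P + 1) → U, (Finset.univ.filter fun a => Bad a w).card : ℕ) : ℝ) :=
    congrArg _ hdc
  rw [Nat.cast_sum, Nat.cast_sum] at hdc'
  have h1 := Finset.sum_le_sum (s := (Finset.univ : Finset (Fin n → G))) fun a _ => hcol a
  have h2 := Finset.sum_le_sum
    (s := (Finset.univ : Finset (Fin (p.k * P + 1) → U))) fun w _ => hrow w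
  have h3 := h1.trans (hdc'.le.trans h2)
  rw [Finset.sum_const, Finset.sum_const, nsmul_eq_mul, nsmul_eq_mul, Finset.card_univ,
    Finset.card_univ, card_fin_fun G n, card_fin_fun U (p.k * P + 1)] at h3
  have hU : (Fintype.card U : ℝ) = 2 ^ d * 2 ^ d := by simp [U]
  have hGpos : (0 : ℝ) < (Fintype.card G : ℝ) := by
    have : 0 < Fintype.card G := Fintype.card_pos
    exact_mod_cast this
  rw [hU] at h3
  have hcc : c = (2 ^ d * 2 ^ d) * (1 / (8 * ((2 * (B : ℝ) + 1) ^ (p.k + p.k * P + 1)) ^ 2)) := by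
    rw [hc]; ring
  rw [hcc, mul_pow] at h3
  have hpos : (0 : ℝ) < (Fintype.card G : ℝ) ^ n * (2 ^ d * 2 ^ d : ℝ) ^ (p.k * P + 1) := by
    positivity
  refine le_of_mul_le_mul_left ?_ hpos
  calc _ = _ := by rw [mul_assoc]
    _ ≤ _ := h3
    _ = _ := by ring

end SimP
end partF

open scoped RealInnerProductSpace

section partG

/-- Numerical facts about the parameters. -/
structure ParNum (d M k P n m N : ℕ) (L : ℝ) : Prop where
  hL : L = Real.log d
  hL1 : 1000 ≤ L
  hN : N = k * P
  hn : n = d / 16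
  hm : m = n / 2
  hP : 1 ≤ P
  hMk : 100 * (M * L) ≤ k * d
  hMd : d ≤ M
  hkP : k * P ^ 3 * L ^ 4 ≤ (d : ℝ)

namespace ParNum
variable {d M k P n m N : ℕ} {L : ℝ}

lemma d_pos (h : ParNum d M k P n m N L) : (1 : ℝ) < d := by
  by_contra hd
  push Not at hd
  have h1 : Real.log d ≤ 0 := Real.log_nonpos (by positivity) hd
  have := h.hL1; have := h.hL; linarith

lemma exp_L (h : ParNum d M k P n m N L) : Real.exp L = d := by
  rw [h.hL, Real.exp_log (by linarith [h.d_pos])]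

lemma k_ge (h : ParNum d M k P n m N L) : 100 * L ≤ (k : ℝ) := by
  have h1 : (d : ℝ) ≤ M := by exact_mod_cast h.hMd
  have h2 := h.hMk
  have h3 := h.hL1
  have h4 := h.d_pos
  have h5 : (d : ℝ) * L ≤ M * L := mul_le_mul_of_nonneg_right h1 (by linarith)
  have h6 : (100 * L) * d ≤ k * d := by linarith
  exact le_of_mul_le_mul_right h6 (by linarith)

lemma P_ge (h : ParNum d M k P n m N L) : (1 : ℝ) ≤ P := by exact_mod_cast h.hP

lemma N_eq (h : ParNum d M k P n m N L) : (N : ℝ) = k * P := by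
  rw [h.hN]; push_cast; ring

lemma k_le_N (h : ParNum d M k P n m N L) : (k : ℝ) ≤ N := by
  rw [h.N_eq]
  have := h.P_ge
  have : (0 : ℝ) ≤ k := by positivity
  nlinarith

lemma P_le_N (h : ParNum d M k P n m N L) : (P : ℝ) ≤ N := by
  rw [h.N_eq]
  have := h.P_ge; have := h.k_ge; have := h.hL1
  nlinarith

lemma NP (h : ParNum d M k P n m N L) : (N : ℝ) * P ^ 2 * L ^ 4 ≤ d := by
  rw [h.N_eq]
  have := h.hkP
  calc (k : ℝ) * P * P ^ 2 * L ^ 4 = k * P ^ 3 * L ^ 4 := by ring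
    _ ≤ (d : ℝ) := this

lemma NL (h : ParNum d M k P n m N L) : (N : ℝ) * L ^ 4 ≤ d := by
  have h1 := h.NP
  have h2 := h.P_ge
  have h3 : (1 : ℝ) ≤ P ^ 2 := one_le_pow₀ h2
  have h4 : (0 : ℝ) ≤ N * L ^ 4 := by positivity
  nlinarith

lemma NN (h : ParNum d M k P n m N L) : (N : ℝ) ^ 2 * L ^ 4 ≤ k * d := by
  have h1 := h.NP
  have h2 := h.P_ge
  have h3 := h.N_eq
  have h5 : (k : ℝ) * P ^ 2 * L ^ 4 ≤ d := by
    refine le_trans ?_ h1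
    have := h.k_le_N
    gcongr
  have h6 : (0 : ℝ) ≤ k := by positivity
  calc (N : ℝ) ^ 2 * L ^ 4 = k * (k * P ^ 2 * L ^ 4) := by rw [h3]; ring
    _ ≤ (k : ℝ) * d := mul_le_mul_of_nonneg_left h5 h6

lemma L4 (h : ParNum d M k P n m N L) : (10 : ℝ) ^ 12 ≤ L ^ 4 := by
  have := pow_le_pow_left₀ (by norm_num) h.hL1 4
  norm_num at this ⊢; linarith

lemma N_ge (h : ParNum d M k P n m N L) : (100000 : ℝ) ≤ N := by
  have := h.k_le_N; have := h.k_ge; have := h.hL1; linarith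

lemma d_big (h : ParNum d M k P n m N L) : (10 : ℝ) ^ 12 * N ≤ d := by
  have h1 := h.NL; have h2 := h.L4
  have h3 := mul_le_mul_of_nonneg_left h2 (show (0 : ℝ) ≤ N by positivity)
  linarith

lemma L_le (h : ParNum d M k P n m N L) : L ≤ N := by
  have := h.k_le_N; have := h.k_ge; have := h.hL1; linarith

lemma n_bounds (h : ParNum d M k P n m N L) : (n : ℝ) ≤ d / 16 ∧ (d : ℝ) / 16 - 1 ≤ n ∧ m ≤ n ∧
    (m : ℝ) ≤ n / 2 ∧ (n : ℝ) / 2 - 1 ≤ m := by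
  have h1 : 16 * n ≤ d := by rw [h.hn]; omega
  have h2 : d ≤ 16 * n + 16 := by rw [h.hn]; omega
  have h3 : 2 * m ≤ n := by rw [h.hm]; omega
  have h4 : n ≤ 2 * m + 2 := by rw [h.hm]; omega
  have h1' : (16 : ℝ) * n ≤ d := by exact_mod_cast h1
  have h2' : (d : ℝ) ≤ 16 * n + 16 := by exact_mod_cast h2
  have h3' : (2 : ℝ) * m ≤ n := by exact_mod_cast h3
  have h4' : (n : ℝ) ≤ 2 * m + 2 := by exact_mod_cast h4
  exact ⟨by linarith, by linarith, by omega, by linarith, by linarith⟩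

/-- Bound on the size of a factor. -/
lemma Q_le (h : ParNum d M k P n m N L) :
    8 * ((2 * ((d * N : ℕ) : ℝ) + 1) ^ (k + N + 1)) ^ 2 ≤ Real.exp (13 * (N * L)) := by
  have hd := h.d_pos
  have hb := h.d_big
  have hN := h.N_ge
  have hL := h.hL1
  have h1 : 2 * ((d * N : ℕ) : ℝ) + 1 ≤ Real.exp (2 * L) := by
    rw [two_mul L, Real.exp_add, h.exp_L]
    push_cast
    nlinarith
  have h2 : (8 : ℝ) ≤ Real.exp L := by
    rw [h.exp_L]; linarith
  have h3 : ((2 * ((d * N : ℕ) : ℝ) + 1) ^ (k + N + 1)) ^ 2 ≤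
      Real.exp (4 * (k + N + 1) * L) := by
    calc ((2 * ((d * N : ℕ) : ℝ) + 1) ^ (k + N + 1)) ^ 2
        ≤ ((Real.exp (2 * L)) ^ (k + N + 1)) ^ 2 := by gcongr
      _ = Real.exp (4 * (k + N + 1) * L) := by
        rw [← Real.exp_nat_mul, ← Real.exp_nat_mul]
        congr 1; push_cast; ring
  calc 8 * ((2 * ((d * N : ℕ) : ℝ) + 1) ^ (k + N + 1)) ^ 2
      ≤ Real.exp L * Real.exp (4 * (k + N + 1) * L) := by gcongr
    _ = Real.exp (L + 4 * (k + N + 1) * L) := by rw [Real.exp_add]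
    _ ≤ Real.exp (13 * (N * L)) := by
      rw [Real.exp_le_exp]
      have := h.k_le_N
      nlinarith

lemma NL_small (h : ParNum d M k P n m N L) : (1000 : ℝ) * (N * L) ≤ d := by
  have h1 := h.NL
  have h2 : (10 : ℝ) ^ 9 ≤ L ^ 3 := by
    have := pow_le_pow_left₀ (by norm_num) h.hL1 3
    norm_num at this ⊢; linarith
  have h3 : (0 : ℝ) ≤ N * L := by have := h.hL1; positivity
  nlinarith

lemma hbig (h : ParNum d M k P n m N L) :
    8 * ((2 * ((d * N : ℕ) : ℝ) + 1) ^ (k + N + 1)) ^ 2 * 5 ^ n ≤ Real.exp (d / 4) := by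
  have h5 : (5 : ℝ) ≤ Real.exp 2 := by
    have h1 := Real.add_one_le_exp (1 : ℝ)
    have h2 := Real.exp_one_gt_d9
    have : Real.exp 2 = Real.exp 1 * Real.exp 1 := by rw [← Real.exp_add]; norm_num
    rw [this]; nlinarith
  have h6 : (5 : ℝ) ^ n ≤ Real.exp (n * 2) := by
    rw [Real.exp_nat_mul]; gcongr
  calc 8 * ((2 * ((d * N : ℕ) : ℝ) + 1) ^ (k + N + 1)) ^ 2 * 5 ^ n
      ≤ Real.exp (13 * (N * L)) * Real.exp (n * 2) := by
        gcongr
        exact h.Q_le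
    _ = Real.exp (13 * (N * L) + n * 2) := by rw [Real.exp_add]
    _ ≤ Real.exp (d / 4) := by
      rw [Real.exp_le_exp]
      have := h.NL_small
      have := h.n_bounds.1
      have := h.d_pos
      linarith

/-- The counting inequality fails. -/
lemma contra (h : ParNum d M k P n m N L) :
    (P * 2 ^ M * m * (2 * (n + k * P + 2)) ^ m) * Real.exp (-(k * (n - m) : ℝ)) <
    (1 / (8 * ((2 * ((d * N : ℕ) : ℝ) + 1) ^ (k + N + 1)) ^ 2)) ^ (N + 1) := by
  have hd := h.d_pos
  have hb := h.d_big
  have hN := h.N_ge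
  have hL := h.hL1
  obtain ⟨n1, n2, n3, n4, n5⟩ := h.n_bounds
  have hlow : Real.exp (-(13 * (N * L)) * (N + 1)) ≤
      (1 / (8 * ((2 * ((d * N : ℕ) : ℝ) + 1) ^ (k + N + 1)) ^ 2)) ^ (N + 1) := by
    have : Real.exp (-(13 * (N * L)) * (N + 1)) = (1 / Real.exp (13 * (N * L))) ^ (N + 1) := by
      rw [one_div, ← Real.exp_neg, ← Real.exp_nat_mul]
      congr 1; push_cast; ring
    rw [this]
    have := h.Q_le
    gcongr
  refine lt_of_lt_of_le ?_ hlow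
  have p1 : (P : ℝ) ≤ Real.exp L := by
    rw [h.exp_L]; have := h.P_le_N; linarith
  have p2 : (2 : ℝ) ^ M ≤ Real.exp M := by
    have h2 : (2 : ℝ) ≤ Real.exp 1 := by
      have := Real.add_one_le_exp (1 : ℝ); linarith
    calc (2 : ℝ) ^ M ≤ (Real.exp 1) ^ M := by gcongr
      _ = Real.exp M := by rw [← Real.exp_nat_mul]; simp
  have p3 : (m : ℝ) ≤ Real.exp L := by
    rw [h.exp_L]; linarith
  have p4 : (2 * ((n : ℝ) + k * P + 2)) ^ m ≤ Real.exp (m * L) := by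
    rw [Real.exp_nat_mul, h.exp_L, ← h.N_eq]
    gcongr
    linarith
  have hub : (P * 2 ^ M * m * (2 * ((n : ℝ) + k * P + 2)) ^ m) * Real.exp (-(k * (n - m) : ℝ)) ≤
      Real.exp (L + M + L + m * L + -(k * (n - m))) := by
    rw [Real.exp_add, Real.exp_add, Real.exp_add, Real.exp_add]
    gcongr
  refine lt_of_le_of_lt hub ?_
  rw [Real.exp_lt_exp]
  -- numerical comparison
  have hk := h.k_ge
  have hk0 : (0 : ℝ) < k := by linarith
  have hkd : (0 : ℝ) < k * d := by positivity
  have q1 : 26000 * ((N : ℝ) ^ 2 * L) ≤ k * d := by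
    have h1 := h.NN
    have h2 : (10 : ℝ) ^ 9 ≤ L ^ 3 := by
      have := pow_le_pow_left₀ (by norm_num) h.hL1 3
      norm_num at this ⊢; linarith
    have h3 : (0 : ℝ) ≤ N ^ 2 * L := by positivity
    nlinarith
  have q2 : 13 * (N * L) * ((N : ℝ) + 1) ≤ 26 * (N ^ 2 * L) := by
    have h3 : (0 : ℝ) ≤ N * L := by positivity
    nlinarith
  have q3 : 100000 * (M : ℝ) ≤ k * d := by
    have h1 := h.hMk
    have h2 : (0 : ℝ) ≤ M := by positivity
    nlinarith
  have q4 : 3200 * (m * L) ≤ k * d := by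
    have h1 : (m : ℝ) ≤ d / 32 := by linarith
    have h2 : (m : ℝ) * L ≤ d / 32 * L := mul_le_mul_of_nonneg_right h1 (by linarith)
    have h3 : (100 * L) * d ≤ k * d := mul_le_mul_of_nonneg_right hk (by linarith)
    linarith
  have q5 : 1000 * L ≤ k * d := by nlinarith
  have q6 : (k : ℝ) * d / 40 ≤ k * (n - m) := by
    have : (d : ℝ) / 40 ≤ n - m := by linarith
    have := mul_le_mul_of_nonneg_left this hk0.le
    linarith
  linarith

end ParNum
end partG

open scoped RealInnerProductSpace

section partH

set_option maxHeartbeats 2000000 in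
lemma core {d M k P n m N : ℕ} {L : ℝ} (h : ParNum d M k P n m N L)
    (alg : MemAlg M (EuclideanSpace ℝ (Fin d)) (ℝ × EuclideanSpace ℝ (Fin d))) {T : ℕ}
    (hmin : MinimizesConvex d alg T (1 / (d : ℝ) ^ 4)) (hT : 1 ≤ T) (hTm : T ≤ P * m) :
    False := by
  have hd := h.d_pos
  have hb := h.d_big
  have hN := h.N_ge
  have hL := h.hL1
  obtain ⟨n1, n2, n3, n4, n5⟩ := h.n_bounds
  have hPN := h.P_le_N
  have hP1 := h.P_ge
  set r := √(d : ℝ) with hr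
  have hr2 : r ^ 2 = d := Real.sq_sqrt (by positivity)
  have hr0 : 0 < r := Real.sqrt_pos.2 (by linarith)
  have hr1 : 1 < r := by nlinarith
  have hrd : r ≤ d := by nlinarith
  set κ := √(6 * L / d) with hκ
  have hκ2 : κ ^ 2 = 6 * L / d := Real.sq_sqrt (by positivity)
  have hκ2' : κ ^ 2 * d = 6 * L := by rw [hκ2]; field_simp
  have hκ0 : 0 < κ := Real.sqrt_pos.2 (by positivity)
  have hκr : 1 ≤ κ * r := by
    by_contra hlt
    push Not at hlt
    have h1 : (κ * r) ^ 2 < 1 := by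
      have : 0 < κ * r := by positivity
      nlinarith
    rw [mul_pow, hr2, hκ2'] at h1
    linarith
  have hκd : 1 ≤ κ * d := by nlinarith
  have hN0 : (0 : ℝ) < N := by linarith
  set η := 1 / ((d : ℝ) ^ 3 * r) with hη
  have hη0 : 0 < η := by positivity
  have hd3 : (2 : ℝ) ≤ d ^ 3 := by
    have : (d : ℝ) ≤ d ^ 3 := le_self_pow₀ hd.le (by norm_num)
    linarith
  have hη2 : η ≤ 1 / 2 := by
    rw [hη]; apply one_div_le_one_div_of_le (by norm_num); nlinarith
  -- key smallness of `κ`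
  have hkey : (4400 * (P * κ)) ^ 2 * (N + 1) < 1 := by
    have e : (4400 * (P * κ)) ^ 2 * ((N : ℝ) + 1) * d = 4400 ^ 2 * 6 * (P ^ 2 * (N + 1) * L) := by
      calc (4400 * (P * κ)) ^ 2 * ((N : ℝ) + 1) * d
          = 4400 ^ 2 * P ^ 2 * (N + 1) * (κ ^ 2 * d) := by ring
        _ = _ := by rw [hκ2']; ring
    have h1 : (P : ℝ) ^ 2 * (N + 1) * L ≤ 2 * (N * P ^ 2 * L) := by
      have : (0 : ℝ) ≤ P ^ 2 * L := by positivity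
      nlinarith
    have h2 := h.NP
    have h3 : (10 : ℝ) ^ 9 ≤ L ^ 3 := by
      have := pow_le_pow_left₀ (by norm_num) hL 3
      norm_num at this ⊢; linarith
    have h4 : (10 : ℝ) ^ 9 * (N * P ^ 2 * L) ≤ d := by
      have h5 : (0 : ℝ) ≤ N * P ^ 2 * L := by positivity
      have h6 : (N : ℝ) * P ^ 2 * L ^ 4 = L ^ 3 * (N * P ^ 2 * L) := by ring
      rw [h6] at h2
      exact le_trans (mul_le_mul_of_nonneg_right h3 h5) h2
    have h7 : (4400 * (P * κ)) ^ 2 * ((N : ℝ) + 1) * d < 1 * d := by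
      rw [e]; linarith
    exact lt_of_mul_lt_mul_right h7 (by linarith)
  have hκs : 4400 * κ < 1 := by
    by_contra hge
    push Not at hge
    have h1 : 1 ≤ 4400 * (P * κ) := by nlinarith
    have h2 : 1 ≤ (4400 * (P * κ)) ^ 2 := one_le_pow₀ h1
    have h3 : (1 : ℝ) ≤ (4400 * (P * κ)) ^ 2 * ((N : ℝ) + 1) :=
      one_le_mul_of_one_le_of_one_le h2 (by linarith)
    linarith
  set q := √((N : ℝ) + 1) with hq
  have hq2 : q ^ 2 = N + 1 := Real.sq_sqrt (by positivity)
  have hq0 : 0 < q := Real.sqrt_pos.2 (by positivity)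
  have hkey2 : 4400 * (P * κ) * q < 1 := by
    by_contra hge
    push Not at hge
    have := one_le_pow₀ hge (n := 2)
    rw [mul_pow, hq2] at this
    linarith
  have hNk : k * P = N := h.hN.symm
  have hδκ : κ / N ≤ κ := div_le_self hκ0.le (by linarith)
  have hk1 : 1 ≤ k := by
    have := h.k_ge
    have : (1 : ℝ) ≤ k := by linarith
    exact_mod_cast this
  let p : SimP M d := ⟨alg, η, 4 * κ, 4 * κ / N, κ / N, k⟩
  have hp : SimP.ParOk p (κ / N) κ :=
    { hη := hη0
      hη2 := hη2
      hδ := by positivity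
      hβ := by change 0 ≤ κ / N; positivity
      hκ := hκ0.le
      h1 := le_rfl
      h2 := by change 2 * (κ / N) + 2 * (κ / N) ≤ 4 * κ / N; apply le_of_eq; ring
      h3 := by change κ + κ / N + κ / N ≤ 4 * κ; linarith
      hk := hk1 }
  have hdN : 1 ≤ d := by
    have : (1 : ℝ) ≤ d := hd.le
    exact_mod_cast this
  have hmain := SimP.main_ineq (p := p) (n := n) (P := P) (m := m) (B := d * N) (L0 := d ^ 5)
    (T := T) (ε := 1 / (d : ℝ) ^ 4) hdN hp (by change 0 < κ / N; positivity)
    ?_ ?_ ?_ h.hP n3 ?_ hT hTm (by positivity) ?_ ?_ hmin ?_ ?_ ?_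
  · have hc := h.contra
    change (1 / (8 * ((2 * ((d * N : ℕ) : ℝ) + 1) ^ (k + k * P + 1)) ^ 2)) ^ (k * P + 1) ≤
      (P * 2 ^ M * m * (2 * (n + k * P + 2)) ^ m) * Real.exp (-(k * (n - m) : ℝ)) at hmain
    rw [hNk] at hmain
    exact absurd hmain (not_le.2 hc)
  · have h4 : 4 ≤ d ^ 4 := by
      have h1 : (4 : ℝ) ≤ d ^ 4 := by
        have : (d : ℝ) ≤ d ^ 4 := le_self_pow₀ hd.le (by norm_num)
        linarith
      exact_mod_cast h1
    calc 4 * d ≤ d ^ 4 * d := Nat.mul_le_mul_right _ h4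
      _ = d ^ 5 := by ring
  · change 1 < η * ((d ^ 5 : ℕ) : ℝ)
    rw [hη, one_div_mul_eq_div, lt_div_iff₀ (by positivity)]
    push_cast
    have h1 : (d : ℝ) ^ 5 = d ^ 3 * (d * d) := by ring
    rw [h1, one_mul]
    apply mul_lt_mul_of_pos_left _ (by positivity)
    nlinarith
  · change 7 * (3 * η / (κ / N)) * (d * r) ≤ 1 / 2
    have e : 7 * (3 * η / (κ / N)) * (d * r) = 21 * N / (κ * d * d) := by
      rw [hη]; field_simp; norm_num
    rw [e, div_le_iff₀ (by positivity)]
    nlinarith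
  · have e : κ ^ 2 * d / 2 = L + L + L := by rw [hκ2']; ring
    rw [e, Real.exp_add, Real.exp_add, h.exp_L]
    have h1 : (T : ℝ) ≤ P * m := by exact_mod_cast hTm
    have h2 : (P : ℝ) * m ≤ d * d / 4 := by
      have : (P : ℝ) * m ≤ d * (d / 32) :=
        mul_le_mul (by linarith) (by linarith) (by positivity) (by positivity)
      nlinarith
    nlinarith
  · change r ≤ 2 * (κ / N) * ((d * N : ℕ) : ℝ)
    have e : 2 * (κ / N) * ((d * N : ℕ) : ℝ) = 2 * κ * d := by
      push_cast; field_simp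
    rw [e, ← hr2]
    nlinarith
  · change 8 * ((2 * ((d * N : ℕ) : ℝ) + 1) ^ (k + k * P + 1)) ^ 2 * 5 ^ n ≤ Real.exp (d / 4)
    rw [hNk]; exact h.hbig
  · change ((k * P : ℕ) : ℝ) * (4 * κ / N) ≤ 4 * κ
    rw [hNk]; apply le_of_eq; field_simp
  · change 128 * (((k * P : ℕ) : ℝ) * (κ / N)) ≤ 1
    rw [hNk, mul_div_cancel₀ _ hN0.ne']; linarith
  · change η * ((P + 1) * (4 * κ) + κ / N + κ / N) + 1 / (d : ℝ) ^ 4 <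
      η / (400 * √(((k * P : ℕ) : ℝ) + 1))
    rw [hNk, ← hq]
    have e1 : 1 / (d : ℝ) ^ 4 = η * (1 / r) := by
      rw [hη]
      have : (d : ℝ) ^ 4 = d ^ 3 * r * r := by
        rw [mul_assoc, ← sq, hr2]; ring
      rw [this]; field_simp
    have e2 : 1 / r ≤ κ := by rw [div_le_iff₀ hr0]; exact hκr
    have e3 : (P + 1) * (4 * κ) + κ / N + κ / N + 1 / r ≤ 11 * (P * κ) := by
      have : κ ≤ P * κ := by nlinarith
      linarith
    have e4 : 11 * (P * κ) < 1 / (400 * q) := by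
      rw [lt_div_iff₀ (by positivity)]
      linarith
    rw [e1, ← mul_add, div_eq_mul_one_div η]
    exact mul_lt_mul_of_pos_left (lt_of_le_of_lt e3 e4) hη0

set_option maxHeartbeats 2000000 in
/-- Cubed form of the lower bound. -/
lemma cubed {d M T : ℕ} (hL : 1000 ≤ Real.log d)
    (alg : MemAlg M (EuclideanSpace ℝ (Fin d)) (ℝ × EuclideanSpace ℝ (Fin d)))
    (hmin : MinimizesConvex d alg T (1 / (d : ℝ) ^ 4)) :
    (1 / 1000 : ℝ) ^ 3 * (d : ℝ) ^ 5 ≤ (T : ℝ) ^ 3 * (M * Real.log d ^ 5) := by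
  set L := Real.log d with hLd
  have hd0 : (1000 : ℝ) ≤ d := by
    have hpos : (0 : ℝ) < d := by
      by_contra hneg
      push Not at hneg
      have : (d : ℝ) = 0 := le_antisymm hneg (by positivity)
      rw [hLd, this, Real.log_zero] at hL
      linarith
    have := Real.log_le_sub_one_of_pos hpos
    linarith
  have hd4 : 4 ≤ d := by
    have : (4 : ℝ) ≤ d := by linarith
    exact_mod_cast this
  have hMd := mem_ge_dim (by omega) hmin
  have hTd := resisting hd4 hmin
  have hMd' : (d : ℝ) ≤ M := by exact_mod_cast hMd
  have hTd' : (d : ℝ) ≤ 2 * T := by exact_mod_cast hTd.le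
  have hdpos : (0 : ℝ) < d := by linarith
  set k := ⌈100 * (M * L) / d⌉₊ with hk
  have hk1 : 100 * (M * L) ≤ k * d := by
    have := Nat.le_ceil (100 * (M * L) / (d : ℝ))
    rwa [div_le_iff₀ hdpos] at this
  have hk2 : (k : ℝ) * d ≤ 101 * (M * L) := by
    have h1 := (Nat.ceil_lt_add_one (show 0 ≤ 100 * (M * L) / (d : ℝ) by positivity)).le
    have h2 : (k : ℝ) * d ≤ (100 * (M * L) / d + 1) * d := mul_le_mul_of_nonneg_right h1 hdpos.le
    have h3 : (100 * (M * L) / d + 1) * (d : ℝ) = 100 * (M * L) + d := by field_simp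
    rw [h3] at h2
    nlinarith
  have hk0 : (0 : ℝ) < k := by
    by_contra hneg
    push Not at hneg
    have : (k : ℝ) * d ≤ 0 := mul_nonpos_of_nonpos_of_nonneg hneg hdpos.le
    have hM0 : (0 : ℝ) < M := by linarith
    have hL0 : 0 < L := by linarith
    have : 0 < 100 * (M * L) := by positivity
    linarith
  set x : ℝ := (d / (k * L ^ 4)) ^ ((1 : ℝ) / 3) with hx
  have hx0 : 0 ≤ x := by positivity
  have hx3 : x ^ 3 = d / (k * L ^ 4) := by
    rw [hx, ← Real.rpow_natCast, ← Real.rpow_mul (by positivity)]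
    norm_num
  have hx3' : x ^ 3 * (k * L ^ 4) = d := by
    rw [hx3]; field_simp
  set P := ⌊x⌋₊ with hP
  have hPle : (P : ℝ) ≤ x := Nat.floor_le hx0
  have hPlt : x < P + 1 := Nat.lt_floor_add_one x
  by_cases hP1 : 1 ≤ P
  · set n := d / 16 with hn
    set m := n / 2 with hm
    have hnum : ParNum d M k P n m (k * P) L :=
      { hL := rfl
        hL1 := hL
        hN := rfl
        hn := rfl
        hm := rfl
        hP := hP1
        hMk := hk1
        hMd := hMd
        hkP := by
          have h1 : (P : ℝ) ^ 3 ≤ x ^ 3 := pow_le_pow_left₀ (by positivity) hPle 3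
          have h2 := mul_le_mul_of_nonneg_right h1 (show 0 ≤ (k : ℝ) * L ^ 4 by positivity)
          calc (k : ℝ) * P ^ 3 * L ^ 4 = P ^ 3 * (k * L ^ 4) := by ring
            _ ≤ x ^ 3 * (k * L ^ 4) := h2
            _ = d := hx3' }
    have hTm : P * m < T := by
      by_contra hle
      push Not at hle
      exact core hnum alg hmin (by omega) hle
    have hTm' : (P : ℝ) * m ≤ T := by exact_mod_cast hTm.le
    obtain ⟨n1, n2, n3, n4, n5⟩ := hnum.n_bounds
    have hP1' : (1 : ℝ) ≤ P := by exact_mod_cast hP1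
    have hm40 : (d : ℝ) / 40 ≤ m := by linarith
    have h1 : x / 2 * (d / 40) ≤ T := by
      refine le_trans (mul_le_mul (by linarith) hm40 (by positivity) (by positivity)) hTm'
    have h2 := pow_le_pow_left₀ (by positivity) h1 3
    have h3 : (x / 2 * ((d : ℝ) / 40)) ^ 3 * (k * L ^ 4) = d ^ 4 / 512000 := by
      calc (x / 2 * ((d : ℝ) / 40)) ^ 3 * (k * L ^ 4)
          = (x ^ 3 * (k * L ^ 4)) * d ^ 3 / 512000 := by ring
        _ = _ := by rw [hx3']; ring
    have h4 : (d : ℝ) ^ 4 / 512000 ≤ T ^ 3 * (k * L ^ 4) := by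
      rw [← h3]; exact mul_le_mul_of_nonneg_right h2 (by positivity)
    have h5 : (d : ℝ) ^ 4 / 512000 * d ≤ T ^ 3 * (k * L ^ 4) * d :=
      mul_le_mul_of_nonneg_right h4 hdpos.le
    have h6 : (T : ℝ) ^ 3 * (k * L ^ 4) * d ≤ 101 * (T ^ 3 * (M * L ^ 5)) := by
      calc (T : ℝ) ^ 3 * (k * L ^ 4) * d = T ^ 3 * L ^ 4 * (k * d) := by ring
        _ ≤ T ^ 3 * L ^ 4 * (101 * (M * L)) := mul_le_mul_of_nonneg_left hk2 (by positivity)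
        _ = _ := by ring
    have h7 : (0 : ℝ) ≤ d ^ 5 := by positivity
    have h8 : (d : ℝ) ^ 4 / 512000 * d = d ^ 5 / 512000 := by ring
    rw [h8] at h5
    norm_num
    linarith
  · have hP0 : P = 0 := by omega
    have hx1 : x ≤ 1 := by rw [hP0] at hPlt; norm_num at hPlt; exact hPlt.le
    have h1 : (d : ℝ) ≤ k * L ^ 4 := by
      rw [← hx3']
      have : x ^ 3 ≤ 1 := pow_le_one₀ hx0 hx1
      have h0 : 0 ≤ (k : ℝ) * L ^ 4 := by positivity
      nlinarith
    have h2 : (d : ℝ) * d ≤ 101 * (M * L ^ 5) := by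
      calc (d : ℝ) * d ≤ (k * L ^ 4) * d := mul_le_mul_of_nonneg_right h1 hdpos.le
        _ = (k * d) * L ^ 4 := by ring
        _ ≤ (101 * (M * L)) * L ^ 4 := mul_le_mul_of_nonneg_right hk2 (by positivity)
        _ = _ := by ring
    have h3 : ((d : ℝ) / 2) ^ 3 ≤ T ^ 3 := pow_le_pow_left₀ (by positivity) (by linarith) 3
    have h4 := mul_le_mul h3 h2 (by positivity) (by positivity)
    have h5 : ((d : ℝ) / 2) ^ 3 * (d * d) = d ^ 5 / 8 := by ring
    rw [h5] at h4
    have h7 : (0 : ℝ) ≤ d ^ 5 := by positivity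
    norm_num
    linarith

end partH

/-- To minimize `1`-Lipschitz convex functions over the unit ball to accuracy `1/d⁴`,
any `M`-bit deterministic first-order algorithm (with `M ≥ 1`) must make at least
`Ω(d^{5/3} / ((M + log d)^{1/3} (log d)^{5/3}))` queries. -/
theorem convex_optimization_query_lower_bound :
    ∃ c : ℝ, 0 < c ∧ ∃ d₀ : ℕ, ∀ d : ℕ, d₀ ≤ d →
      ∀ M T : ℕ, 1 ≤ M →
        ∀ alg : MemAlg M (EuclideanSpace ℝ (Fin d)) (ℝ × EuclideanSpace ℝ (Fin d)),
          MinimizesConvex d alg T (1 / (d : ℝ) ^ 4) →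
            c * (d : ℝ) ^ ((5 : ℝ) / 3) /
                (((M : ℝ) + Real.log d) ^ ((1 : ℝ) / 3) * Real.log d ^ ((5 : ℝ) / 3))
              ≤ (T : ℝ) := by
  refine ⟨1 / 1000, by norm_num, ⌈Real.exp 1000⌉₊, ?_⟩
  intro d hd M T hM alg hmin
  have hd1 : Real.exp 1000 ≤ d := Nat.ceil_le.1 hd
  have hd0 : (0 : ℝ) < d := lt_of_lt_of_le (Real.exp_pos _) hd1
  have hL : 1000 ≤ Real.log d := (Real.le_log_iff_exp_le hd0).2 hd1
  have hc := cubed hL alg hmin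
  set L := Real.log d with hLd
  have hL0 : 0 < L := by linarith
  have hML : 0 < (M : ℝ) + L := by positivity
  rw [div_le_iff₀ (by positivity)]
  have e1 : ((d : ℝ) ^ ((5 : ℝ) / 3)) ^ 3 = d ^ 5 := by
    rw [← Real.rpow_natCast, ← Real.rpow_mul hd0.le, ← Real.rpow_natCast]; norm_num
  have e2 : (L ^ ((5 : ℝ) / 3)) ^ 3 = L ^ 5 := by
    rw [← Real.rpow_natCast, ← Real.rpow_mul hL0.le, ← Real.rpow_natCast]; norm_num
  have e3 : (((M : ℝ) + L) ^ ((1 : ℝ) / 3)) ^ 3 = M + L := by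
    rw [← Real.rpow_natCast, ← Real.rpow_mul hML.le]; norm_num
  refine le_of_pow_le_pow_left₀ (n := 3) (by norm_num) (by positivity) ?_
  rw [mul_pow, mul_pow, mul_pow, e1, e2, e3]
  refine hc.trans ?_
  gcongr
  linarith
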